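/- For every M > 0 there exists T ∈ (0,∞) such that, for every (s₀,φ) ∈ W̃ satisfying s₀ + s₀^{−1} + ‖φ‖_{W^{1,2}(0,s₀)} ≤ M, problem (P) with initial data (s₀,φ) admits a solution (s,u) on (0,T] with sup_{t∈(0,T]} ‖u(t)‖_{L^∞} + sup_{t∈(0,T]} s(t) ≤ 2(M^{3/2} + M + 1). -/

import Mathlib

open Set MeasureTheory Filter Topology Real
open scoped ENNReal

noncomputable section

/-- `(s₀, φ)` belongs to the class `W`: `s₀ ∈ (0,∞)`, `φ` is Lipschitz on `[0,s₀]`,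
not identically zero, nonnegative there, and vanishes at `s₀`. -/
def memW (s₀ : ℝ) (φ : ℝ → ℝ) : Prop :=
  0 < s₀ ∧ (∃ K : NNReal, LipschitzOnWith K φ (Icc 0 s₀)) ∧
    (∃ x ∈ Icc 0 s₀, φ x ≠ 0) ∧ (∀ x ∈ Icc 0 s₀, 0 ≤ φ x) ∧ φ s₀ = 0

/-- `(s,u)` is a solution of the one-phase Stefan problem (P) on `(0,T]` (finite `T`)
with exponent `p` and initial data `(s₀,φ)`. -/
structure IsSolOn (p s₀ : ℝ) (φ : ℝ → ℝ) (T : ℝ) (s : ℝ → ℝ) (u : ℝ → ℝ → ℝ) : Prop where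
  T_pos : 0 < T
  s_cont : ContinuousOn s (Icc 0 T)
  s_diff : ∀ t ∈ Ioc 0 T, DifferentiableAt ℝ s t
  s_deriv_cont : ContinuousOn (deriv s) (Ioc 0 T)
  s_pos : ∀ t ∈ Icc 0 T, 0 < s t
  ut_diff : ∀ t ∈ Ioc 0 T, ∀ x ∈ Ioo 0 (s t), DifferentiableAt ℝ (fun τ => u τ x) t
  ux_diff : ∀ t ∈ Ioc 0 T, ∀ x ∈ Ioo 0 (s t), DifferentiableAt ℝ (u t) x
  uxx_diff : ∀ t ∈ Ioc 0 T, ∀ x ∈ Ioo 0 (s t), DifferentiableAt ℝ (deriv (u t)) x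
  ut_cont : ContinuousOn (fun q : ℝ × ℝ => deriv (fun τ => u τ q.2) q.1)
      {q : ℝ × ℝ | q.1 ∈ Ioc 0 T ∧ q.2 ∈ Ioo 0 (s q.1)}
  uxx_cont : ContinuousOn (fun q : ℝ × ℝ => deriv (deriv (u q.1)) q.2)
      {q : ℝ × ℝ | q.1 ∈ Ioc 0 T ∧ q.2 ∈ Ioo 0 (s q.1)}
  ux_cont : ContinuousOn (fun q : ℝ × ℝ => deriv (u q.1) q.2)
      {q : ℝ × ℝ | q.1 ∈ Ioc 0 T ∧ q.2 ∈ Icc 0 (s q.1)}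
  u_cont : ContinuousOn (fun q : ℝ × ℝ => u q.1 q.2)
      {q : ℝ × ℝ | q.1 ∈ Icc 0 T ∧ q.2 ∈ Icc 0 (s q.1)}
  u_nonneg : ∀ t ∈ Icc 0 T, ∀ x ∈ Icc 0 (s t), 0 ≤ u t x
  heat : ∀ t ∈ Ioc 0 T, ∀ x ∈ Ioo 0 (s t),
      deriv (fun τ => u τ x) t = deriv (deriv (u t)) x
  bc_zero : ∀ t ∈ Ioc 0 T, -deriv (u t) 0 = u t 0 ^ p
  bc_free : ∀ t ∈ Ioc 0 T, u t (s t) = 0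
  stefan : ∀ t ∈ Ioc 0 T, deriv s t = -deriv (u t) (s t)
  init : ∀ x ∈ Icc 0 s₀, u 0 x = φ x
  init_s : s 0 = s₀

/-- `(s,u)` is a global-in-time solution of problem (P). -/
def IsGlobalSol (p s₀ : ℝ) (φ : ℝ → ℝ) (s : ℝ → ℝ) (u : ℝ → ℝ → ℝ) : Prop :=
  ∀ T : ℝ, 0 < T → IsSolOn p s₀ φ T s u

/-- `Tm ∈ (0,∞]` is the maximal existence time of the solution `(s,u)` of (P) with
initial data `(s₀,φ)`: the solution exists on `(0,T]` for every `T < Tm`, and for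
`T > Tm` problem (P) admits no solution on `(0,T]`. -/
def IsMaxSol (p s₀ : ℝ) (φ : ℝ → ℝ) (Tm : ℝ≥0∞) (s : ℝ → ℝ) (u : ℝ → ℝ → ℝ) : Prop :=
  0 < Tm ∧
    (∀ T : ℝ, 0 < T → ENNReal.ofReal T < Tm → IsSolOn p s₀ φ T s u) ∧
    (∀ T : ℝ, Tm < ENNReal.ofReal T → ¬∃ σ v, IsSolOn p s₀ φ T σ v)

/-- The sup norm `‖u(t)‖_{L^∞(0,s(t))}`. -/
def supNorm (s : ℝ → ℝ) (u : ℝ → ℝ → ℝ) (t : ℝ) : ℝ :=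
  sSup (u t '' Ioo 0 (s t))

/-- The `L¹` norm `‖u(t)‖_{L¹(0,s(t))}` of the nonnegative function `u(t,·)`. -/
def L1Norm (s : ℝ → ℝ) (u : ℝ → ℝ → ℝ) (t : ℝ) : ℝ :=
  ∫ x in (0:ℝ)..(s t), u t x

/-- The energy `E(s(t),u(t))`. -/
def energy (p : ℝ) (s : ℝ → ℝ) (u : ℝ → ℝ → ℝ) (t : ℝ) : ℝ :=
  1 / 2 * (∫ x in (0:ℝ)..(s t), (deriv (u t) x) ^ 2) - u t 0 ^ (p + 1) / (p + 1)

/-- `(a, φ)` belongs to the class `W̃`: `a ∈ (0,∞)` and `φ ∈ W^{1,2}(0,a)` (with weak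
derivative `g ∈ L²(0,a)`), not identically zero, nonnegative on `[0,a]`, and `φ(a) = 0`. -/
def memWtilde (a : ℝ) (φ g : ℝ → ℝ) : Prop :=
  0 < a ∧ MemLp g 2 (volume.restrict (Ioo 0 a)) ∧
    (∀ x ∈ Icc 0 a, φ x = φ 0 + ∫ y in (0:ℝ)..x, g y) ∧
    (∃ x ∈ Icc 0 a, φ x ≠ 0) ∧ (∀ x ∈ Icc 0 a, 0 ≤ φ x) ∧ φ a = 0

/-- The Sobolev norm `‖φ‖_{W^{1,2}(0,a)}` of `φ` with weak derivative `g`. -/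
def sobNorm (a : ℝ) (φ g : ℝ → ℝ) : ℝ :=
  Real.sqrt ((∫ x in (0:ℝ)..a, φ x ^ 2) + ∫ x in (0:ℝ)..a, g x ^ 2)

/-!
Reflect the problem evenly across `x = 0` and write `u` as the sum of the heat potential of `φ` and
of single layer potentials with density `u(·, 0)^p` on `x = 0` and `-s'` on the two curves
`x = ± s(t)`. By the jump relation, Stefan's condition holds from inside exactly when `s'` is minus
twice the direct value of the space derivative on the front. Since `φ' ∈ L²`, this derivative
is `O(t^(-1/4))`, so the rescaled speed `t^(1/4) s'` and the boundary value `u(·, 0)` are bounded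
unknowns. The integral equations for them define a contraction on a short time interval whose length
depends only on `M`, because all the layer terms carry a positive power of `t`.

Nothing has been imposed on `u` at the front. However, the potentials also define a bounded solution
of the heat equation beyond the front, with zero initial datum and, by the jump relation, zero flux
through the front. By the maximum principle it vanishes there, so `u` vanishes on the front by
continuity. The minimum principle inside then gives `u ≥ 0`, so that `|u|^p`, the nonlinearity used
in the integral equations, is the prescribed one.
-/
/-! ### The heat kernel -/

/-- The heat kernel `(4πr)^{-1/2} exp(-z²/(4r))` at time `r > 0`. For `r ≤ 0` the junk value
`√(4 * π * r) = 0` makes it vanish, which is the correct causal extension. -/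
def heatKernel (r z : ℝ) : ℝ := (√(4 * π * r))⁻¹ * exp (-(z ^ 2 / (4 * r)))

/-- The space derivative of `heatKernel`. -/
def heatKernelX (r z : ℝ) : ℝ := -(z / (2 * r)) * heatKernel r z

/-- The second space derivative of `heatKernel`, which is also its time derivative. -/
def heatKernelXX (r z : ℝ) : ℝ := (z ^ 2 / (4 * r ^ 2) - 1 / (2 * r)) * heatKernel r z

section HeatKernel

lemma heatKernel_of_nonpos {r : ℝ} (hr : r ≤ 0) (z : ℝ) : heatKernel r z = 0 := by
  have : √(4 * π * r) = 0 :=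
    sqrt_eq_zero_of_nonpos (mul_nonpos_of_nonneg_of_nonpos (by positivity) hr)
  simp [heatKernel, this]

lemma heatKernelX_of_nonpos {r : ℝ} (hr : r ≤ 0) (z : ℝ) : heatKernelX r z = 0 := by
  simp [heatKernelX, heatKernel_of_nonpos hr]

lemma heatKernelXX_of_nonpos {r : ℝ} (hr : r ≤ 0) (z : ℝ) : heatKernelXX r z = 0 := by
  simp [heatKernelXX, heatKernel_of_nonpos hr]

lemma heatKernel_nonneg (r z : ℝ) : 0 ≤ heatKernel r z := by unfold heatKernel; positivity

lemma heatKernel_neg (r z : ℝ) : heatKernel r (-z) = heatKernel r z := by simp [heatKernel]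

lemma heatKernelX_neg (r z : ℝ) : heatKernelX r (-z) = -heatKernelX r z := by
  simp only [heatKernelX, heatKernel_neg]; ring

lemma heatKernelX_zero (r : ℝ) : heatKernelX r 0 = 0 := by simp [heatKernelX]

lemma hasDerivAt_heatKernel (r z : ℝ) : HasDerivAt (heatKernel r) (heatKernelX r z) z := by
  rcases le_or_gt r 0 with hr | hr
  · rw [heatKernelX_of_nonpos hr, funext (heatKernel_of_nonpos hr)]
    exact hasDerivAt_const _ _
  · have h : HasDerivAt (fun z : ℝ => -(z ^ 2 / (4 * r))) (-(2 * z / (4 * r))) z := by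
      simpa using! ((hasDerivAt_pow 2 z).div_const (4 * r)).neg
    refine (h.exp.const_mul (√(4 * π * r))⁻¹).congr_deriv ?_
    unfold heatKernelX heatKernel
    field_simp
    ring

lemma hasDerivAt_heatKernelX (r z : ℝ) : HasDerivAt (heatKernelX r) (heatKernelXX r z) z := by
  have h : HasDerivAt (fun z : ℝ => -(z / (2 * r))) (-(1 / (2 * r))) z :=
    ((hasDerivAt_id z).div_const (2 * r)).neg
  refine (h.mul (hasDerivAt_heatKernel r z)).congr_deriv ?_
  unfold heatKernelXX heatKernelX
  rcases eq_or_ne r 0 with rfl | hr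
  · simp
  · field_simp; ring

lemma exp_neg_le_factorial_div_pow {y : ℝ} (n : ℕ) (hy : 0 < y) :
    exp (-y) ≤ n.factorial / y ^ n := by
  rw [exp_neg, ← inv_div]
  exact inv_anti₀ (by positivity) (pow_div_factorial_le_exp y hy.le n)

lemma mul_exp_neg_le_one (y : ℝ) : y * exp (-y) ≤ 1 :=
  (mul_exp_neg_le_exp_neg_one y).trans (exp_le_one_iff.2 (by norm_num))

lemma sq_mul_exp_neg_le_two {y : ℝ} (hy : 0 ≤ y) : y ^ 2 * exp (-y) ≤ 2 := by
  rw [exp_neg, ← div_eq_mul_inv, div_le_iff₀ (exp_pos _)]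
  nlinarith [quadratic_le_exp_of_nonneg hy]

lemma inv_sqrt_four_pi_mul_le {r : ℝ} (hr : 0 < r) : (√(4 * π * r))⁻¹ ≤ (√r)⁻¹ :=
  inv_anti₀ (sqrt_pos.2 hr) (sqrt_le_sqrt (by nlinarith [pi_gt_three]))

lemma heatKernel_le (r z : ℝ) : heatKernel r z ≤ (√r)⁻¹ := by
  rcases le_or_gt r 0 with hr | hr
  · rw [heatKernel_of_nonpos hr]; positivity
  · have hexp : exp (-(z ^ 2 / (4 * r))) ≤ 1 :=
      exp_le_one_iff.2 (neg_nonpos.2 (by positivity))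
    simpa [heatKernel] using
      mul_le_mul (inv_sqrt_four_pi_mul_le hr) hexp (exp_pos _).le (by positivity)

lemma heatKernel_sq_le (r z : ℝ) : heatKernel r z ^ 2 ≤ (√r)⁻¹ * heatKernel r z := by
  rw [sq]; exact mul_le_mul_of_nonneg_right (heatKernel_le r z) (heatKernel_nonneg r z)

lemma abs_heatKernelX {r : ℝ} (hr : 0 ≤ r) (z : ℝ) :
    |heatKernelX r z| = |z| / (2 * r) * heatKernel r z := by
  rw [heatKernelX, abs_mul, abs_neg, abs_div, abs_of_nonneg (by positivity : 0 ≤ 2 * r),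
    abs_of_nonneg (heatKernel_nonneg r z)]

lemma abs_heatKernelX_le {r : ℝ} (hr : 0 < r) (z : ℝ) :
    |heatKernelX r z| ≤ |z| / r * (√r)⁻¹ := by
  rw [abs_heatKernelX hr.le]
  refine mul_le_mul ?_ (heatKernel_le r z) (heatKernel_nonneg r z) (by positivity)
  gcongr
  linarith

lemma abs_mul_abs_heatKernelX_le {r : ℝ} (hr : 0 < r) (z : ℝ) :
    |z| * |heatKernelX r z| ≤ 2 * (√r)⁻¹ := by
  calc |z| * |heatKernelX r z|
      = (√(4 * π * r))⁻¹ * (2 * (z ^ 2 / (4 * r) * exp (-(z ^ 2 / (4 * r))))) := by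
        rw [abs_heatKernelX hr.le, heatKernel, ← sq_abs z]
        field_simp
        ring
    _ ≤ (√r)⁻¹ * (2 * 1) := by
        gcongr ?_ * (2 * ?_)
        · exact inv_sqrt_four_pi_mul_le hr
        · exact mul_exp_neg_le_one _
    _ = 2 * (√r)⁻¹ := by ring

lemma heatKernelX_sq_le {r : ℝ} (hr : 0 < r) (z : ℝ) :
    heatKernelX r z ^ 2 ≤ r⁻¹ * (√r)⁻¹ * heatKernel r z := by
  have hsq : heatKernelX r z ^ 2 = r⁻¹ * ((√(4 * π * r))⁻¹ *
      (z ^ 2 / (4 * r) * exp (-(z ^ 2 / (4 * r))))) * heatKernel r z := by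
    simp only [heatKernelX, heatKernel]
    field_simp
    ring
  rw [hsq]
  refine mul_le_mul_of_nonneg_right ?_ (heatKernel_nonneg r z)
  gcongr
  simpa using mul_le_mul (inv_sqrt_four_pi_mul_le hr) (mul_exp_neg_le_one _) (by positivity)
    (by positivity)

lemma abs_heatKernelXX {r : ℝ} (hr : 0 < r) (z : ℝ) :
    |heatKernelXX r z| = (√(4 * π * r))⁻¹ * r⁻¹ *
      |(z ^ 2 / (4 * r) - 1 / 2) * exp (-(z ^ 2 / (4 * r)))| := by
  rw [← abs_of_nonneg (by positivity : 0 ≤ (√(4 * π * r))⁻¹ * r⁻¹), ← abs_mul]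
  congr 1
  unfold heatKernelXX heatKernel
  field_simp

lemma abs_heatKernelXX_le {r : ℝ} (hr : 0 < r) (z : ℝ) :
    |heatKernelXX r z| ≤ 2 * r⁻¹ * (√r)⁻¹ := by
  have hprofile (y : ℝ) (hy : 0 ≤ y) : |(y - 1 / 2) * exp (-y)| ≤ 2 := by
    have hexp : exp (-y) ≤ 1 := exp_le_one_iff.2 (by linarith)
    rw [abs_le]
    constructor <;> nlinarith [mul_exp_neg_le_one y, exp_pos (-y)]
  calc |heatKernelXX r z| ≤ (√r)⁻¹ * r⁻¹ * 2 := by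
        rw [abs_heatKernelXX hr]
        gcongr ?_ * r⁻¹ * ?_
        · exact inv_sqrt_four_pi_mul_le hr
        · exact hprofile _ (by positivity)
    _ = 2 * r⁻¹ * (√r)⁻¹ := by ring

lemma sq_mul_abs_heatKernelXX_le {r : ℝ} (hr : 0 < r) (z : ℝ) :
    z ^ 2 * |heatKernelXX r z| ≤ 12 * (√r)⁻¹ := by
  have hprofile (y : ℝ) (hy : 0 ≤ y) : y * |(y - 1 / 2) * exp (-y)| ≤ 3 := by
    rw [← abs_of_nonneg hy, ← abs_mul, abs_of_nonneg hy, abs_le]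
    constructor <;> nlinarith [mul_exp_neg_le_one y, sq_mul_exp_neg_le_two hy, exp_pos (-y)]
  calc z ^ 2 * |heatKernelXX r z| = (√(4 * π * r))⁻¹ * (4 * (z ^ 2 / (4 * r) *
          |(z ^ 2 / (4 * r) - 1 / 2) * exp (-(z ^ 2 / (4 * r)))|)) := by
        rw [abs_heatKernelXX hr]
        field_simp
    _ ≤ (√r)⁻¹ * (4 * 3) := by
        gcongr ?_ * (4 * ?_)
        · exact inv_sqrt_four_pi_mul_le hr
        · exact hprofile _ (by positivity)
    _ = 12 * (√r)⁻¹ := by ring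

-- Away from `z = 0` the kernel and its derivatives vanish to positive order in `√r` as `r → 0`,
-- which makes them continuous across `r = 0`.
lemma heatKernel_le_of_ne_zero (r : ℝ) {z : ℝ} (hz : z ≠ 0) :
    heatKernel r z ≤ 384 * r ^ 2 * √r / z ^ 6 := by
  rcases le_or_gt r 0 with hr | hr
  · simp [heatKernel_of_nonpos hr, sqrt_eq_zero_of_nonpos hr]
  · have hexp := exp_neg_le_factorial_div_pow 3 (y := z ^ 2 / (4 * r)) (by positivity)
    calc heatKernel r z ≤ (√r)⁻¹ * ((3).factorial / (z ^ 2 / (4 * r)) ^ 3) :=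
          mul_le_mul (inv_sqrt_four_pi_mul_le hr) hexp (by positivity) (by positivity)
      _ = 384 * r ^ 2 * √r / z ^ 6 := by
          have hs : √r * √r = r := mul_self_sqrt hr.le
          have hs0 : √r ≠ 0 := (sqrt_pos.2 hr).ne'
          simp only [Nat.factorial]
          push_cast
          field_simp
          rw [sq, hs]
          ring

lemma abs_heatKernelX_le_of_ne_zero (r : ℝ) {z : ℝ} (hz : z ≠ 0) :
    |heatKernelX r z| ≤ |z| * (192 * |r| * √r / z ^ 6) := by
  rcases le_or_gt r 0 with hr | hr
  · simp [heatKernelX_of_nonpos hr, sqrt_eq_zero_of_nonpos hr]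
  · calc |heatKernelX r z| ≤ |z| / (2 * r) * (384 * r ^ 2 * √r / z ^ 6) := by
          rw [abs_heatKernelX hr.le]
          gcongr
          exact heatKernel_le_of_ne_zero r hz
      _ = |z| * (192 * |r| * √r / z ^ 6) := by
          rw [abs_of_pos hr]
          field_simp
          ring

lemma abs_heatKernelXX_le_of_ne_zero (r : ℝ) {z : ℝ} (hz : z ≠ 0) :
    |heatKernelXX r z| ≤ (z ^ 2 + |r|) * (384 * √r / z ^ 6) := by
  rcases le_or_gt r 0 with hr | hr
  · simp [heatKernelXX_of_nonpos hr, sqrt_eq_zero_of_nonpos hr]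
  · have hcoeff : |z ^ 2 / (4 * r ^ 2) - 1 / (2 * r)| ≤ (z ^ 2 + r) / r ^ 2 := by
      have : z ^ 2 / (4 * r ^ 2) - 1 / (2 * r) = (z ^ 2 / 4 - r / 2) / r ^ 2 := by field_simp
      rw [this, abs_div, abs_of_pos (by positivity : 0 < r ^ 2)]
      gcongr
      rw [abs_le]
      constructor <;> nlinarith [sq_nonneg z]
    calc |heatKernelXX r z| ≤ (z ^ 2 + r) / r ^ 2 * (384 * r ^ 2 * √r / z ^ 6) := by
          rw [heatKernelXX, abs_mul, abs_of_nonneg (heatKernel_nonneg r z)]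
          exact mul_le_mul hcoeff (heatKernel_le_of_ne_zero r hz) (heatKernel_nonneg _ _)
            (by positivity)
      _ = (z ^ 2 + |r|) * (384 * √r / z ^ 6) := by
          rw [abs_of_pos hr]
          field_simp

lemma continuousAt_zero_left_of_abs_le {k b : ℝ → ℝ → ℝ} {z : ℝ} (hz : z ≠ 0)
    (hb : ContinuousAt (fun q : ℝ × ℝ => b q.1 q.2) (0, z)) (hb0 : b 0 z = 0) (hk0 : k 0 z = 0)
    (hkb : ∀ r w, w ≠ 0 → |k r w| ≤ b r w) :
    ContinuousAt (fun q : ℝ × ℝ => k q.1 q.2) (0, z) := by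
  have hlim : Tendsto (fun q : ℝ × ℝ => b q.1 q.2) (𝓝 (0, z)) (𝓝 0) := by
    simpa [hb0] using hb.tendsto
  have hne : ∀ᶠ q : ℝ × ℝ in 𝓝 (0, z), q.2 ≠ 0 := continuousAt_snd.eventually_ne hz
  change Tendsto _ _ (𝓝 (k 0 z))
  rw [hk0]
  refine squeeze_zero_norm' ?_ hlim
  filter_upwards [hne] with q hq using hkb _ _ hq

lemma continuousAt_heatKernel {r z : ℝ} (h : r ≠ 0 ∨ z ≠ 0) :
    ContinuousAt (fun q : ℝ × ℝ => heatKernel q.1 q.2) (r, z) := by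
  rcases lt_trichotomy r 0 with hr | rfl | hr
  · have hneg : ∀ᶠ q : ℝ × ℝ in 𝓝 (r, z), q.1 < 0 := continuousAt_fst.eventually_lt_const hr
    refine (continuousAt_const (y := (0 : ℝ))).congr ?_
    filter_upwards [hneg] with q hq using (heatKernel_of_nonpos hq.le _).symm
  · have hz : z ≠ 0 := by simpa using h
    refine continuousAt_zero_left_of_abs_le (b := fun r z => 384 * r ^ 2 * √r / z ^ 6) hz
      (by fun_prop (disch := positivity)) (by simp) (heatKernel_of_nonpos le_rfl z) fun r w hw => ?_
    rw [abs_of_nonneg (heatKernel_nonneg r w)]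
    exact heatKernel_le_of_ne_zero r hw
  · have hs : √(4 * π * r) ≠ 0 := (sqrt_pos.2 (by positivity)).ne'
    have hr4 : 4 * r ≠ 0 := by positivity
    unfold heatKernel
    fun_prop (disch := assumption)

lemma continuousAt_heatKernelX {r z : ℝ} (h : r ≠ 0 ∨ z ≠ 0) :
    ContinuousAt (fun q : ℝ × ℝ => heatKernelX q.1 q.2) (r, z) := by
  rcases eq_or_ne r 0 with rfl | hr
  · have hz : z ≠ 0 := by simpa using h
    exact continuousAt_zero_left_of_abs_le (b := fun r z => |z| * (192 * |r| * √r / z ^ 6)) hz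
      (by fun_prop (disch := positivity)) (by simp) (heatKernelX_of_nonpos le_rfl z)
      fun r w hw => abs_heatKernelX_le_of_ne_zero r hw
  · have hr2 : 2 * r ≠ 0 := by positivity
    have hk := continuousAt_heatKernel (z := z) (Or.inl hr)
    unfold heatKernelX
    fun_prop (disch := assumption)

lemma continuousAt_heatKernelXX {r z : ℝ} (h : r ≠ 0 ∨ z ≠ 0) :
    ContinuousAt (fun q : ℝ × ℝ => heatKernelXX q.1 q.2) (r, z) := by
  rcases eq_or_ne r 0 with rfl | hr
  · have hz : z ≠ 0 := by simpa using h
    exact continuousAt_zero_left_of_abs_le (b := fun r z => (z ^ 2 + |r|) * (384 * √r / z ^ 6)) hz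
      (by fun_prop (disch := positivity)) (by simp) (heatKernelXX_of_nonpos le_rfl z)
      fun r w hw => abs_heatKernelXX_le_of_ne_zero r hw
  · have hr2 : 2 * r ≠ 0 := by positivity
    have hr4 : 4 * r ^ 2 ≠ 0 := by positivity
    have hk := continuousAt_heatKernel (z := z) (Or.inl hr)
    unfold heatKernelXX
    fun_prop (disch := assumption)

lemma hasDerivAt_heatKernel_time_of_pos {r : ℝ} (hr : 0 < r) (z : ℝ) :
    HasDerivAt (fun r => heatKernel r z) (heatKernelXX r z) r := by
  have hpos : 0 < 4 * π * r := by positivity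
  have hsqrt : HasDerivAt (fun r => √(4 * π * r)) (4 * π / (2 * √(4 * π * r))) r := by
    simpa using ((hasDerivAt_id r).const_mul (4 * π)).sqrt hpos.ne'
  have hexponent : HasDerivAt (fun r : ℝ => -(z ^ 2 / (4 * r))) (z ^ 2 / (4 * r ^ 2)) r := by
    refine (((hasDerivAt_const r (z ^ 2)).div ((hasDerivAt_id r).const_mul 4)
      (by simpa using hr.ne')).neg).congr_deriv ?_
    simp only [id_eq]
    field_simp
    ring
  refine ((hsqrt.inv (sqrt_pos.2 hpos).ne').mul hexponent.exp).congr_deriv ?_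
  simp only [Pi.inv_apply, sq_sqrt hpos.le]
  unfold heatKernelXX heatKernel
  field_simp
  ring

lemma hasDerivAt_heatKernel_time {r z : ℝ} (h : r ≠ 0 ∨ z ≠ 0) :
    HasDerivAt (fun r => heatKernel r z) (heatKernelXX r z) r := by
  have hderiv_of_ne : ∀ r ≠ 0, HasDerivAt (fun r => heatKernel r z) (heatKernelXX r z) r := by
    intro r hr
    rcases lt_or_gt_of_ne hr with hr | hr
    · rw [heatKernelXX_of_nonpos hr.le]
      refine (hasDerivAt_const r (0 : ℝ)).congr_of_eventuallyEq ?_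
      filter_upwards [Iio_mem_nhds hr] with q hq using heatKernel_of_nonpos (le_of_lt hq) _
    · exact hasDerivAt_heatKernel_time_of_pos hr z
  rcases eq_or_ne r 0 with rfl | hr
  · exact hasDerivAt_of_hasDerivAt_of_ne hderiv_of_ne
      ((continuousAt_heatKernel h).comp (f := fun r : ℝ => (r, z)) (x := 0) (by fun_prop))
      ((continuousAt_heatKernelXX h).comp (f := fun r : ℝ => (r, z)) (x := 0) (by fun_prop))
  · exact hderiv_of_ne r hr

lemma heatKernel_eq_gaussianPDFReal {r : ℝ} (hr : 0 ≤ r) (z : ℝ) :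
    heatKernel r z = ProbabilityTheory.gaussianPDFReal 0 (2 * r).toNNReal z := by
  rw [heatKernel, ProbabilityTheory.gaussianPDFReal, coe_toNNReal _ (by positivity)]
  ring_nf

lemma integrable_heatKernel {r : ℝ} (hr : 0 < r) : Integrable (heatKernel r) := by
  rw [funext (heatKernel_eq_gaussianPDFReal hr.le)]
  exact ProbabilityTheory.integrable_gaussianPDFReal _ _

lemma integral_heatKernel {r : ℝ} (hr : 0 < r) : ∫ z, heatKernel r z = 1 := by
  simp_rw [heatKernel_eq_gaussianPDFReal hr.le]
  exact ProbabilityTheory.integral_gaussianPDFReal_eq_one _ (toNNReal_pos.2 (by positivity)).ne'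

lemma setIntegral_heatKernel_sub_le_one {r : ℝ} (hr : 0 < r) (x : ℝ) (s : Set ℝ) :
    ∫ y in s, heatKernel r (x - y) ≤ 1 := by
  rw [← integral_heatKernel hr, ← integral_sub_left_eq_self (heatKernel r) volume x]
  exact setIntegral_le_integral ((integrable_heatKernel hr).comp_sub_left x)
    (Eventually.of_forall fun y => heatKernel_nonneg _ _)

end HeatKernel

/-- The function `(1 + erf y) / 2`, i.e. the antiderivative of `π^{-1/2} exp(-w²)` that vanishes
at `-∞`. -/
def normalizedErf (y : ℝ) : ℝ := 1 / 2 + (√π)⁻¹ * ∫ w in (0 : ℝ)..y, exp (-w ^ 2)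

/-- The Heaviside function, with the symmetric value `1 / 2` at the origin. -/
def heaviside (z : ℝ) : ℝ := if 0 < z then 1 else if z < 0 then 0 else 1 / 2

/-- The solution at time `r` of the heat equation on `ℝ` whose initial value is `heaviside`,
extended by `heaviside` to `r ≤ 0`. It is the antiderivative in space of `heatKernel`. -/
def heatStep (r z : ℝ) : ℝ := if 0 < r then normalizedErf (z / (2 * √r)) else heaviside z

section HeatStep

lemma hasDerivAt_normalizedErf (y : ℝ) :
    HasDerivAt normalizedErf ((√π)⁻¹ * exp (-y ^ 2)) y := by
  have hc : Continuous fun w : ℝ => exp (-w ^ 2) := by fun_prop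
  exact ((hc.integral_hasStrictDerivAt 0 y).hasDerivAt.const_mul _).const_add _

lemma continuous_normalizedErf : Continuous normalizedErf :=
  continuous_iff_continuousAt.2 fun y => (hasDerivAt_normalizedErf y).continuousAt

lemma normalizedErf_neg (y : ℝ) : normalizedErf (-y) = 1 - normalizedErf y := by
  have hodd : ∫ w in (0 : ℝ)..(-y), exp (-w ^ 2) = -∫ w in (0 : ℝ)..y, exp (-w ^ 2) := by
    have h := intervalIntegral.integral_comp_neg (a := 0) (b := y) fun w : ℝ => exp (-w ^ 2)
    simp only [neg_zero, neg_sq] at h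
    rw [h, intervalIntegral.integral_symm]
  simp only [normalizedErf, hodd]
  ring

lemma tendsto_normalizedErf_atTop : Tendsto normalizedErf atTop (𝓝 1) := by
  have hintegrable : IntegrableOn (fun w : ℝ => exp (-w ^ 2)) (Ioi 0) := by
    simpa using (integrable_exp_neg_mul_sq (b := 1) one_pos).integrableOn (s := Ioi 0)
  have hval : ∫ w in Ioi (0 : ℝ), exp (-w ^ 2) = √π / 2 := by
    simpa using integral_gaussian_Ioi 1
  have h := ((intervalIntegral_tendsto_integral_Ioi 0 hintegrable tendsto_id).const_mul
    (√π)⁻¹).const_add (1 / 2)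
  have hone : 1 / 2 + (√π)⁻¹ * (√π / 2) = 1 := by
    have : √π ≠ 0 := (sqrt_pos.2 pi_pos).ne'
    field_simp
    norm_num
  rwa [hval, hone] at h

lemma monotone_normalizedErf : Monotone normalizedErf :=
  monotone_of_hasDerivAt_nonneg hasDerivAt_normalizedErf fun y => by positivity

lemma normalizedErf_le_one (y : ℝ) : normalizedErf y ≤ 1 :=
  monotone_normalizedErf.ge_of_tendsto tendsto_normalizedErf_atTop y

lemma normalizedErf_nonneg (y : ℝ) : 0 ≤ normalizedErf y := by
  linarith [normalizedErf_le_one (-y), normalizedErf_neg y]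

lemma heaviside_of_pos {z : ℝ} (h : 0 < z) : heaviside z = 1 := by simp [heaviside, h]

lemma heaviside_of_neg {z : ℝ} (h : z < 0) : heaviside z = 0 := by simp [heaviside, h, h.le]

lemma heaviside_zero : heaviside 0 = 1 / 2 := by simp [heaviside]

lemma heaviside_neg (z : ℝ) : heaviside (-z) = 1 - heaviside z := by
  rcases lt_trichotomy z 0 with h | rfl | h
  · rw [heaviside_of_neg h, heaviside_of_pos (by linarith)]; norm_num
  · rw [neg_zero, heaviside_zero]; norm_num
  · rw [heaviside_of_pos h, heaviside_of_neg (by linarith)]; norm_num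

lemma heaviside_mem_Icc (z : ℝ) : heaviside z ∈ Icc (0 : ℝ) 1 := by
  unfold heaviside; split_ifs <;> norm_num

lemma heatStep_of_pos {r : ℝ} (hr : 0 < r) (z : ℝ) :
    heatStep r z = normalizedErf (z / (2 * √r)) := by simp [heatStep, hr]

lemma heatStep_of_nonpos {r : ℝ} (hr : r ≤ 0) (z : ℝ) : heatStep r z = heaviside z := by
  simp [heatStep, hr.not_gt]

lemma heatStep_mem_Icc (r z : ℝ) : heatStep r z ∈ Icc (0 : ℝ) 1 := by
  unfold heatStep
  split_ifs
  · exact ⟨normalizedErf_nonneg _, normalizedErf_le_one _⟩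
  · exact heaviside_mem_Icc z

lemma heatStep_neg (r z : ℝ) : heatStep r (-z) = 1 - heatStep r z := by
  unfold heatStep
  split_ifs
  · rw [neg_div, normalizedErf_neg]
  · exact heaviside_neg z

lemma heatKernel_eq_exp_div_sqrt_sq {r : ℝ} (hr : 0 < r) (z : ℝ) :
    heatKernel r z = (√π)⁻¹ * exp (-(z / (2 * √r)) ^ 2) * (2 * √r)⁻¹ := by
  have hfour : √(4 * π * r) = 2 * √π * √r := by
    rw [sqrt_mul (by positivity), sqrt_mul (by positivity)]
    norm_num [show (4 : ℝ) = 2 ^ 2 by norm_num]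
  rw [heatKernel, hfour, div_pow, mul_pow, sq_sqrt hr.le]
  norm_num
  ring

lemma hasDerivAt_heatStep {r : ℝ} (hr : 0 < r) (z : ℝ) :
    HasDerivAt (heatStep r) (heatKernel r z) z := by
  rw [funext (heatStep_of_pos hr), heatKernel_eq_exp_div_sqrt_sq hr]
  exact ((hasDerivAt_normalizedErf _).comp z ((hasDerivAt_id z).div_const (2 * √r))).congr_deriv
    (by simp)

lemma hasDerivAt_heatStep_time {r : ℝ} (hr : 0 < r) (z : ℝ) :
    HasDerivAt (fun r => heatStep r z) (heatKernelX r z) r := by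
  have hs : √r ≠ 0 := (sqrt_pos.2 hr).ne'
  have harg : HasDerivAt (fun r => z / (2 * √r)) (-(z / (2 * r)) * (2 * √r)⁻¹) r := by
    refine ((hasDerivAt_const r z).div ((hasDerivAt_sqrt hr.ne').const_mul 2)
      (by positivity)).congr_deriv ?_
    field_simp
    rw [sq_sqrt hr.le]
    field_simp
    ring
  have hcomp := ((hasDerivAt_normalizedErf _).comp r harg).congr_of_eventuallyEq
    (f₁ := fun r => heatStep r z) <| by
      filter_upwards [Ioi_mem_nhds hr] with q hq using heatStep_of_pos hq z
  refine hcomp.congr_deriv ?_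
  rw [heatKernelX, heatKernel_eq_exp_div_sqrt_sq hr]
  ring

lemma continuousAt_heatStep_of_time_pos {r z : ℝ} (hr : 0 < r) :
    ContinuousAt (fun q : ℝ × ℝ => heatStep q.1 q.2) (r, z) := by
  have hs : 2 * √r ≠ 0 := by positivity
  have harg : ContinuousAt (fun q : ℝ × ℝ => q.2 / (2 * √q.1)) (r, z) := by
    fun_prop (disch := assumption)
  refine (continuous_normalizedErf.continuousAt.comp harg).congr ?_
  have hpos : ∀ᶠ q : ℝ × ℝ in 𝓝 (r, z), 0 < q.1 := continuousAt_fst.eventually_const_lt hr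
  filter_upwards [hpos] with q hq using (heatStep_of_pos hq _).symm

lemma continuousAt_heatStep_zero_of_pos {z : ℝ} (hz : 0 < z) :
    ContinuousAt (fun q : ℝ × ℝ => heatStep q.1 q.2) (0, z) := by
  rw [Metric.continuousAt_iff']
  intro ε hε
  obtain ⟨N, hN⟩ := Metric.tendsto_atTop.1 tendsto_normalizedErf_atTop ε hε
  have hlarge : ∀ᶠ q : ℝ × ℝ in 𝓝 (0, z), 2 * N * √q.1 < q.2 :=
    ContinuousAt.eventually_lt (by fun_prop) (by fun_prop) (by simpa using hz)
  have hpos : ∀ᶠ q : ℝ × ℝ in 𝓝 (0, z), 0 < q.2 := continuousAt_snd.eventually_const_lt hz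
  filter_upwards [hlarge, hpos] with q hlarge hpos
  rw [heatStep_of_nonpos le_rfl, heaviside_of_pos hz]
  rcases le_or_gt q.1 0 with hr | hr
  · rwa [heatStep_of_nonpos hr, heaviside_of_pos hpos, dist_self]
  · rw [heatStep_of_pos hr]
    refine hN _ ((le_div_iff₀ (by positivity)).2 ?_)
    linarith

lemma continuousAt_heatStep {r z : ℝ} (h : 0 < r ∨ (r = 0 ∧ z ≠ 0)) :
    ContinuousAt (fun q : ℝ × ℝ => heatStep q.1 q.2) (r, z) := by
  rcases h with hr | ⟨rfl, hz⟩
  · exact continuousAt_heatStep_of_time_pos hr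
  rcases lt_or_gt_of_ne hz with hz | hz
  · have hreflect : ContinuousAt (fun q : ℝ × ℝ => heatStep q.1 (-q.2)) (0, z) :=
      ContinuousAt.comp (f := fun q : ℝ × ℝ => (q.1, -q.2)) (x := ((0 : ℝ), z))
        (continuousAt_heatStep_zero_of_pos (neg_pos.2 hz)) (by fun_prop)
    refine ((continuousAt_const (y := (1 : ℝ))).sub hreflect).congr (.of_forall fun q => ?_)
    simp [heatStep_neg]
  · exact continuousAt_heatStep_zero_of_pos hz

end HeatStep
/-! ### Parametric integrals -/

section ParametricIntegral

variable {X : Type*} [TopologicalSpace X] {a b : ℝ} {U : Set (X × ℝ)}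

lemma aestronglyMeasurable_of_continuousOn_uIcc {f : ℝ → ℝ} (hf : ContinuousOn f (uIcc a b)) :
    AEStronglyMeasurable f (volume.restrict (uIoc a b)) :=
  (hf.mono uIoc_subset_uIcc).aestronglyMeasurable measurableSet_uIoc

lemma aestronglyMeasurable_of_continuousOn_Ioo (hab : a ≤ b) {f : ℝ → ℝ}
    (hf : ContinuousOn f (Ioo a b)) :
    AEStronglyMeasurable f (volume.restrict (uIoc a b)) := by
  rw [uIoc_of_le hab, ← Measure.restrict_congr_set Ioo_ae_eq_Ioc]
  exact hf.aestronglyMeasurable measurableSet_Ioo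

lemma continuousOn_slice {m : X → ℝ → ℝ} {q : X}
    (hm : ∀ z ∈ U, ContinuousAt (fun z : X × ℝ => m z.1 z.2) z)
    (hq : ∀ y ∈ uIcc a b, (q, y) ∈ U) : ContinuousOn (m q) (uIcc a b) := fun y hy =>
  (ContinuousAt.comp (f := fun y : ℝ => (q, y)) (x := y) (hm _ (hq y hy))
    (by fun_prop)).continuousWithinAt

lemma exists_eventually_forall_mem_and_abs_le {m : X → ℝ → ℝ} {q₀ : X} (hU : IsOpen U)
    (hm : ∀ z ∈ U, ContinuousAt (fun z : X × ℝ => m z.1 z.2) z)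
    (hq₀ : ∀ y ∈ uIcc a b, (q₀, y) ∈ U) :
    ∃ C : ℝ, ∀ᶠ q in 𝓝 q₀, ∀ y ∈ uIcc a b, (q, y) ∈ U ∧ |m q y| ≤ C := by
  obtain ⟨C, hC⟩ := isCompact_uIcc.exists_bound_of_continuousOn (continuousOn_slice hm hq₀)
  refine ⟨C + 1, isCompact_uIcc.eventually_forall_of_forall_eventually
    (P := fun q y => (q, y) ∈ U ∧ |m q y| ≤ C + 1) fun y hy => ?_⟩
  have h_lt : ∀ᶠ z : X × ℝ in 𝓝 (q₀, y), |m z.1 z.2| < C + 1 :=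
    (hm _ (hq₀ y hy)).abs.eventually_lt_const ((hC y hy).trans_lt (lt_add_one C))
  filter_upwards [hU.mem_nhds (hq₀ y hy), h_lt] with z hz hlt
  exact ⟨hz, hlt.le⟩

lemma continuousAt_integral_mul [FirstCountableTopology X] {m : X → ℝ → ℝ} {q₀ : X}
    (hU : IsOpen U) (hm : ∀ z ∈ U, ContinuousAt (fun z : X × ℝ => m z.1 z.2) z)
    (hq₀ : ∀ y ∈ uIcc a b, (q₀, y) ∈ U) {w : ℝ → ℝ} (hw : IntervalIntegrable w volume a b) :
    ContinuousAt (fun q => ∫ y in a..b, m q y * w y) q₀ := by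
  obtain ⟨C, hC⟩ := exists_eventually_forall_mem_and_abs_le hU hm hq₀
  apply intervalIntegral.continuousAt_of_dominated_interval (bound := fun y => C * |w y|)
  · filter_upwards [hC] with q hq
    exact (aestronglyMeasurable_of_continuousOn_uIcc
      (continuousOn_slice hm fun y hy => (hq y hy).1)).mul hw.def'.aestronglyMeasurable
  · filter_upwards [hC] with q hq
    refine Eventually.of_forall fun y hy => ?_
    rw [norm_eq_abs, abs_mul]
    exact mul_le_mul_of_nonneg_right (hq y (uIoc_subset_uIcc hy)).2 (abs_nonneg _)
  · exact hw.abs.const_mul C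
  · refine Eventually.of_forall fun y hy => ?_
    exact (ContinuousAt.comp (f := fun q : X => (q, y)) (x := q₀)
      (hm _ (hq₀ y (uIoc_subset_uIcc hy))) (by fun_prop)).mul continuousAt_const

lemma hasDerivAt_integral_mul {m m' : ℝ → ℝ → ℝ} {l₀ : ℝ} {U : Set (ℝ × ℝ)} (hU : IsOpen U)
    (hm : ∀ z ∈ U, ContinuousAt (fun z : ℝ × ℝ => m z.1 z.2) z)
    (hm' : ∀ z ∈ U, ContinuousAt (fun z : ℝ × ℝ => m' z.1 z.2) z)
    (hd : ∀ z ∈ U, HasDerivAt (fun l => m l z.2) (m' z.1 z.2) z.1)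
    (hl₀ : ∀ y ∈ uIcc a b, (l₀, y) ∈ U) {w : ℝ → ℝ} (hw : IntervalIntegrable w volume a b) :
    HasDerivAt (fun l => ∫ y in a..b, m l y * w y) (∫ y in a..b, m' l₀ y * w y) l₀ := by
  obtain ⟨C, hC⟩ := exists_eventually_forall_mem_and_abs_le hU hm' hl₀
  have hwm := hw.def'.aestronglyMeasurable
  refine (intervalIntegral.hasDerivAt_integral_of_dominated_loc_of_deriv_le
    (F := fun l y => m l y * w y) (F' := fun l y => m' l y * w y)
    (s := {q | ∀ y ∈ uIcc a b, (q, y) ∈ U ∧ |m' q y| ≤ C})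
    (bound := fun y => C * |w y|) hC ?_ (hw.continuousOn_mul (continuousOn_slice hm hl₀))
    ((aestronglyMeasurable_of_continuousOn_uIcc (continuousOn_slice hm' hl₀)).mul hwm)
    ?_ (hw.abs.const_mul C) ?_).2
  · filter_upwards [hC] with q hq
    exact (aestronglyMeasurable_of_continuousOn_uIcc
      (continuousOn_slice hm fun y hy => (hq y hy).1)).mul hwm
  · refine Eventually.of_forall fun y hy q hq => ?_
    rw [norm_eq_abs, abs_mul]
    exact mul_le_mul_of_nonneg_right (hq y (uIoc_subset_uIcc hy)).2 (abs_nonneg _)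
  · exact Eventually.of_forall fun y hy q hq =>
      (hd _ (hq y (uIoc_subset_uIcc hy)).1).mul_const _

end ParametricIntegral

/-- The potential `∫₀ᴿ k(t - α y, x - β y) w(y) dy` of the density `w` along the space-time curve
`(α, β)`. Initial potentials have constant `α`, layer potentials have `α y = y`. -/
def curvePotential (k : ℝ → ℝ → ℝ) (R : ℝ) (α β w : ℝ → ℝ) (t x : ℝ) : ℝ :=
  ∫ y in (0 : ℝ)..R, k (t - α y) (x - β y) * w y

section CurvePotential

variable {k k' : ℝ → ℝ → ℝ} {R t x : ℝ} {α β w : ℝ → ℝ} {O : Set (ℝ × ℝ)}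

lemma continuousAt_curvePotential (hα : Continuous α) (hβ : Continuous β)
    (hw : IntervalIntegrable w volume 0 R) (hO : IsOpen O)
    (hk : ∀ z ∈ O, ContinuousAt (fun z : ℝ × ℝ => k z.1 z.2) z)
    (h : ∀ y ∈ uIcc 0 R, (t - α y, x - β y) ∈ O) :
    ContinuousAt (fun q : ℝ × ℝ => curvePotential k R α β w q.1 q.2) (t, x) := by
  have hf : Continuous fun z : (ℝ × ℝ) × ℝ => (z.1.1 - α z.2, z.1.2 - β z.2) := by fun_prop
  exact continuousAt_integral_mul (q₀ := (t, x)) (m := fun q y => k (q.1 - α y) (q.2 - β y))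
    (hO.preimage hf)
    (fun z hz => ContinuousAt.comp (f := fun z : (ℝ × ℝ) × ℝ => (z.1.1 - α z.2, z.1.2 - β z.2))
      (hk _ hz) hf.continuousAt) h hw

lemma hasDerivAt_curvePotential (hα : Continuous α) (hβ : Continuous β)
    (hw : IntervalIntegrable w volume 0 R) (hO : IsOpen O)
    (hk : ∀ z ∈ O, ContinuousAt (fun z : ℝ × ℝ => k z.1 z.2) z)
    (hk' : ∀ z ∈ O, ContinuousAt (fun z : ℝ × ℝ => k' z.1 z.2) z)
    (hd : ∀ z ∈ O, HasDerivAt (k z.1) (k' z.1 z.2) z.2)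
    (h : ∀ y ∈ uIcc 0 R, (t - α y, x - β y) ∈ O) :
    HasDerivAt (fun x => curvePotential k R α β w t x) (curvePotential k' R α β w t x) x := by
  have hf : Continuous fun z : ℝ × ℝ => (t - α z.2, z.1 - β z.2) := by fun_prop
  exact hasDerivAt_integral_mul (m := fun x y => k (t - α y) (x - β y))
    (m' := fun x y => k' (t - α y) (x - β y)) (hO.preimage hf)
    (fun z hz => ContinuousAt.comp (f := fun z : ℝ × ℝ => (t - α z.2, z.1 - β z.2))
      (hk _ hz) hf.continuousAt)
    (fun z hz => ContinuousAt.comp (f := fun z : ℝ × ℝ => (t - α z.2, z.1 - β z.2))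
      (hk' _ hz) hf.continuousAt)
    (fun z hz => (hd _ hz).comp_sub_const z.1 (β z.2)) h hw

lemma hasDerivAt_curvePotential_time (hα : Continuous α) (hβ : Continuous β)
    (hw : IntervalIntegrable w volume 0 R) (hO : IsOpen O)
    (hk : ∀ z ∈ O, ContinuousAt (fun z : ℝ × ℝ => k z.1 z.2) z)
    (hk' : ∀ z ∈ O, ContinuousAt (fun z : ℝ × ℝ => k' z.1 z.2) z)
    (hd : ∀ z ∈ O, HasDerivAt (fun r => k r z.2) (k' z.1 z.2) z.1)
    (h : ∀ y ∈ uIcc 0 R, (t - α y, x - β y) ∈ O) :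
    HasDerivAt (fun t => curvePotential k R α β w t x) (curvePotential k' R α β w t x) t := by
  have hf : Continuous fun z : ℝ × ℝ => (z.1 - α z.2, x - β z.2) := by fun_prop
  exact hasDerivAt_integral_mul (m := fun t y => k (t - α y) (x - β y))
    (m' := fun t y => k' (t - α y) (x - β y)) (hO.preimage hf)
    (fun z hz => ContinuousAt.comp (f := fun z : ℝ × ℝ => (z.1 - α z.2, x - β z.2))
      (hk _ hz) hf.continuousAt)
    (fun z hz => ContinuousAt.comp (f := fun z : ℝ × ℝ => (z.1 - α z.2, x - β z.2))
      (hk' _ hz) hf.continuousAt)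
    (fun z hz => (hd _ hz).comp_sub_const z.1 (α z.2)) h hw

end CurvePotential

/-! ### Weakly singular time integrals -/

/-- The weight `τ^(-1/2) (t - τ)^(-1/2)` dominating all time integrands below; outside `(0, t)`
it vanishes. -/
def betaWeight (t τ : ℝ) : ℝ := (√τ)⁻¹ * (√(t - τ))⁻¹

/-- The mass of `betaWeight t` on `(0, t)`, which does not depend on `t` (it equals `π`, a value
that is never needed). -/
def betaConst : ℝ := ∫ τ in (0 : ℝ)..1, betaWeight 1 τ

lemma betaWeight_nonneg (t τ : ℝ) : 0 ≤ betaWeight t τ := by unfold betaWeight; positivity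

lemma intervalIntegrable_inv_sqrt (a b : ℝ) :
    IntervalIntegrable (fun τ : ℝ => (√τ)⁻¹) volume a b := by
  have h := (intervalIntegral.intervalIntegrable_rpow' (a := a) (b := b) (r := -(1 / 2))
    (by norm_num)).abs
  refine h.mono_fun' (by fun_prop) (Eventually.of_forall fun x => ?_)
  beta_reduce
  rcases le_or_gt x 0 with hx | hx
  · simp [sqrt_eq_zero_of_nonpos hx]
  · rw [rpow_neg hx.le, ← sqrt_eq_rpow, norm_eq_abs]

lemma integral_inv_sqrt {t : ℝ} (ht : 0 ≤ t) : ∫ τ in (0 : ℝ)..t, (√τ)⁻¹ = 2 * √t := by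
  have h_deriv : ∀ x ∈ Ioo 0 t, HasDerivAt (fun τ => 2 * √τ) (√x)⁻¹ x := fun x hx =>
    ((hasDerivAt_sqrt hx.1.ne').const_mul 2).congr_deriv (by field_simp)
  rw [intervalIntegral.integral_eq_sub_of_hasDerivAt_of_le ht (by fun_prop) h_deriv
    (intervalIntegrable_inv_sqrt 0 t)]
  simp

lemma inv_sqrt_le_two {r : ℝ} (hr : 1 / 4 ≤ r) : (√r)⁻¹ ≤ 2 := by
  rw [inv_le_comm₀ (sqrt_pos.2 (by linarith)) two_pos]
  exact le_sqrt_of_sq_le (by norm_num; linarith)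

lemma betaWeight_one_le {τ : ℝ} : betaWeight 1 τ ≤ 2 * ((√τ)⁻¹ + (√(1 - τ))⁻¹) := by
  have hl : 0 ≤ (√τ)⁻¹ := by positivity
  have hr : 0 ≤ (√(1 - τ))⁻¹ := by positivity
  unfold betaWeight
  rcases le_total τ (1 / 2) with h | h
  · nlinarith [inv_sqrt_le_two (r := 1 - τ) (by linarith)]
  · nlinarith [inv_sqrt_le_two (r := τ) (by linarith)]

lemma intervalIntegrable_betaWeight_one : IntervalIntegrable (betaWeight 1) volume 0 1 := by
  have h_right : IntervalIntegrable (fun τ : ℝ => (√(1 - τ))⁻¹) volume 0 1 := by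
    simpa using (intervalIntegrable_inv_sqrt 1 0).comp_sub_left 1
  refine (((intervalIntegrable_inv_sqrt 0 1).add h_right).const_mul 2).mono_fun'
    (by unfold betaWeight; fun_prop) (Eventually.of_forall fun τ => ?_)
  beta_reduce
  rw [norm_eq_abs, abs_of_nonneg (betaWeight_nonneg _ _)]
  exact betaWeight_one_le

lemma mul_betaWeight_mul {t : ℝ} (ht : 0 < t) (θ : ℝ) :
    t * betaWeight t (t * θ) = betaWeight 1 θ := by
  have h_sub : t - t * θ = t * (1 - θ) := by ring
  calc t * betaWeight t (t * θ)
      = t * (√t * √t)⁻¹ * ((√θ)⁻¹ * (√(1 - θ))⁻¹) := by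
        rw [betaWeight, h_sub, sqrt_mul ht.le, sqrt_mul ht.le, mul_inv, mul_inv, mul_inv]; ring
    _ = betaWeight 1 θ := by
        rw [mul_self_sqrt ht.le, mul_inv_cancel₀ ht.ne', one_mul, betaWeight]

lemma integral_eq_integral_unit (t : ℝ) (f : ℝ → ℝ) :
    ∫ τ in (0 : ℝ)..t, f τ = ∫ θ in (0 : ℝ)..1, t * f (t * θ) := by
  have h := intervalIntegral.smul_integral_comp_mul_left (a := 0) (b := 1) f t
  simp only [mul_zero, mul_one, smul_eq_mul] at h
  rw [← h, intervalIntegral.integral_const_mul]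

lemma intervalIntegrable_betaWeight {t : ℝ} (ht : 0 < t) :
    IntervalIntegrable (betaWeight t) volume 0 t := by
  have h_eq : (fun x => t⁻¹ * betaWeight 1 (t⁻¹ * x)) = betaWeight t := by
    ext x
    rw [← mul_betaWeight_mul ht, mul_inv_cancel_left₀ ht.ne', inv_mul_cancel_left₀ ht.ne']
  have h := (intervalIntegrable_betaWeight_one.comp_mul_left (c := t⁻¹)).const_mul t⁻¹
  rwa [h_eq, zero_div, one_div, inv_inv] at h

lemma integral_betaWeight {t : ℝ} (ht : 0 < t) :
    ∫ τ in (0 : ℝ)..t, betaWeight t τ = betaConst := by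
  rw [integral_eq_integral_unit]
  simp_rw [mul_betaWeight_mul ht]
  rfl

lemma ae_mem_Ioc_of_forall_mem_Ioo {a b : ℝ} {P : ℝ → Prop} (h : ∀ τ ∈ Ioo a b, P τ) :
    ∀ᵐ τ : ℝ, τ ∈ Ioc a b → P τ := by
  filter_upwards [Measure.ae_ne volume b] with τ hne hτ
  exact h τ ⟨hτ.1, hτ.2.lt_of_ne hne⟩

lemma abs_integral_le_of_le_betaWeight {t C : ℝ} (ht : 0 < t) {k : ℝ → ℝ}
    (h : ∀ τ ∈ Ioo 0 t, |k τ| ≤ C * betaWeight t τ) :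
    |∫ τ in (0 : ℝ)..t, k τ| ≤ C * betaConst := by
  rw [← integral_betaWeight ht, ← intervalIntegral.integral_const_mul]
  exact intervalIntegral.norm_integral_le_of_norm_le (f := k) ht.le
    (ae_mem_Ioc_of_forall_mem_Ioo h)
    ((intervalIntegrable_betaWeight ht).const_mul C)

lemma intervalIntegrable_of_le_betaWeight {t C : ℝ} (ht : 0 < t) {k : ℝ → ℝ}
    (hk : ContinuousOn k (Ioo 0 t)) (h : ∀ τ ∈ Ioo 0 t, |k τ| ≤ C * betaWeight t τ) :
    IntervalIntegrable k volume 0 t := by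
  refine ((intervalIntegrable_betaWeight ht).const_mul C).mono_fun'
    (aestronglyMeasurable_of_continuousOn_Ioo ht.le hk) ?_
  rw [uIoc_of_le ht.le]
  exact (ae_restrict_iff' measurableSet_Ioc).2 (ae_mem_Ioc_of_forall_mem_Ioo h)

-- Rescaling to the unit interval gives a dominating function independent of the parameter.
lemma continuousAt_integral_of_le_betaWeight {X : Type*} [TopologicalSpace X]
    [FirstCountableTopology X] {q₀ : X} {t : X → ℝ} (ht : ContinuousAt t q₀) (ht₀ : 0 < t q₀)
    {k : X → ℝ → ℝ} {C : ℝ} (hk : ∀ᶠ q in 𝓝 q₀, ContinuousOn (k q) (Ioo 0 (t q)))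
    (h_le : ∀ᶠ q in 𝓝 q₀, ∀ τ ∈ Ioo 0 (t q), |k q τ| ≤ C * betaWeight (t q) τ)
    (hc : ∀ θ ∈ Ioo (0 : ℝ) 1, ContinuousAt (fun q => k q (t q * θ)) q₀) :
    ContinuousAt (fun q => ∫ τ in (0 : ℝ)..(t q), k q τ) q₀ := by
  have h_pos : ∀ᶠ q in 𝓝 q₀, 0 < t q := ht.eventually_const_lt ht₀
  have h_mem : ∀ q, 0 < t q → ∀ θ ∈ Ioo (0 : ℝ) 1, t q * θ ∈ Ioo 0 (t q) := fun q hq θ hθ =>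
    ⟨mul_pos hq hθ.1, mul_lt_of_lt_one_right hq hθ.2⟩
  simp_rw [integral_eq_integral_unit (t _)]
  apply intervalIntegral.continuousAt_of_dominated_interval (bound := fun θ => C * betaWeight 1 θ)
  · filter_upwards [hk, h_pos] with q hq hq₀
    exact aestronglyMeasurable_of_continuousOn_Ioo zero_le_one
      (continuousOn_const.mul (hq.comp (by fun_prop) (h_mem q hq₀)))
  · filter_upwards [h_le, h_pos] with q hq hq₀
    rw [uIoc_of_le zero_le_one]
    refine ae_mem_Ioc_of_forall_mem_Ioo fun θ hθ => ?_
    rw [norm_eq_abs, abs_mul, abs_of_pos hq₀, ← mul_betaWeight_mul hq₀, mul_left_comm]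
    exact mul_le_mul_of_nonneg_left (hq _ (h_mem q hq₀ θ hθ)) hq₀.le
  · exact intervalIntegrable_betaWeight_one.const_mul C
  · rw [uIoc_of_le zero_le_one]
    exact ae_mem_Ioc_of_forall_mem_Ioo fun θ hθ => ht.mul (hc θ hθ)
/-! ### Layer potentials -/

lemma continuousOn_kernel_comp_curve {k : ℝ → ℝ → ℝ} {c : ℝ → ℝ} (hc : Continuous c) {t x : ℝ}
    (hk : ∀ r z, r ≠ 0 ∨ z ≠ 0 → ContinuousAt (fun q : ℝ × ℝ => k q.1 q.2) (r, z)) :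
    ContinuousOn (fun τ => k (t - τ) (x - c τ)) (Iio t) := fun τ hτ =>
  (ContinuousAt.comp (g := fun q : ℝ × ℝ => k q.1 q.2) (f := fun τ : ℝ => (t - τ, x - c τ))
    (hk _ _ (Or.inl (sub_pos.2 hτ).ne')) (by fun_prop)).continuousWithinAt

section HeatKernelXTimeIntegral

variable {d δ : ℝ}

lemma intervalIntegrable_abs_heatKernelX_two_mul (d δ : ℝ) :
    IntervalIntegrable (fun r => |heatKernelX (2 * r) d|) volume 0 δ := by
  rcases eq_or_ne d 0 with rfl | hd
  · simp [heatKernelX_zero]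
  · have hc : Continuous fun r => heatKernelX (2 * r) d := continuous_iff_continuousAt.2 fun r =>
      ContinuousAt.comp (g := fun q : ℝ × ℝ => heatKernelX q.1 q.2) (f := fun r : ℝ => (2 * r, d))
        (continuousAt_heatKernelX (Or.inr hd)) (by fun_prop)
    exact hc.abs.intervalIntegrable 0 δ

lemma heatKernelX_nonpos {r z : ℝ} (hr : 0 ≤ r) (hz : 0 ≤ z) : heatKernelX r z ≤ 0 := by
  rw [heatKernelX, neg_mul]
  exact neg_nonpos.2 (mul_nonneg (by positivity) (heatKernel_nonneg r z))

-- For `d > 0` the integrand is `-(1/2) d/dr heatStep (2 r) d`.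
lemma integral_abs_heatKernelX_two_mul_le_of_pos (hd : 0 < d) (hδ : 0 ≤ δ) :
    ∫ r in (0 : ℝ)..δ, |heatKernelX (2 * r) d| ≤ 1 := by
  have h_cont : ContinuousOn (fun r => -(1 / 2) * heatStep (2 * r) d) (Icc 0 δ) := fun r hr => by
    refine (continuousAt_const.mul (ContinuousAt.comp (g := fun q : ℝ × ℝ => heatStep q.1 q.2)
      (f := fun r : ℝ => (2 * r, d)) (continuousAt_heatStep ?_) (by fun_prop))).continuousWithinAt
    rcases hr.1.eq_or_lt with h | h
    · exact Or.inr ⟨by linarith, hd.ne'⟩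
    · exact Or.inl (by linarith)
  have h_deriv : ∀ r ∈ Ioo 0 δ,
      HasDerivAt (fun r => -(1 / 2) * heatStep (2 * r) d) |heatKernelX (2 * r) d| r := by
    intro r hr
    have h_two : HasDerivAt (fun r : ℝ => 2 * r) 2 r := by
      simpa using (hasDerivAt_id r).const_mul 2
    have h_pos : 0 < 2 * r := by linarith [hr.1]
    refine (((hasDerivAt_heatStep_time h_pos d).comp r h_two).const_mul (-(1 / 2))).congr_deriv ?_
    rw [abs_of_nonpos (heatKernelX_nonpos h_pos.le hd.le)]
    ring
  rw [intervalIntegral.integral_eq_sub_of_hasDerivAt_of_le hδ h_cont h_deriv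
    (intervalIntegrable_abs_heatKernelX_two_mul d δ), mul_zero]
  have h_end := heatStep_mem_Icc (2 * δ) d
  have h_start := heatStep_mem_Icc 0 d
  linarith [h_end.1, h_start.2]

lemma integral_abs_heatKernelX_two_mul_le_one (d : ℝ) (hδ : 0 ≤ δ) :
    ∫ r in (0 : ℝ)..δ, |heatKernelX (2 * r) d| ≤ 1 := by
  rcases lt_trichotomy d 0 with hd | rfl | hd
  · simpa only [heatKernelX_neg, abs_neg] using
      integral_abs_heatKernelX_two_mul_le_of_pos (neg_pos.2 hd) hδ
  · simp [heatKernelX_zero]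
  · exact integral_abs_heatKernelX_two_mul_le_of_pos hd hδ

end HeatKernelXTimeIntegral

section Majorant

variable {r d e L : ℝ}

lemma heatKernel_two_mul (r d : ℝ) :
    √2 * heatKernel (2 * r) d = (√(4 * π * r))⁻¹ * exp (-(d ^ 2 / 2 / (4 * r))) := by
  have h_sqrt : √(4 * π * (2 * r)) = √2 * √(4 * π * r) := by
    rw [← sqrt_mul zero_le_two]; ring_nf
  have h_exp : d ^ 2 / (4 * (2 * r)) = d ^ 2 / 2 / (4 * r) := by
    rw [div_div]; ring_nf
  rw [heatKernel, h_sqrt, mul_inv, h_exp, ← mul_assoc, mul_inv_cancel_left₀ (by positivity)]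

lemma heatKernel_add_le (hr : 0 < r) (hr1 : r ≤ 1) (he : |e| ≤ L * r) :
    heatKernel r (d + e) ≤ √2 * exp (L ^ 2) * heatKernel (2 * r) d := by
  have h_sq : e ^ 2 ≤ (L * r) ^ 2 := sq_le_sq' (neg_le_of_abs_le he) (le_of_abs_le he)
  have h_exponent : -((d + e) ^ 2 / (4 * r)) ≤ L ^ 2 + -(d ^ 2 / 2 / (4 * r)) := by
    have hL : L ^ 2 = 4 * L ^ 2 * r / (4 * r) := by field_simp
    rw [hL, ← sub_eq_add_neg, ← sub_div, ← neg_div]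
    gcongr
    nlinarith [sq_nonneg (d + 2 * e), mul_nonneg (sq_nonneg L) hr.le,
      mul_nonneg (mul_nonneg (sq_nonneg L) hr.le) (sub_nonneg.2 hr1)]
  calc heatKernel r (d + e)
      ≤ (√(4 * π * r))⁻¹ * exp (L ^ 2 + -(d ^ 2 / 2 / (4 * r))) := by
        unfold heatKernel; gcongr
    _ = exp (L ^ 2) * (√2 * heatKernel (2 * r) d) := by rw [heatKernel_two_mul, exp_add]; ring
    _ = √2 * exp (L ^ 2) * heatKernel (2 * r) d := by ring

/-- The majorant of `|heatKernelX r (d + e)|` over all displacements `|e| ≤ L r`; its integral in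
`r` is bounded uniformly in `d`. -/
def heatKernelXMajorant (L d r : ℝ) : ℝ :=
  L * (√r)⁻¹ + 2 * √2 * exp (L ^ 2) * |heatKernelX (2 * r) d|

lemma abs_heatKernelX_add_le (hr : 0 < r) (hr1 : r ≤ 1) (he : |e| ≤ L * r) :
    |heatKernelX r (d + e)| ≤ heatKernelXMajorant L d r := by
  have hL : 0 ≤ L := nonneg_of_mul_nonneg_left ((abs_nonneg e).trans he) hr
  have h_factor : |d + e| / (2 * r) ≤ |d| / (2 * r) + L := by
    rw [div_add' _ _ _ (by positivity)]
    gcongr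
    nlinarith [abs_add_le d e, mul_nonneg hL hr.le]
  rw [heatKernelXMajorant, abs_heatKernelX hr.le, abs_heatKernelX (by positivity)]
  calc |d + e| / (2 * r) * heatKernel r (d + e)
      ≤ (|d| / (2 * r) + L) * heatKernel r (d + e) :=
        mul_le_mul_of_nonneg_right h_factor (heatKernel_nonneg _ _)
    _ = |d| / (2 * r) * heatKernel r (d + e) + L * heatKernel r (d + e) := add_mul _ _ _
    _ ≤ |d| / (2 * r) * (√2 * exp (L ^ 2) * heatKernel (2 * r) d) + L * (√r)⁻¹ := by
        gcongr
        · exact heatKernel_add_le hr hr1 he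
        · exact heatKernel_le _ _
    _ = _ := by field_simp; ring

lemma intervalIntegrable_heatKernelXMajorant (L d δ : ℝ) :
    IntervalIntegrable (heatKernelXMajorant L d) volume 0 δ :=
  ((intervalIntegrable_inv_sqrt 0 δ).const_mul L).add
    ((intervalIntegrable_abs_heatKernelX_two_mul d δ).const_mul _)

lemma integral_heatKernelXMajorant_le {δ : ℝ} (hL : 0 ≤ L) (d : ℝ) (hδ : δ ∈ Icc 0 1) :
    ∫ r in (0 : ℝ)..δ, heatKernelXMajorant L d r ≤ 2 * L + 2 * √2 * exp (L ^ 2) := by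
  have h_eq : ∫ r in (0 : ℝ)..δ, heatKernelXMajorant L d r =
      L * (2 * √δ) + 2 * √2 * exp (L ^ 2) * ∫ r in (0 : ℝ)..δ, |heatKernelX (2 * r) d| := by
    rw [← integral_inv_sqrt hδ.1, ← intervalIntegral.integral_const_mul,
      ← intervalIntegral.integral_const_mul]
    exact intervalIntegral.integral_add ((intervalIntegrable_inv_sqrt 0 δ).const_mul L)
      ((intervalIntegrable_abs_heatKernelX_two_mul d δ).const_mul _)
  calc _ = _ := h_eq
    _ ≤ L * (2 * 1) + 2 * √2 * exp (L ^ 2) * 1 := by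
        gcongr
        · exact sqrt_le_one.2 hδ.2
        · exact integral_abs_heatKernelX_two_mul_le_one d hδ.1
    _ = 2 * L + 2 * √2 * exp (L ^ 2) := by ring

end Majorant

section NearCurve

variable {c : ℝ → ℝ} {t t₁ L : ℝ}

lemma abs_heatKernelX_sub_curve_le (h_len : t - t₁ ≤ 1)
    (h_lip : ∀ τ ∈ Ioo t₁ t, |c t - c τ| ≤ L * (t - τ)) (x : ℝ) :
    ∀ τ ∈ Ioo t₁ t, |heatKernelX (t - τ) (x - c τ)| ≤ heatKernelXMajorant L (x - c t) (t - τ) := by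
  intro τ hτ
  rw [← sub_add_sub_cancel x (c t) (c τ)]
  exact abs_heatKernelX_add_le (by linarith [hτ.2]) (by linarith [hτ.1]) (h_lip τ hτ)

lemma intervalIntegrable_heatKernelXMajorant_sub (L d : ℝ) :
    IntervalIntegrable (fun τ => heatKernelXMajorant L d (t - τ)) volume t₁ t := by
  simpa using ((intervalIntegrable_heatKernelXMajorant L d (t - t₁)).comp_sub_left t).symm

lemma intervalIntegrable_heatKernelX_curve_near (hc : Continuous c) (ht : t₁ < t)
    (h_len : t - t₁ ≤ 1) (h_lip : ∀ τ ∈ Ioo t₁ t, |c t - c τ| ≤ L * (t - τ)) (x : ℝ) :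
    IntervalIntegrable (fun τ => heatKernelX (t - τ) (x - c τ)) volume t₁ t := by
  refine (intervalIntegrable_heatKernelXMajorant_sub L (x - c t)).mono_fun'
    (aestronglyMeasurable_of_continuousOn_Ioo ht.le
      ((continuousOn_kernel_comp_curve hc fun _ _ => continuousAt_heatKernelX).mono
        Ioo_subset_Iio_self)) ?_
  rw [uIoc_of_le ht.le]
  exact (ae_restrict_iff' measurableSet_Ioc).2
    (ae_mem_Ioc_of_forall_mem_Ioo (abs_heatKernelX_sub_curve_le h_len h_lip x))

lemma integral_abs_heatKernelX_curve_near_le (hc : Continuous c) (ht : t₁ < t)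
    (h_len : t - t₁ ≤ 1) (hL : 0 ≤ L) (h_lip : ∀ τ ∈ Ioo t₁ t, |c t - c τ| ≤ L * (t - τ))
    (x : ℝ) :
    ∫ τ in t₁..t, |heatKernelX (t - τ) (x - c τ)| ≤ 2 * L + 2 * √2 * exp (L ^ 2) := by
  calc ∫ τ in t₁..t, |heatKernelX (t - τ) (x - c τ)|
      ≤ ∫ τ in t₁..t, heatKernelXMajorant L (x - c t) (t - τ) :=
        intervalIntegral.integral_mono_on_of_le_Ioo ht.le
          (intervalIntegrable_heatKernelX_curve_near hc ht h_len h_lip x).abs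
          (intervalIntegrable_heatKernelXMajorant_sub L _)
          (abs_heatKernelX_sub_curve_le h_len h_lip x)
    _ = ∫ r in (0 : ℝ)..t - t₁, heatKernelXMajorant L (x - c t) r := by
        rw [intervalIntegral.integral_comp_sub_left _ t, sub_self]
    _ ≤ 2 * L + 2 * √2 * exp (L ^ 2) :=
        integral_heatKernelXMajorant_le hL _ ⟨by linarith, h_len⟩

end NearCurve

/-- A density on `(0, ∞)` with at most an inverse square root singularity at `0`, of size `K` on
`(0, 1]`. -/
structure SqrtSingular (K : ℝ) (f : ℝ → ℝ) : Prop where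
  continuousOn : ContinuousOn f (Ioi 0)
  abs_le : ∀ τ ∈ Ioc (0 : ℝ) 1, |f τ| ≤ K * (√τ)⁻¹

/-- A curve `c` whose derivative `b` on `(0, ∞)` is a `SqrtSingular` density. -/
structure SqrtSingularCurve (K : ℝ) (c b : ℝ → ℝ) : Prop where
  continuous : Continuous c
  hasDerivAt : ∀ τ, 0 < τ → HasDerivAt c (b τ) τ
  sqrtSingular : SqrtSingular K b

/-- The single layer heat potential with density `f` on the curve `x = c t`. -/
def singleLayer (c f : ℝ → ℝ) (t x : ℝ) : ℝ :=
  ∫ τ in (0 : ℝ)..t, heatKernel (t - τ) (x - c τ) * f τ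

/-- The space derivative of `singleLayer`, taken under the integral sign. -/
def singleLayerX (c f : ℝ → ℝ) (t x : ℝ) : ℝ :=
  ∫ τ in (0 : ℝ)..t, heatKernelX (t - τ) (x - c τ) * f τ

section Densities

variable {K K' : ℝ} {c b f : ℝ → ℝ} {t t₀ : ℝ}

lemma SqrtSingular.continuousAt (hf : SqrtSingular K f) (ht : 0 < t) : ContinuousAt f t :=
  hf.continuousOn.continuousAt (Ioi_mem_nhds ht)

lemma SqrtSingular.intervalIntegrable (hf : SqrtSingular K f) (ht₀ : 0 ≤ t) (ht₁ : t ≤ 1) :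
    IntervalIntegrable f volume 0 t := by
  refine ((intervalIntegrable_inv_sqrt 0 t).const_mul K).mono_fun'
    (aestronglyMeasurable_of_continuousOn_Ioo ht₀ (hf.continuousOn.mono Ioo_subset_Ioi_self)) ?_
  rw [uIoc_of_le ht₀]
  exact (ae_restrict_iff' measurableSet_Ioc).2 (Eventually.of_forall fun τ hτ =>
    hf.abs_le τ ⟨hτ.1, hτ.2.trans ht₁⟩)

lemma SqrtSingularCurve.exists_lipschitz_near (hc : SqrtSingularCurve K c b) (ht₀ : 0 < t₀) :
    ∃ L, 0 ≤ L ∧ ∀ t ∈ Icc (t₀ / 2) (2 * t₀), ∀ τ ∈ Icc (t₀ / 2) (2 * t₀),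
      |c t - c τ| ≤ L * |t - τ| := by
  have h_pos : ∀ x ∈ Icc (t₀ / 2) (2 * t₀), 0 < x := fun x hx => (half_pos ht₀).trans_le hx.1
  obtain ⟨L, hL⟩ := isCompact_Icc.exists_bound_of_continuousOn
    (hc.sqrtSingular.continuousOn.mono h_pos)
  refine ⟨L, (norm_nonneg _).trans (hL t₀ ⟨by linarith, by linarith⟩), fun t ht τ hτ => ?_⟩
  exact (convex_Icc (t₀ / 2) (2 * t₀)).norm_image_sub_le_of_norm_hasDerivWithin_le
    (fun x hx => (hc.hasDerivAt x (h_pos x hx)).hasDerivWithinAt) hL hτ ht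

lemma SqrtSingularCurve.exists_integral_abs_heatKernelX_le (hc : SqrtSingularCurve K c b)
    (ht₀ : 0 < t₀) :
    ∃ C, 0 ≤ C ∧ ∀ t ∈ Ioo (t₀ / 2) (min 1 (2 * t₀)), ∀ t₁ ∈ Ico (t₀ / 2) t, ∀ x,
      IntervalIntegrable (fun τ => heatKernelX (t - τ) (x - c τ)) volume t₁ t ∧
      ∫ τ in t₁..t, |heatKernelX (t - τ) (x - c τ)| ≤ C := by
  obtain ⟨L, hL₀, hL⟩ := hc.exists_lipschitz_near ht₀
  refine ⟨2 * L + 2 * √2 * exp (L ^ 2), by positivity, fun t ht t₁ ht₁ x => ?_⟩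
  have h_len : t - t₁ ≤ 1 := by linarith [ht.2.trans_le (min_le_left _ _), ht₁.1]
  have h_lip : ∀ τ ∈ Ioo t₁ t, |c t - c τ| ≤ L * (t - τ) := by
    intro τ hτ
    have ht₂ := ht.2.trans_le (min_le_right _ _)
    have h := hL t ⟨ht.1.le, ht₂.le⟩ τ ⟨ht₁.1.trans hτ.1.le, (hτ.2.trans ht₂).le⟩
    rwa [abs_of_pos (sub_pos.2 hτ.2)] at h
  exact ⟨intervalIntegrable_heatKernelX_curve_near hc.continuous ht₁.2 h_len h_lip x,
    integral_abs_heatKernelX_curve_near_le hc.continuous ht₁.2 h_len hL₀ h_lip x⟩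

lemma intervalIntegrable_heatKernelX_mul (hc : SqrtSingularCurve K c b) (hf : SqrtSingular K' f)
    (ht₀ : 0 < t) (ht₁ : t < 1) (x : ℝ) :
    IntervalIntegrable (fun τ => heatKernelX (t - τ) (x - c τ) * f τ) volume 0 t := by
  obtain ⟨C, -, hC⟩ := hc.exists_integral_abs_heatKernelX_le ht₀
  have h_far : IntervalIntegrable (fun τ => heatKernelX (t - τ) (x - c τ) * f τ) volume
      0 (t / 2) := by
    refine (hf.intervalIntegrable (by linarith) (by linarith)).continuousOn_mul ?_
    rw [uIcc_of_le (by linarith)]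
    exact (continuousOn_kernel_comp_curve hc.continuous fun _ _ => continuousAt_heatKernelX).mono
      fun y hy => hy.2.trans_lt (half_lt_self ht₀)
  have h_near : IntervalIntegrable (fun τ => heatKernelX (t - τ) (x - c τ) * f τ) volume
      (t / 2) t := by
    refine (hC t ⟨by linarith, lt_min ht₁ (by linarith)⟩ (t / 2) ⟨le_rfl, by linarith⟩
      x).1.mul_continuousOn (hf.continuousOn.mono ?_)
    rw [uIcc_of_le (by linarith)]
    exact fun y hy => (half_pos ht₀).trans_le hy.1
  exact h_far.trans h_near

lemma abs_heatKernel_mul_le_betaWeight (hf : SqrtSingular K f) (ht₁ : t ≤ 1) {x : ℝ} :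
    ∀ τ ∈ Ioo 0 t, |heatKernel (t - τ) (x - c τ) * f τ| ≤ K * betaWeight t τ := by
  intro τ hτ
  have hfτ := hf.abs_le τ ⟨hτ.1, hτ.2.le.trans ht₁⟩
  rw [abs_mul, abs_of_nonneg (heatKernel_nonneg _ _), mul_comm, betaWeight, ← mul_assoc]
  exact mul_le_mul hfτ (heatKernel_le _ _) (heatKernel_nonneg _ _) ((abs_nonneg _).trans hfτ)

lemma continuousOn_heatKernel_mul (hc : Continuous c) (hf : SqrtSingular K f) {x : ℝ} :
    ContinuousOn (fun τ => heatKernel (t - τ) (x - c τ) * f τ) (Ioo 0 t) :=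
  ((continuousOn_kernel_comp_curve hc fun _ _ => continuousAt_heatKernel).mono
    Ioo_subset_Iio_self).mul (hf.continuousOn.mono Ioo_subset_Ioi_self)

lemma intervalIntegrable_heatKernel_mul (hc : Continuous c) (hf : SqrtSingular K f)
    (ht₀ : 0 < t) (ht₁ : t ≤ 1) (x : ℝ) :
    IntervalIntegrable (fun τ => heatKernel (t - τ) (x - c τ) * f τ) volume 0 t :=
  intervalIntegrable_of_le_betaWeight ht₀ (continuousOn_heatKernel_mul hc hf)
    (abs_heatKernel_mul_le_betaWeight hf ht₁)

lemma continuousAt_singleLayer (hc : Continuous c) (hf : SqrtSingular K f) (ht₀ : 0 < t)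
    (ht₁ : t < 1) (x : ℝ) :
    ContinuousAt (fun q : ℝ × ℝ => singleLayer c f q.1 q.2) (t, x) := by
  have h_lt : ∀ᶠ q : ℝ × ℝ in 𝓝 (t, x), q.1 < 1 := continuousAt_fst.eventually_lt_const ht₁
  refine continuousAt_integral_of_le_betaWeight (t := fun q : ℝ × ℝ => q.1) continuousAt_fst ht₀
    (Eventually.of_forall fun q => continuousOn_heatKernel_mul hc hf)
    (h_lt.mono fun q hq => abs_heatKernel_mul_le_betaWeight hf hq.le) fun θ hθ => ?_
  have h_sub : 0 < t - t * θ := sub_pos.2 (mul_lt_of_lt_one_right ht₀ hθ.2)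
  exact (ContinuousAt.comp (g := fun q : ℝ × ℝ => heatKernel q.1 q.2)
      (f := fun q : ℝ × ℝ => (q.1 - q.1 * θ, q.2 - c (q.1 * θ)))
      (continuousAt_heatKernel (Or.inl h_sub.ne')) (by fun_prop)).mul
    (ContinuousAt.comp (g := f) (f := fun q : ℝ × ℝ => q.1 * θ)
      (hf.continuousAt (mul_pos ht₀ hθ.1)) (by fun_prop))

end Densities
/-! ### The jump relation -/

section JumpRelation

variable {K K' : ℝ} {c b f : ℝ → ℝ} {t x : ℝ}

lemma hasDerivAt_heatStep_sub_curve {τ : ℝ} (hτ : τ < t) (hc : HasDerivAt c (b τ) τ) :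
    HasDerivAt (fun τ => heatStep (t - τ) (x - c τ))
      (-heatKernelX (t - τ) (x - c τ) - heatKernel (t - τ) (x - c τ) * b τ) τ := by
  have hr : 0 < t - τ := sub_pos.2 hτ
  have h_eq : (fun τ => heatStep (t - τ) (x - c τ)) =ᶠ[𝓝 τ]
      fun τ => normalizedErf ((x - c τ) / (2 * √(t - τ))) := by
    filter_upwards [Iio_mem_nhds hτ] with q hq using heatStep_of_pos (sub_pos.2 hq) _
  refine HasDerivAt.congr_of_eventuallyEq ?_ h_eq
  have hs : √(t - τ) ≠ 0 := (sqrt_pos.2 hr).ne'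
  have h_num : HasDerivAt (fun τ => x - c τ) (-(b τ)) τ := by simpa using hc.const_sub x
  have h_time : HasDerivAt (fun τ : ℝ => t - τ) (-1) τ := by
    simpa using (hasDerivAt_id τ).const_sub t
  have h_den : HasDerivAt (fun τ => 2 * √(t - τ)) (2 * (-1 / (2 * √(t - τ)))) τ :=
    (h_time.sqrt hr.ne').const_mul 2
  refine ((hasDerivAt_normalizedErf _).comp τ
    (h_num.div h_den (by positivity))).congr_deriv ?_
  have hsq : √(t - τ) ^ 2 = t - τ := sq_sqrt hr.le
  rw [heatKernelX, heatKernel_eq_exp_div_sqrt_sq hr]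
  generalize exp (-((x - c τ) / (2 * √(t - τ))) ^ 2) = E
  generalize √(t - τ) = w at *
  rw [← hsq]
  field_simp
  ring_nf

lemma abs_heatStep_sub_half_le {r : ℝ} (hr : 0 < r) (z : ℝ) :
    |heatStep r z - 1 / 2| ≤ (√r)⁻¹ * |z| := by
  have h_zero : heatStep r 0 = 1 / 2 := by
    have h := heatStep_neg r 0
    rw [neg_zero] at h
    linarith
  have h := convex_univ.norm_image_sub_le_of_norm_hasDerivWithin_le (x := 0) (y := z)
    (fun y _ => (hasDerivAt_heatStep hr y).hasDerivWithinAt)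
    (fun y _ => ((abs_of_nonneg (heatKernel_nonneg r y)).trans_le (heatKernel_le r y)))
    (mem_univ _) (mem_univ _)
  simpa only [h_zero, sub_zero, norm_eq_abs] using h

lemma continuousWithinAt_heatStep_sub_curve_end (hc : SqrtSingularCurve K c b) (ht : 0 < t) :
    ContinuousWithinAt (fun τ => heatStep (t - τ) (c t - c τ)) (Iic t) t := by
  obtain ⟨L, -, hL⟩ := hc.exists_lipschitz_near ht
  have h_le : ∀ᶠ σ in 𝓝[Iic t] t, |heatStep (t - σ) (c t - c σ) - 1 / 2| ≤ L * √(t - σ) := by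
    filter_upwards [self_mem_nhdsWithin,
      mem_nhdsWithin_of_mem_nhds (Ioi_mem_nhds (half_lt_self ht))] with σ hσ (hσ' : t / 2 < σ)
    rcases (mem_Iic.1 hσ).eq_or_lt with rfl | hlt
    · simp [heatStep_of_nonpos, heaviside_zero]
    · have hr : 0 < t - σ := sub_pos.2 hlt
      have h_lip := hL t ⟨by linarith, by linarith⟩ σ ⟨hσ'.le, by linarith⟩
      rw [abs_of_pos hr] at h_lip
      calc |heatStep (t - σ) (c t - c σ) - 1 / 2|
          ≤ (√(t - σ))⁻¹ * |c t - c σ| := abs_heatStep_sub_half_le hr _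
        _ ≤ (√(t - σ))⁻¹ * (L * (t - σ)) := by gcongr
        _ = L * √(t - σ) := by
            nth_rewrite 2 [← mul_self_sqrt hr.le]
            field_simp
  have h_lim : Tendsto (fun σ => L * √(t - σ)) (𝓝[Iic t] t) (𝓝 0) := by
    have h : Continuous fun σ => L * √(t - σ) := by fun_prop
    simpa using (h.tendsto t).mono_left nhdsWithin_le_nhds
  rw [ContinuousWithinAt, sub_self, sub_self, heatStep_of_nonpos le_rfl, heaviside_zero,
    tendsto_iff_norm_sub_tendsto_zero]
  exact squeeze_zero' (Eventually.of_forall fun _ => norm_nonneg _) h_le h_lim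

lemma continuousOn_heatStep_sub_curve (hc : SqrtSingularCurve K c b) (ht : 0 < t) :
    ContinuousOn (fun τ => heatStep (t - τ) (x - c τ)) (Icc 0 t) := by
  have hcont := hc.continuous
  have h_off : ∀ τ, (0 < t - τ ∨ (t - τ = 0 ∧ x - c τ ≠ 0)) →
      ContinuousWithinAt (fun τ => heatStep (t - τ) (x - c τ)) (Icc 0 t) τ := fun τ h =>
    (ContinuousAt.comp (g := fun q : ℝ × ℝ => heatStep q.1 q.2)
      (f := fun σ : ℝ => (t - σ, x - c σ)) (continuousAt_heatStep h)
      (by fun_prop)).continuousWithinAt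
  intro τ hτ
  rcases hτ.2.eq_or_lt with rfl | hlt
  · rcases eq_or_ne x (c τ) with rfl | hx
    · exact (continuousWithinAt_heatStep_sub_curve_end hc ht).mono Icc_subset_Iic_self
    · exact h_off τ (Or.inr ⟨sub_self τ, sub_ne_zero.2 hx⟩)
  · exact h_off τ (Or.inl (sub_pos.2 hlt))

lemma sqrtSingular_one : SqrtSingular 1 fun _ => 1 where
  continuousOn := continuousOn_const
  abs_le τ hτ := by
    rw [abs_one, one_mul, one_le_inv₀ (sqrt_pos.2 hτ.1)]
    exact sqrt_le_one.2 hτ.2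

lemma intervalIntegrable_heatKernelX_curve (hc : SqrtSingularCurve K c b) (ht₀ : 0 < t)
    (ht₁ : t < 1) (x : ℝ) :
    IntervalIntegrable (fun τ => heatKernelX (t - τ) (x - c τ)) volume 0 t := by
  simpa using intervalIntegrable_heatKernelX_mul hc sqrtSingular_one ht₀ ht₁ x

-- The fundamental theorem of calculus for `heatStep (t - τ) (x - c τ)` on `[0, t]`.
lemma integral_heatKernelX_curve (hc : SqrtSingularCurve K c b) (ht₀ : 0 < t) (ht₁ : t < 1)
    (x : ℝ) :
    ∫ τ in (0 : ℝ)..t, heatKernelX (t - τ) (x - c τ) =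
      -singleLayer c b t x + heatStep t (x - c 0) - heaviside (x - c t) := by
  have h_int := intervalIntegrable_heatKernel_mul hc.continuous hc.sqrtSingular ht₀ ht₁.le x
  have h_intX := (intervalIntegrable_heatKernelX_curve hc ht₀ ht₁ x).neg
  have h_ftc := intervalIntegral.integral_eq_sub_of_hasDerivAt_of_le ht₀.le
    (continuousOn_heatStep_sub_curve hc (x := x) ht₀)
    (fun τ hτ => hasDerivAt_heatStep_sub_curve (x := x) hτ.2 (hc.hasDerivAt τ hτ.1))
    (h_intX.sub h_int)
  have h_sub := intervalIntegral.integral_sub h_intX h_int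
  simp only [Pi.neg_apply, intervalIntegral.integral_neg] at h_sub
  rw [h_sub, sub_self, heatStep_of_nonpos le_rfl, sub_zero] at h_ftc
  rw [singleLayer]
  linarith

/-- The derivative `singleLayerX` with its jump `f t` across the curve compensated, so that it is
continuous up to and across the curve. -/
def singleLayerXReg (c f : ℝ → ℝ) (t x : ℝ) : ℝ :=
  singleLayerX c f t x + f t * heaviside (x - c t)

lemma heatKernelX_mul_sub_eq (c f : ℝ → ℝ) (t x : ℝ) :
    (fun τ => heatKernelX (t - τ) (x - c τ) * (f τ - f t)) =
      fun τ => heatKernelX (t - τ) (x - c τ) * f τ - heatKernelX (t - τ) (x - c τ) * f t := by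
  ext; ring

lemma singleLayerXReg_eq (hc : SqrtSingularCurve K c b) (hf : SqrtSingular K' f) (ht₀ : 0 < t)
    (ht₁ : t < 1) (x : ℝ) :
    singleLayerXReg c f t x =
      (∫ τ in (0 : ℝ)..t, heatKernelX (t - τ) (x - c τ) * (f τ - f t)) +
      f t * (-singleLayer c b t x + heatStep t (x - c 0)) := by
  rw [heatKernelX_mul_sub_eq, intervalIntegral.integral_sub
      (intervalIntegrable_heatKernelX_mul hc hf ht₀ ht₁ x)
      ((intervalIntegrable_heatKernelX_curve hc ht₀ ht₁ x).mul_const _),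
    intervalIntegral.integral_mul_const, integral_heatKernelX_curve hc ht₀ ht₁, singleLayerXReg,
    singleLayerX]
  ring

lemma continuousAt_truncated_layer {t₁ : ℝ} (hc : Continuous c) (hf : SqrtSingular K f)
    (ht₁₀ : 0 ≤ t₁) (ht₁ : t₁ ≤ 1) (ht : t₁ < t) (x : ℝ) :
    ContinuousAt (fun q : ℝ × ℝ => curvePotential heatKernelX t₁ id c f q.1 q.2 -
      f q.1 * curvePotential heatKernelX t₁ id c (fun _ => 1) q.1 q.2) (t, x) := by
  have h_pot : ∀ w : ℝ → ℝ, IntervalIntegrable w volume 0 t₁ →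
      ContinuousAt (fun q : ℝ × ℝ => curvePotential heatKernelX t₁ id c w q.1 q.2) (t, x) :=
    fun w hw => continuousAt_curvePotential continuous_id hc hw (O := {z | 0 < z.1})
      (isOpen_lt continuous_const continuous_fst)
      (fun z hz => continuousAt_heatKernelX (Or.inl (ne_of_gt hz)))
      (fun y hy => by
        rw [uIcc_of_le ht₁₀] at hy
        exact sub_pos.2 (hy.2.trans_lt ht))
  have hft : ContinuousAt (fun q : ℝ × ℝ => f q.1) (t, x) :=
    ContinuousAt.comp (g := f) (f := fun q : ℝ × ℝ => q.1) (hf.continuousAt (ht₁₀.trans_lt ht))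
      continuousAt_fst
  exact (h_pot f (hf.intervalIntegrable ht₁₀ ht₁)).sub (hft.mul (h_pot _ (by simp)))

lemma integral_heatKernelX_mul_sub_split {t₁ : ℝ} (hc : SqrtSingularCurve K c b)
    (hf : SqrtSingular K' f) (ht₁ : t₁ ∈ Icc 0 t) (ht : 0 < t) (ht' : t < 1) (x : ℝ) :
    ∫ τ in (0 : ℝ)..t, heatKernelX (t - τ) (x - c τ) * (f τ - f t) =
      (curvePotential heatKernelX t₁ id c f t x -
        f t * curvePotential heatKernelX t₁ id c (fun _ => 1) t x) +
      ∫ τ in t₁..t, heatKernelX (t - τ) (x - c τ) * (f τ - f t) := by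
  have h_int := intervalIntegrable_heatKernelX_mul hc hf ht ht' x
  have h_intX := (intervalIntegrable_heatKernelX_curve hc ht ht' x).mul_const (f t)
  have h_left : uIcc 0 t₁ ⊆ uIcc 0 t := by
    rw [uIcc_of_le ht₁.1, uIcc_of_le ht.le]; exact Icc_subset_Icc_right ht₁.2
  have h_right : uIcc t₁ t ⊆ uIcc 0 t := by
    rw [uIcc_of_le ht₁.2, uIcc_of_le ht.le]; exact Icc_subset_Icc_left ht₁.1
  have h_trunc : curvePotential heatKernelX t₁ id c f t x -
      f t * curvePotential heatKernelX t₁ id c (fun _ => 1) t x =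
      ∫ τ in (0 : ℝ)..t₁, heatKernelX (t - τ) (x - c τ) * (f τ - f t) := by
    rw [heatKernelX_mul_sub_eq, intervalIntegral.integral_sub (h_int.mono_set h_left)
      (h_intX.mono_set h_left), intervalIntegral.integral_mul_const]
    simp only [curvePotential, mul_one, id, mul_comm]
  have h_diff := h_int.sub h_intX
  rw [← heatKernelX_mul_sub_eq] at h_diff
  rw [h_trunc, intervalIntegral.integral_add_adjacent_intervals (h_diff.mono_set h_left)
    (h_diff.mono_set h_right)]

lemma abs_integral_heatKernelX_mul_sub_le {t₁ C η : ℝ} (ht : t₁ ≤ t) (hη : 0 ≤ η)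
    (h_int : IntervalIntegrable (fun τ => heatKernelX (t - τ) (x - c τ)) volume t₁ t)
    (h_le : ∫ τ in t₁..t, |heatKernelX (t - τ) (x - c τ)| ≤ C)
    (h_osc : ∀ τ ∈ Ioc t₁ t, |f τ - f t| ≤ η) :
    |∫ τ in t₁..t, heatKernelX (t - τ) (x - c τ) * (f τ - f t)| ≤ C * η := by
  refine (intervalIntegral.norm_integral_le_of_norm_le (μ := volume)
    (f := fun τ => heatKernelX (t - τ) (x - c τ) * (f τ - f t))
    (g := fun τ => |heatKernelX (t - τ) (x - c τ)| * η) ht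
    (Eventually.of_forall fun τ hτ => ?_) (h_int.abs.mul_const _)).trans ?_
  · rw [norm_eq_abs, abs_mul]
    exact mul_le_mul_of_nonneg_left (h_osc τ hτ) (abs_nonneg _)
  · rw [intervalIntegral.integral_mul_const]
    exact mul_le_mul_of_nonneg_right h_le hη

-- Near the pole the oscillation of `f` is small, away from it the integral is continuous.
lemma continuousAt_integral_heatKernelX_mul_sub (hc : SqrtSingularCurve K c b)
    (hf : SqrtSingular K' f) (ht₀ : 0 < t) (ht₁ : t < 1) (x : ℝ) :
    ContinuousAt (fun q : ℝ × ℝ =>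
      ∫ τ in (0 : ℝ)..q.1, heatKernelX (q.1 - τ) (q.2 - c τ) * (f τ - f q.1)) (t, x) := by
  obtain ⟨C, hC₀, hC⟩ := hc.exists_integral_abs_heatKernelX_le ht₀
  apply continuousAt_of_locally_uniform_approx_of_continuousAt
  intro u hu
  obtain ⟨ε, hε, hεu⟩ := Metric.mem_uniformity_dist.1 hu
  obtain ⟨η, hη, h_osc⟩ := Metric.continuousAt_iff.1 (hf.continuousAt ht₀)
    (ε / (4 * (C + 1))) (by positivity)
  obtain ⟨δ, hδ₀, hδη, hδt, hδ₁⟩ : ∃ δ, 0 < δ ∧ δ < η ∧ δ ≤ t / 2 ∧ δ ≤ 1 - t := by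
    refine ⟨min (η / 2) (min (t / 2) (1 - t)), by simp [*], ?_, ?_, ?_⟩
    · exact (min_le_left _ _).trans_lt (by linarith)
    · exact (min_le_right _ _).trans (min_le_left _ _)
    · exact (min_le_right _ _).trans (min_le_right _ _)
  refine ⟨{q | q.1 ∈ Ioo (t - δ) (t + δ)}, continuousAt_fst.preimage_mem_nhds
    (Ioo_mem_nhds (by simpa) (by simpa)), _, continuousAt_truncated_layer (t₁ := t - δ)
      hc.continuous hf (by linarith) (by linarith) (by linarith) x, ?_⟩
  rintro ⟨s, y⟩ ⟨hs₁ : t - δ < s, hs₂ : s < t + δ⟩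
  apply hεu
  have h_small : ∀ τ ∈ Ioc (t - δ) s, |f τ - f s| ≤ ε / (2 * (C + 1)) := by
    intro τ hτ
    have hτt := h_osc (x := τ) (by rw [dist_eq, abs_lt]; constructor <;> linarith [hτ.1, hτ.2])
    have hst := h_osc (x := s) (by rw [dist_eq, abs_lt]; constructor <;> linarith)
    have h_half : ε / (2 * (C + 1)) = ε / (4 * (C + 1)) + ε / (4 * (C + 1)) := by
      field_simp; norm_num
    rw [← dist_eq, h_half]
    exact (dist_triangle_right (f τ) (f s) (f t)).trans (add_lt_add hτt hst).le
  obtain ⟨h_int, h_le⟩ := hC s ⟨by linarith, lt_min (by linarith) (by linarith)⟩ (t - δ)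
    ⟨by linarith, hs₁⟩ y
  rw [integral_heatKernelX_mul_sub_split hc hf ⟨by linarith, hs₁.le⟩ (by linarith) (by linarith),
    dist_eq, add_sub_cancel_left]
  refine (abs_integral_heatKernelX_mul_sub_le hs₁.le (by positivity) h_int h_le
    h_small).trans_lt ?_
  rw [← mul_div_assoc, div_lt_iff₀ (by positivity)]
  nlinarith

lemma continuousAt_singleLayerXReg (hc : SqrtSingularCurve K c b) (hf : SqrtSingular K' f)
    (ht₀ : 0 < t) (ht₁ : t < 1) (x : ℝ) :
    ContinuousAt (fun q : ℝ × ℝ => singleLayerXReg c f q.1 q.2) (t, x) := by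
  have h_eq : (fun q : ℝ × ℝ => singleLayerXReg c f q.1 q.2) =ᶠ[𝓝 (t, x)] fun q =>
      (∫ τ in (0 : ℝ)..q.1, heatKernelX (q.1 - τ) (q.2 - c τ) * (f τ - f q.1)) +
      f q.1 * (-singleLayer c b q.1 q.2 + heatStep q.1 (q.2 - c 0)) := by
    have h_lt : ∀ᶠ q : ℝ × ℝ in 𝓝 (t, x), q.1 < 1 := continuousAt_fst.eventually_lt_const ht₁
    have h_gt : ∀ᶠ q : ℝ × ℝ in 𝓝 (t, x), 0 < q.1 := continuousAt_fst.eventually_const_lt ht₀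
    filter_upwards [h_lt, h_gt] with q hlt hgt using singleLayerXReg_eq hc hf hgt hlt q.2
  have hft : ContinuousAt (fun q : ℝ × ℝ => f q.1) (t, x) :=
    ContinuousAt.comp (g := f) (f := fun q : ℝ × ℝ => q.1) (hf.continuousAt ht₀) continuousAt_fst
  have h_step : ContinuousAt (fun q : ℝ × ℝ => heatStep q.1 (q.2 - c 0)) (t, x) :=
    ContinuousAt.comp (g := fun q : ℝ × ℝ => heatStep q.1 q.2)
      (f := fun q : ℝ × ℝ => (q.1, q.2 - c 0)) (continuousAt_heatStep_of_time_pos ht₀)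
      (by fun_prop)
  exact ((continuousAt_integral_heatKernelX_mul_sub hc hf ht₀ ht₁ x).add (hft.mul
    ((continuousAt_singleLayer hc.continuous hc.sqrtSingular ht₀ ht₁ x).neg.add
      h_step))).congr h_eq.symm

end JumpRelation

/-! ### The minimum principle on a region between two curves -/

lemma nonneg_of_isLocalMin_of_hasDerivAt_deriv {f : ℝ → ℝ} {x D : ℝ} (hmin : IsLocalMin f x)
    (hf : ContinuousAt f x) (hD : HasDerivAt (deriv f) D x) : 0 ≤ D := by
  by_contra! hneg
  have hmax : IsLocalMax f x :=
    isLocalMax_of_deriv_deriv_neg (hD.deriv.trans_lt hneg) hmin.deriv_eq_zero hf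
  have hconst : f =ᶠ[𝓝 x] fun _ => f x := by
    filter_upwards [hmin, hmax] with y h₁ h₂ using le_antisymm h₂ h₁
  have hzero : deriv (deriv f) x = 0 := by simp [hconst.deriv.deriv_eq]
  exact hneg.ne (hD.deriv.symm.trans hzero)

lemma nonpos_of_hasDerivAt_of_eventually_le {f : ℝ → ℝ} {x D : ℝ} (h : HasDerivAt f D x)
    (hm : ∀ᶠ y in 𝓝[<] x, f x ≤ f y) : D ≤ 0 := by
  have hslope := (hasDerivWithinAt_iff_tendsto_slope' self_notMem_Iio).1
    (h.hasDerivWithinAt (s := Iio x))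
  refine le_of_tendsto hslope ?_
  filter_upwards [hm, self_mem_nhdsWithin] with y hy hyx
  rw [slope_def_field]
  exact div_nonpos_of_nonneg_of_nonpos (sub_nonneg.2 hy) (sub_nonpos.2 (le_of_lt hyx))

lemma nonneg_of_hasDerivWithinAt_of_eventually_le {f : ℝ → ℝ} {x D : ℝ}
    (h : HasDerivWithinAt f D (Ici x) x) (hm : ∀ᶠ y in 𝓝[>] x, f x ≤ f y) : 0 ≤ D := by
  have hslope := (hasDerivWithinAt_iff_tendsto_slope' self_notMem_Ioi).1
    (h.mono Ioi_subset_Ici_self)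
  refine ge_of_tendsto hslope ?_
  filter_upwards [hm, self_mem_nhdsWithin] with y hy hxy
  rw [slope_def_field]
  exact div_nonneg (sub_nonneg.2 hy) (sub_nonneg.2 (le_of_lt hxy))

/-- The closed space-time region between the curves `x = c t` and `x = d t` for `t ∈ [0, T]`;
points are written `(t, x)`. -/
def curveRegion (T : ℝ) (c d : ℝ → ℝ) : Set (ℝ × ℝ) :=
  {q | q.1 ∈ Icc 0 T ∧ q.2 ∈ Icc (c q.1) (d q.1)}

lemma isCompact_curveRegion {T : ℝ} {c d : ℝ → ℝ} (hc : Continuous c) (hd : Continuous d) :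
    IsCompact (curveRegion T c d) := by
  obtain ⟨A, hA⟩ := isCompact_Icc.exists_bound_of_continuousOn (hc.continuousOn (s := Icc 0 T))
  obtain ⟨B, hB⟩ := isCompact_Icc.exists_bound_of_continuousOn (hd.continuousOn (s := Icc 0 T))
  refine (isCompact_Icc.prod (isCompact_Icc (a := -A) (b := B))).of_isClosed_subset ?_
    fun q ⟨ht, hx⟩ => ⟨ht, ?_, ?_⟩
  · exact (isClosed_Icc.preimage continuous_fst).inter
      ((isClosed_le (by fun_prop) continuous_snd).inter (isClosed_le continuous_snd (by fun_prop)))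
  · exact (neg_le_of_abs_le (hA _ ht)).trans hx.1
  · exact hx.2.trans (le_of_abs_le (hB _ ht))

lemma nonneg_of_strict_supersolution {T : ℝ} {c d : ℝ → ℝ} {w wt wxx : ℝ → ℝ → ℝ}
    (hc : Continuous c) (hd : Continuous d)
    (hw : ContinuousOn (fun q : ℝ × ℝ => w q.1 q.2) (curveRegion T c d))
    (hxx : ∀ t ∈ Ioc 0 T, ∀ x ∈ Ioo (c t) (d t), HasDerivAt (deriv (w t)) (wxx t x) x)
    (ht : ∀ t ∈ Ioc 0 T, ∀ x ∈ Ioo (c t) (d t), HasDerivAt (fun t => w t x) (wt t x) t)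
    (hlt : ∀ t ∈ Ioc 0 T, ∀ x ∈ Ioo (c t) (d t), wxx t x < wt t x)
    (hleft : ∀ t ∈ Ioc 0 T, c t < d t → ∃ m < 0, HasDerivWithinAt (w t) m (Ici (c t)) (c t))
    (hinit : ∀ x ∈ Icc (c 0) (d 0), 0 ≤ w 0 x) (hright : ∀ t ∈ Ioc 0 T, 0 ≤ w t (d t)) :
    ∀ t ∈ Icc 0 T, ∀ x ∈ Icc (c t) (d t), 0 ≤ w t x := by
  intro t₁ ht₁ x₁ hx₁
  obtain ⟨⟨t, x⟩, ⟨htT, hxcd⟩, hmin⟩ :=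
    (isCompact_curveRegion hc hd).exists_isMinOn ⟨(t₁, x₁), ht₁, hx₁⟩ hw
  dsimp only at htT hxcd
  have hmin' : ∀ a ∈ Icc 0 T, ∀ b ∈ Icc (c a) (d a), w t x ≤ w a b :=
    fun a ha b hb => hmin (a := (a, b)) ⟨ha, hb⟩
  refine le_trans ?_ (hmin' t₁ ht₁ x₁ hx₁)
  by_contra! hneg
  have ht₀ : 0 < t := htT.1.lt_of_ne' fun h => by
    subst h; exact hneg.not_ge (hinit x hxcd)
  have htI : t ∈ Ioc 0 T := ⟨ht₀, htT.2⟩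
  have hxd : x < d t := hxcd.2.lt_of_ne fun h => by
    subst h; exact hneg.not_ge (hright t htI)
  have hcx : c t < x := hxcd.1.lt_of_ne fun h => by
    subst h
    obtain ⟨m, hm, hder⟩ := hleft t htI hxd
    refine hm.not_ge (nonneg_of_hasDerivWithinAt_of_eventually_le hder ?_)
    filter_upwards [Ioo_mem_nhdsGT hxd] with y hy using hmin' t htT y ⟨hy.1.le, hy.2.le⟩
  have htime : wt t x ≤ 0 := by
    refine nonpos_of_hasDerivAt_of_eventually_le (ht t htI x ⟨hcx, hxd⟩) ?_
    filter_upwards [nhdsWithin_le_nhds (hc.continuousAt.eventually_lt_const hcx),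
      nhdsWithin_le_nhds (hd.continuousAt.eventually_const_lt hxd), Ioo_mem_nhdsLT ht₀]
      with a hca had ha using hmin' a ⟨ha.1.le, ha.2.le.trans htT.2⟩ x ⟨hca.le, had.le⟩
  have hspace : 0 ≤ wxx t x := by
    have hnhds : Ioo (c t) (d t) ∈ 𝓝 x := Ioo_mem_nhds hcx hxd
    have hcont : ContinuousOn (w t) (Icc (c t) (d t)) :=
      hw.comp (f := fun y => (t, y)) (by fun_prop) fun y hy => ⟨htT, hy⟩
    refine nonneg_of_isLocalMin_of_hasDerivAt_deriv ?_
      (hcont.continuousAt (Icc_mem_nhds hcx hxd)) (hxx t htI x ⟨hcx, hxd⟩)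
    filter_upwards [hnhds] with y hy using hmin' t htT y ⟨hy.1.le, hy.2.le⟩
  exact (hlt t htI x ⟨hcx, hxd⟩).not_ge (htime.trans hspace)

/- The barrier `ε ((x - ρ) ^ 2 + 3 t)` makes a solution a strict supersolution, and its slope at
`x = c t < ρ` is negative. -/
lemma neg_barrier_le_of_heat_equation {T ε ρ : ℝ} {c d : ℝ → ℝ} {v D : ℝ → ℝ → ℝ} (hε : 0 < ε)
    (hc : Continuous c) (hd : Continuous d) (hcρ : ∀ t ∈ Ioc 0 T, c t < ρ)
    (hv : ContinuousOn (fun q : ℝ × ℝ => v q.1 q.2) (curveRegion T c d))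
    (hx : ∀ t ∈ Ioc 0 T, ∀ x ∈ Ioo (c t) (d t), DifferentiableAt ℝ (v t) x)
    (hxx : ∀ t ∈ Ioc 0 T, ∀ x ∈ Ioo (c t) (d t), HasDerivAt (deriv (v t)) (D t x) x)
    (ht : ∀ t ∈ Ioc 0 T, ∀ x ∈ Ioo (c t) (d t), HasDerivAt (fun t => v t x) (D t x) t)
    (hleft : ∀ t ∈ Ioc 0 T, c t < d t → ∃ m ≤ 0, HasDerivWithinAt (v t) m (Ici (c t)) (c t))
    (hinit : ∀ x ∈ Icc (c 0) (d 0), 0 ≤ v 0 x)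
    (hright : ∀ t ∈ Ioc 0 T, -(ε * ((d t - ρ) ^ 2 + 3 * t)) ≤ v t (d t)) :
    ∀ t ∈ Icc 0 T, ∀ x ∈ Icc (c t) (d t), -(ε * ((x - ρ) ^ 2 + 3 * t)) ≤ v t x := by
  have hbarrier : ∀ t x : ℝ,
      HasDerivAt (fun x => ε * ((x - ρ) ^ 2 + 3 * t)) (ε * (2 * (x - ρ))) x := fun t x => by
    simpa using ((((hasDerivAt_id x).sub_const ρ).pow 2).add_const (3 * t)).const_mul ε
  have hnonneg := nonneg_of_strict_supersolution (T := T) (c := c) (d := d)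
    (w := fun t x => v t x + ε * ((x - ρ) ^ 2 + 3 * t)) (wt := fun t x => D t x + ε * 3)
    (wxx := fun t x => D t x + ε * 2) hc hd (hv.add (by fun_prop)) ?_ ?_
    (fun t _ x _ => by linarith) ?_ (fun x hxI => ?_) (fun t ht => by linarith [hright t ht])
  · exact fun t htI x hxI => by linarith [hnonneg t htI x hxI]
  · intro t htI x hxI
    have hderiv : deriv (fun x => v t x + ε * ((x - ρ) ^ 2 + 3 * t)) =ᶠ[𝓝 x]
        fun y => deriv (v t) y + ε * (2 * (y - ρ)) := by
      filter_upwards [isOpen_Ioo.mem_nhds hxI] with y hy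
        using ((hx t htI y hy).hasDerivAt.add (hbarrier t y)).deriv
    refine ((hxx t htI x hxI).add ?_).congr_of_eventuallyEq hderiv
    simpa using (((hasDerivAt_id x).sub_const ρ).const_mul 2).const_mul ε
  · intro t htI x hxI
    refine (ht t htI x hxI).add ?_
    simpa using (((hasDerivAt_id t).const_mul 3).const_add ((x - ρ) ^ 2)).const_mul ε
  · intro t htI hcd
    obtain ⟨m, hm, hder⟩ := hleft t htI hcd
    exact ⟨_, by nlinarith [hcρ t htI], hder.add (hbarrier t (c t)).hasDerivWithinAt⟩
  · have := hinit x hxI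
    positivity

lemma nonneg_of_forall_neg_mul_le {a b : ℝ} (h : ∀ ε > 0, -(ε * b) ≤ a) : 0 ≤ a := by
  have hlim : Tendsto (fun ε : ℝ => -(ε * b)) (𝓝[>] 0) (𝓝 0) :=
    (Continuous.tendsto' (by fun_prop) _ _ (by simp)).mono_left nhdsWithin_le_nhds
  exact le_of_tendsto hlim (eventually_mem_nhdsWithin.mono h)

lemma nonneg_of_heat_equation {T ρ : ℝ} {c d : ℝ → ℝ} {v D : ℝ → ℝ → ℝ}
    (hc : Continuous c) (hd : Continuous d) (hcρ : ∀ t ∈ Ioc 0 T, c t < ρ)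
    (hv : ContinuousOn (fun q : ℝ × ℝ => v q.1 q.2) (curveRegion T c d))
    (hx : ∀ t ∈ Ioc 0 T, ∀ x ∈ Ioo (c t) (d t), DifferentiableAt ℝ (v t) x)
    (hxx : ∀ t ∈ Ioc 0 T, ∀ x ∈ Ioo (c t) (d t), HasDerivAt (deriv (v t)) (D t x) x)
    (ht : ∀ t ∈ Ioc 0 T, ∀ x ∈ Ioo (c t) (d t), HasDerivAt (fun t => v t x) (D t x) t)
    (hleft : ∀ t ∈ Ioc 0 T, c t < d t → ∃ m ≤ 0, HasDerivWithinAt (v t) m (Ici (c t)) (c t))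
    (hinit : ∀ x ∈ Icc (c 0) (d 0), 0 ≤ v 0 x) (hright : ∀ t ∈ Ioc 0 T, 0 ≤ v t (d t)) {t x : ℝ}
    (htT : t ∈ Icc 0 T) (hxcd : x ∈ Icc (c t) (d t)) : 0 ≤ v t x := by
  refine nonneg_of_forall_neg_mul_le fun ε hε => neg_barrier_le_of_heat_equation hε hc hd hcρ hv hx
    hxx ht hleft hinit (fun t ht => (neg_nonpos.2 ?_).trans (hright t ht)) t htT x hxcd
  have := ht.1
  positivity

lemma le_mul_barrier_of_le {ε Q ρ y t : ℝ} (hε : 0 < ε) (ht : 0 ≤ t)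
    (hy : ρ + |Q| / ε + 1 ≤ y) : Q ≤ ε * ((y - ρ) ^ 2 + 3 * t) := by
  have hQε : 0 ≤ |Q| / ε := by positivity
  calc Q ≤ |Q| := le_abs_self Q
    _ = ε * (|Q| / ε) := by field_simp
    _ ≤ ε * ((y - ρ) ^ 2 + 3 * t) := by
      gcongr
      nlinarith

lemma nonneg_of_heat_equation_of_bddBelow {T ρ Q : ℝ} {c : ℝ → ℝ} {v D : ℝ → ℝ → ℝ}
    (hc : Continuous c) (hcρ : ∀ t ∈ Ioc 0 T, c t < ρ)
    (hv : ContinuousOn (fun q : ℝ × ℝ => v q.1 q.2) {q | q.1 ∈ Icc 0 T ∧ c q.1 ≤ q.2})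
    (hx : ∀ t ∈ Ioc 0 T, ∀ x ∈ Ioi (c t), DifferentiableAt ℝ (v t) x)
    (hxx : ∀ t ∈ Ioc 0 T, ∀ x ∈ Ioi (c t), HasDerivAt (deriv (v t)) (D t x) x)
    (ht : ∀ t ∈ Ioc 0 T, ∀ x ∈ Ioi (c t), HasDerivAt (fun t => v t x) (D t x) t)
    (hleft : ∀ t ∈ Ioc 0 T, ∃ m ≤ 0, HasDerivWithinAt (v t) m (Ici (c t)) (c t))
    (hinit : ∀ x ∈ Ici (c 0), 0 ≤ v 0 x) (hbdd : ∀ t ∈ Ioc 0 T, ∀ x, -Q ≤ v t x) {t x : ℝ}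
    (htT : t ∈ Icc 0 T) (hcx : c t ≤ x) : 0 ≤ v t x := by
  refine nonneg_of_forall_neg_mul_le (b := (x - ρ) ^ 2 + 3 * t) fun ε hε => ?_
  refine neg_barrier_le_of_heat_equation (d := fun _ => max x (ρ + |Q| / ε + 1)) hε hc
    continuous_const hcρ (hv.mono fun q hq => ⟨hq.1, hq.2.1⟩) (fun t ht x hxI => hx t ht x hxI.1)
    (fun t ht x hxI => hxx t ht x hxI.1) (fun t htI x hxI => ht t htI x hxI.1)
    (fun t ht _ => hleft t ht) (fun x hxI => hinit x hxI.1) (fun t ht => ?_) t htT x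
    ⟨hcx, le_max_left _ _⟩
  exact (neg_le_neg (le_mul_barrier_of_le hε ht.1.le (le_max_right _ _))).trans (hbdd t ht _)

/-! ### A contraction principle for functions on `(0, R]` -/

open scoped BoundedContinuousFunction

/- Functions on `(0, ∞)` are identified with functions on `ℝ` through `t = exp y`, so that the
contraction acts on a complete space of bounded continuous functions. -/
lemma exists_fixedPoint_of_half_lipschitz {E : Type*} [MetricSpace E] [CompleteSpace E]
    {C : Set E} (hC : IsClosed C) (hCb : Bornology.IsBounded C) (hCne : C.Nonempty) {R : ℝ}
    (hR : 0 < R) (P : (ℝ → E) → ℝ → E)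
    (hcont : ∀ g, ContinuousOn g (Ioi 0) → MapsTo g (Ioi 0) C → ContinuousOn (P g) (Ioc 0 R))
    (hmaps : ∀ g, ContinuousOn g (Ioi 0) → MapsTo g (Ioi 0) C → MapsTo (P g) (Ioc 0 R) C)
    (hlip : ∀ g g' D, ContinuousOn g (Ioi 0) → MapsTo g (Ioi 0) C → ContinuousOn g' (Ioi 0) →
      MapsTo g' (Ioi 0) C → (∀ t, 0 < t → dist (g t) (g' t) ≤ D) →
      ∀ t ∈ Ioc 0 R, dist (P g t) (P g' t) ≤ D / 2) :
    ∃ g, ContinuousOn g (Ioi 0) ∧ MapsTo g (Ioi 0) C ∧ ∀ t ∈ Ioc 0 R, g t = P g t := by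
  have : CompleteSpace C := hC.completeSpace_coe
  have hbdd : BoundedSpace C := boundedSpace_subtype_iff.2 hCb
  have : Inhabited C := ⟨⟨hCne.some, hCne.some_mem⟩⟩
  let ofLog (p : ℝ →ᵇ C) (t : ℝ) : E := p (log t)
  have ofLog_cont (p) : ContinuousOn (ofLog p) (Ioi 0) :=
    continuous_subtype_val.comp_continuousOn
      (p.continuous.comp_continuousOn (continuousOn_log.mono fun t ht => ne_of_gt ht))
  have ofLog_maps (p) : MapsTo (ofLog p) (Ioi 0) C := fun t _ => (p (log t)).2
  have mem_time (y : ℝ) : min (exp y) R ∈ Ioc 0 R := ⟨lt_min (exp_pos y) hR, min_le_right _ _⟩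
  let Φ (p : ℝ →ᵇ C) : ℝ →ᵇ C := BoundedContinuousFunction.mkOfBound
    ⟨fun y => ⟨P (ofLog p) (min (exp y) R), hmaps _ (ofLog_cont p) (ofLog_maps p) (mem_time y)⟩,
      ((hcont _ (ofLog_cont p) (ofLog_maps p)).comp_continuous (by fun_prop) mem_time).subtype_mk _⟩
    (Metric.diam (univ : Set C))
    fun x y => Metric.dist_le_diam_of_mem (Bornology.isBounded_univ.2 hbdd) trivial trivial
  have hΦ : ContractingWith (1 / 2) Φ := by
    refine ⟨by norm_num [← NNReal.coe_lt_coe], LipschitzWith.of_dist_le_mul fun p q => ?_⟩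
    refine (BoundedContinuousFunction.dist_le (by positivity)).2 fun y => ?_
    have hdist := hlip _ _ (dist p q) (ofLog_cont p) (ofLog_maps p) (ofLog_cont q) (ofLog_maps q)
      (fun t _ => BoundedContinuousFunction.dist_coe_le_dist (f := p) (g := q) (log t)) _
      (mem_time y)
    exact hdist.trans_eq (by push_cast; ring)
  obtain ⟨p, hp⟩ : ∃ p, Φ p = p := ⟨_, hΦ.fixedPoint_isFixedPt⟩
  refine ⟨ofLog p, ofLog_cont p, ofLog_maps p, fun t ht => ?_⟩
  calc ofLog p t = Φ p (log t) := by rw [hp]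
    _ = P (ofLog p) (min (exp (log t)) R) := rfl
    _ = P (ofLog p) t := by rw [exp_log ht.1, min_eq_left ht.2]

/-- Functions that are continuous on `(0, ∞)` and bounded by `K` there. -/
structure BoundedOnPos (K : ℝ) (g : ℝ → ℝ) : Prop where
  continuousOn : ContinuousOn g (Ioi 0)
  abs_le : ∀ t, 0 < t → |g t| ≤ K

/-- The set on which the contraction acts: pairs of continuous functions on `(0, ∞)` bounded by
`K` and `H` respectively. -/
structure BoundedPair (K H : ℝ) (g h : ℝ → ℝ) : Prop where
  fst : BoundedOnPos K g
  snd : BoundedOnPos H h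

lemma BoundedPair.exists_fixedPoint {K H R : ℝ} (hK : 0 ≤ K) (hH : 0 ≤ H) (hR : 0 < R)
    (P₁ P₂ : (ℝ → ℝ) → (ℝ → ℝ) → ℝ → ℝ)
    (hcont : ∀ g h, BoundedPair K H g h →
      ContinuousOn (P₁ g h) (Ioc 0 R) ∧ ContinuousOn (P₂ g h) (Ioc 0 R))
    (hbound : ∀ g h, BoundedPair K H g h → ∀ t ∈ Ioc 0 R, |P₁ g h t| ≤ K ∧ |P₂ g h t| ≤ H)
    (hlip : ∀ g h g' h' D, BoundedPair K H g h → BoundedPair K H g' h' →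
      (∀ t, 0 < t → |g t - g' t| ≤ D ∧ |h t - h' t| ≤ D) →
      ∀ t ∈ Ioc 0 R, |P₁ g h t - P₁ g' h' t| ≤ D / 2 ∧ |P₂ g h t - P₂ g' h' t| ≤ D / 2) :
    ∃ g h, BoundedPair K H g h ∧ ∀ t ∈ Ioc 0 R, g t = P₁ g h t ∧ h t = P₂ g h t := by
  let C : Set (ℝ × ℝ) := Icc (-K) K ×ˢ Icc (-H) H
  have pair {f : ℝ → ℝ × ℝ} (hf : ContinuousOn f (Ioi 0)) (hC : MapsTo f (Ioi 0) C) :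
      BoundedPair K H (fun t => (f t).1) (fun t => (f t).2) :=
    ⟨⟨hf.fst, fun t ht => abs_le.2 (hC ht).1⟩, ⟨hf.snd, fun t ht => abs_le.2 (hC ht).2⟩⟩
  obtain ⟨f, hf, hfC, hfix⟩ := exists_fixedPoint_of_half_lipschitz (C := C)
    (isClosed_Icc.prod isClosed_Icc) ((Metric.isBounded_Icc _ _).prod (Metric.isBounded_Icc _ _))
    ⟨0, mem_prod.2 ⟨by simp [hK], by simp [hH]⟩⟩ hR
    (fun f t => (P₁ (fun t => (f t).1) (fun t => (f t).2) t,
      P₂ (fun t => (f t).1) (fun t => (f t).2) t))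
    (fun f hf hfC => (hcont _ _ (pair hf hfC)).1.prodMk (hcont _ _ (pair hf hfC)).2)
    (fun f hf hfC t ht => (hbound _ _ (pair hf hfC) t ht).imp abs_le.1 abs_le.1)
    (fun f f' D hf hfC hf' hfC' hD t ht =>
      max_le_iff.2 (hlip _ _ _ _ D (pair hf hfC) (pair hf' hfC')
        (fun t ht => max_le_iff.1 (hD t ht)) t ht))
  exact ⟨_, _, pair hf hfC, fun t ht => Prod.ext_iff.1 (hfix t ht)⟩

/-! ### The potential of the initial datum -/

lemma measurable_heatStep (t : ℝ) : Measurable (heatStep t) := by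
  unfold heatStep heaviside
  split_ifs with h
  · exact (continuous_normalizedErf.comp (continuous_id.div_const _)).measurable
  · exact Measurable.ite measurableSet_Ioi measurable_const
      (Measurable.ite measurableSet_Iio measurable_const measurable_const)

lemma abs_heatStep_mul_le (t z w : ℝ) : |heatStep t z * w| ≤ |w| := by
  obtain ⟨h₀, h₁⟩ := heatStep_mem_Icc t z
  rw [abs_mul, abs_of_nonneg h₀]
  exact mul_le_of_le_one_left (abs_nonneg w) h₁

lemma intervalIntegrable_heatStep_mul {R : ℝ} {w β : ℝ → ℝ} (hw : IntervalIntegrable w volume 0 R)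
    (hβ : Continuous β) (t x : ℝ) :
    IntervalIntegrable (fun y => heatStep t (x - β y) * w y) volume 0 R :=
  hw.abs.mono_fun' (((measurable_heatStep t).comp (by fun_prop)).aestronglyMeasurable.mul
    hw.def'.aestronglyMeasurable) (Eventually.of_forall fun _ => abs_heatStep_mul_le _ _ _)

lemma continuousAt_curvePotential_heatStep {R : ℝ} {w β : ℝ → ℝ}
    (hw : IntervalIntegrable w volume 0 R) (hβ : Continuous β) {t x : ℝ}
    (hne : ∀ᵐ y : ℝ, x - β y ≠ 0) (ht : 0 ≤ t) :
    ContinuousAt (fun q : ℝ × ℝ => curvePotential heatStep R (fun _ => 0) β w q.1 q.2) (t, x) := by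
  refine intervalIntegral.continuousAt_of_dominated_interval (bound := fun y => |w y|)
    (Eventually.of_forall fun q =>
      (intervalIntegrable_heatStep_mul hw hβ (q.1 - 0) q.2).def'.aestronglyMeasurable)
    (Eventually.of_forall fun q => Eventually.of_forall fun y _ => abs_heatStep_mul_le _ _ _)
    hw.abs ?_
  filter_upwards [hne] with y hy _
  refine ContinuousAt.mul ?_ continuousAt_const
  refine ContinuousAt.comp (g := fun q : ℝ × ℝ => heatStep q.1 q.2)
    (f := fun q : ℝ × ℝ => (q.1 - 0, q.2 - β y)) (continuousAt_heatStep ?_) (by fun_prop)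
  simpa [hy, eq_comm] using ht.lt_or_eq

/-- The potential `∫₀ᴿ (k t (x - y) - k t (x + y)) w y dy`. With `k = heatStep` and `w = φ'` this
is the heat evolution of the even extension of `φ` (when `φ R = 0`); `k = heatKernel` and
`k = heatKernelX` give its first two space derivatives. -/
def oddPotential (k : ℝ → ℝ → ℝ) (R : ℝ) (w : ℝ → ℝ) (t x : ℝ) : ℝ :=
  curvePotential k R (fun _ => 0) (fun y => y) w t x -
    curvePotential k R (fun _ => 0) (fun y => -y) w t x

section OddPotential

variable {R t x : ℝ} {w : ℝ → ℝ}

lemma continuousAt_oddPotential_heatStep (hw : IntervalIntegrable w volume 0 R) (ht : 0 ≤ t) :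
    ContinuousAt (fun q : ℝ × ℝ => oddPotential heatStep R w q.1 q.2) (t, x) := by
  refine (continuousAt_curvePotential_heatStep hw continuous_id ?_ ht).sub
    (continuousAt_curvePotential_heatStep hw continuous_neg ?_ ht)
  · filter_upwards [Measure.ae_ne volume x] with y hy using sub_ne_zero.2 (Ne.symm hy)
  · filter_upwards [Measure.ae_ne volume (-x)] with y hy hxy using hy (by linarith)

lemma isOpen_time_pos : IsOpen {z : ℝ × ℝ | 0 < z.1} := isOpen_lt continuous_const continuous_fst

variable {k k' : ℝ → ℝ → ℝ}

lemma continuousAt_oddPotential (hw : IntervalIntegrable w volume 0 R)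
    (hk : ∀ z : ℝ × ℝ, 0 < z.1 → ContinuousAt (fun z : ℝ × ℝ => k z.1 z.2) z) (ht : 0 < t) :
    ContinuousAt (fun q : ℝ × ℝ => oddPotential k R w q.1 q.2) (t, x) := by
  have half {β : ℝ → ℝ} (hβ : Continuous β) :=
    continuousAt_curvePotential (t := t) (x := x) continuous_const hβ hw isOpen_time_pos hk
      fun _ _ => by simpa using ht
  exact (half continuous_id).sub (half continuous_neg)

lemma hasDerivAt_oddPotential (hw : IntervalIntegrable w volume 0 R)
    (hk : ∀ z : ℝ × ℝ, 0 < z.1 → ContinuousAt (fun z : ℝ × ℝ => k z.1 z.2) z)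
    (hk' : ∀ z : ℝ × ℝ, 0 < z.1 → ContinuousAt (fun z : ℝ × ℝ => k' z.1 z.2) z)
    (hd : ∀ z : ℝ × ℝ, 0 < z.1 → HasDerivAt (k z.1) (k' z.1 z.2) z.2) (ht : 0 < t) :
    HasDerivAt (oddPotential k R w t) (oddPotential k' R w t x) x := by
  have half {β : ℝ → ℝ} (hβ : Continuous β) :=
    hasDerivAt_curvePotential (t := t) (x := x) continuous_const hβ hw isOpen_time_pos hk hk' hd
      fun _ _ => by simpa using ht
  exact (half continuous_id).sub (half continuous_neg)

lemma hasDerivAt_oddPotential_time (hw : IntervalIntegrable w volume 0 R)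
    (hk : ∀ z : ℝ × ℝ, 0 < z.1 → ContinuousAt (fun z : ℝ × ℝ => k z.1 z.2) z)
    (hk' : ∀ z : ℝ × ℝ, 0 < z.1 → ContinuousAt (fun z : ℝ × ℝ => k' z.1 z.2) z)
    (hd : ∀ z : ℝ × ℝ, 0 < z.1 → HasDerivAt (fun r => k r z.2) (k' z.1 z.2) z.1) (ht : 0 < t) :
    HasDerivAt (fun t => oddPotential k R w t x) (oddPotential k' R w t x) t := by
  have half {β : ℝ → ℝ} (hβ : Continuous β) :=
    hasDerivAt_curvePotential_time (t := t) (x := x) continuous_const hβ hw isOpen_time_pos hk hk'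
      hd fun _ _ => by simpa using ht
  exact (half continuous_id).sub (half continuous_neg)

lemma continuousAt_oddPotential_heatKernel (hw : IntervalIntegrable w volume 0 R) (ht : 0 < t) :
    ContinuousAt (fun q : ℝ × ℝ => oddPotential heatKernel R w q.1 q.2) (t, x) :=
  continuousAt_oddPotential hw (fun _ hz => continuousAt_heatKernel (.inl hz.ne')) ht

lemma continuousAt_oddPotential_heatKernelX (hw : IntervalIntegrable w volume 0 R) (ht : 0 < t) :
    ContinuousAt (fun q : ℝ × ℝ => oddPotential heatKernelX R w q.1 q.2) (t, x) :=
  continuousAt_oddPotential hw (fun _ hz => continuousAt_heatKernelX (.inl hz.ne')) ht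

lemma hasDerivAt_oddPotential_heatStep (hw : IntervalIntegrable w volume 0 R) (ht : 0 < t) :
    HasDerivAt (oddPotential heatStep R w t) (oddPotential heatKernel R w t x) x :=
  hasDerivAt_oddPotential hw (fun _ hz => continuousAt_heatStep_of_time_pos hz)
    (fun _ hz => continuousAt_heatKernel (.inl hz.ne')) (fun _ hz => hasDerivAt_heatStep hz _) ht

lemma hasDerivAt_oddPotential_heatKernel (hw : IntervalIntegrable w volume 0 R) (ht : 0 < t) :
    HasDerivAt (oddPotential heatKernel R w t) (oddPotential heatKernelX R w t x) x :=
  hasDerivAt_oddPotential hw (fun _ hz => continuousAt_heatKernel (.inl hz.ne'))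
    (fun _ hz => continuousAt_heatKernelX (.inl hz.ne')) (fun _ _ => hasDerivAt_heatKernel _ _) ht

lemma hasDerivAt_oddPotential_heatStep_time (hw : IntervalIntegrable w volume 0 R) (ht : 0 < t) :
    HasDerivAt (fun t => oddPotential heatStep R w t x) (oddPotential heatKernelX R w t x) t :=
  hasDerivAt_oddPotential_time hw (fun _ hz => continuousAt_heatStep_of_time_pos hz)
    (fun _ hz => continuousAt_heatKernelX (.inl hz.ne'))
    (fun _ hz => hasDerivAt_heatStep_time hz _) ht

lemma oddPotential_heatKernel_zero (R : ℝ) (w : ℝ → ℝ) (t : ℝ) :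
    oddPotential heatKernel R w t 0 = 0 := by
  simp [oddPotential, curvePotential, heatKernel_neg]

lemma oddPotential_heatStep_eq_integral (hw : IntervalIntegrable w volume 0 R) (t x : ℝ) :
    oddPotential heatStep R w t x =
      ∫ y in (0 : ℝ)..R, (heatStep t (x - y) - heatStep t (x + y)) * w y := by
  have hsub := intervalIntegrable_heatStep_mul hw continuous_id t x
  have hadd := intervalIntegrable_heatStep_mul hw continuous_neg t x
  simp only [sub_neg_eq_add, id] at hsub hadd
  simp only [sub_mul]
  rw [intervalIntegral.integral_sub hsub hadd]
  simp [oddPotential, curvePotential]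

/- At time `0` the kernel is the indicator of `y > x`, up to sign. -/
lemma oddPotential_heatStep_time_zero (hw : IntervalIntegrable w volume 0 R) (hx₀ : 0 ≤ x)
    (hxR : x ≤ R) : oddPotential heatStep R w 0 x = -∫ y in x..R, w y := by
  have hintegrable := (intervalIntegrable_heatStep_mul hw continuous_id 0 x).sub
    (intervalIntegrable_heatStep_mul hw continuous_neg 0 x)
  simp only [sub_neg_eq_add, id, ← sub_mul] at hintegrable
  have hinside : ∫ y in (0 : ℝ)..x, (heatStep 0 (x - y) - heatStep 0 (x + y)) * w y = 0 := by
    refine intervalIntegral.integral_zero_ae ?_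
    rw [uIoc_of_le hx₀]
    filter_upwards [Measure.ae_ne volume x] with y hne hy
    rw [heatStep_of_nonpos le_rfl, heatStep_of_nonpos le_rfl,
      heaviside_of_pos (sub_pos.2 (hy.2.lt_of_ne hne)), heaviside_of_pos (by linarith [hy.1]),
      sub_self, zero_mul]
  have houtside : ∫ y in x..R, (heatStep 0 (x - y) - heatStep 0 (x + y)) * w y =
      ∫ y in x..R, -w y := by
    refine intervalIntegral.integral_congr_ae (Eventually.of_forall fun y hy => ?_)
    rw [uIoc_of_le hxR] at hy
    rw [heatStep_of_nonpos le_rfl, heatStep_of_nonpos le_rfl, heaviside_of_neg (sub_neg.2 hy.1),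
      heaviside_of_pos (by linarith [hy.1]), zero_sub, neg_one_mul]
  rw [oddPotential_heatStep_eq_integral hw, ← intervalIntegral.integral_add_adjacent_intervals
    (b := x) (hintegrable.mono_set ?_) (hintegrable.mono_set ?_), hinside, houtside,
    intervalIntegral.integral_neg, zero_add]
  · exact uIcc_subset_uIcc_left (mem_uIcc_of_le hx₀ hxR)
  · exact uIcc_subset_uIcc_right (mem_uIcc_of_le hx₀ hxR)

lemma oddPotential_heatStep_time_zero_of_le (hw : IntervalIntegrable w volume 0 R) (hR : 0 ≤ R)
    (hx : R ≤ x) : oddPotential heatStep R w 0 x = 0 := by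
  rw [oddPotential_heatStep_eq_integral hw]
  refine intervalIntegral.integral_zero_ae ?_
  rw [uIoc_of_le hR]
  filter_upwards [Measure.ae_ne volume R] with y hne hy
  rw [heatStep_of_nonpos le_rfl, heatStep_of_nonpos le_rfl,
    heaviside_of_pos (sub_pos.2 ((hy.2.lt_of_ne hne).trans_le hx)),
    heaviside_of_pos (by linarith [hy.1]), sub_self, zero_mul]

end OddPotential

lemma abs_integral_mul_le_of_integral_sq_le {k w : ℝ → ℝ} {R A B : ℝ} (hR : 0 ≤ R)
    (hk : IntervalIntegrable (fun y => k y ^ 2) volume 0 R)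
    (hw : IntervalIntegrable (fun y => w y ^ 2) volume 0 R) (hA : 0 < A) (hB : 0 < B)
    (hkA : ∫ y in (0 : ℝ)..R, k y ^ 2 ≤ A ^ 2) (hwB : ∫ y in (0 : ℝ)..R, w y ^ 2 ≤ B ^ 2) :
    |∫ y in (0 : ℝ)..R, k y * w y| ≤ A * B := by
  have young (y : ℝ) : |k y * w y| ≤ B / (2 * A) * k y ^ 2 + A / (2 * B) * w y ^ 2 := by
    have hsq : B / (2 * A) * k y ^ 2 + A / (2 * B) * w y ^ 2 =
        ((B * |k y|) ^ 2 + (A * |w y|) ^ 2) / (2 * (A * B)) := by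
      rw [mul_pow, mul_pow, sq_abs, sq_abs]; field_simp
    rw [hsq, abs_mul, le_div_iff₀ (by positivity)]
    nlinarith [sq_nonneg (B * |k y| - A * |w y|)]
  calc |∫ y in (0 : ℝ)..R, k y * w y|
      ≤ ∫ y in (0 : ℝ)..R, (B / (2 * A) * k y ^ 2 + A / (2 * B) * w y ^ 2) :=
        intervalIntegral.norm_integral_le_of_norm_le (f := fun y => k y * w y) hR
          (Eventually.of_forall fun y _ => young y) ((hk.const_mul _).add (hw.const_mul _))
    _ = B / (2 * A) * (∫ y in (0 : ℝ)..R, k y ^ 2) +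
          A / (2 * B) * ∫ y in (0 : ℝ)..R, w y ^ 2 := by
        rw [intervalIntegral.integral_add (hk.const_mul _) (hw.const_mul _),
          intervalIntegral.integral_const_mul, intervalIntegral.integral_const_mul]
    _ ≤ B / (2 * A) * A ^ 2 + A / (2 * B) * B ^ 2 := by gcongr
    _ = A * B := by field_simp; ring

/-- The fourth root, the order of the singularity at `t = 0` of the space derivative of the heat
evolution of a `W^{1,2}` datum. -/
def fourthRoot (t : ℝ) : ℝ := √(√t)

lemma fourthRoot_pos {t : ℝ} (ht : 0 < t) : 0 < fourthRoot t := sqrt_pos.2 (sqrt_pos.2 ht)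

lemma fourthRoot_nonneg (t : ℝ) : 0 ≤ fourthRoot t := sqrt_nonneg _

lemma fourthRoot_sq (t : ℝ) : fourthRoot t ^ 2 = √t := sq_sqrt (sqrt_nonneg _)

lemma fourthRoot_pow_four {t : ℝ} (ht : 0 ≤ t) : fourthRoot t ^ 4 = t := by
  rw [show fourthRoot t ^ 4 = (fourthRoot t ^ 2) ^ 2 by ring, fourthRoot_sq, sq_sqrt ht]

lemma fourthRoot_mono : Monotone fourthRoot := fun _ _ h => sqrt_le_sqrt (sqrt_le_sqrt h)

lemma fourthRoot_le_one {t : ℝ} (h : t ≤ 1) : fourthRoot t ≤ 1 := sqrt_le_one.2 (sqrt_le_one.2 h)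

lemma continuous_fourthRoot : Continuous fourthRoot := by unfold fourthRoot; fun_prop

section L2Bounds

variable {R B t : ℝ} {w : ℝ → ℝ}

lemma abs_oddPotential_heatStep_le (hR : 0 < R) (hw : IntervalIntegrable w volume 0 R)
    (hw₂ : IntervalIntegrable (fun y => w y ^ 2) volume 0 R) (hB : 0 < B)
    (hwB : ∫ y in (0 : ℝ)..R, w y ^ 2 ≤ B ^ 2) (t x : ℝ) :
    |oddPotential heatStep R w t x| ≤ √R * B := by
  rw [oddPotential_heatStep_eq_integral hw]
  have hsq (y : ℝ) : (heatStep t (x - y) - heatStep t (x + y)) ^ 2 ≤ 1 := by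
    obtain ⟨hsub₀, hsub₁⟩ := heatStep_mem_Icc t (x - y)
    obtain ⟨hadd₀, hadd₁⟩ := heatStep_mem_Icc t (x + y)
    rw [sq_le_one_iff_abs_le_one, abs_le]
    constructor <;> linarith
  have hintegrable : IntervalIntegrable (fun y => (heatStep t (x - y) - heatStep t (x + y)) ^ 2)
      volume 0 R := by
    refine (intervalIntegrable_const (c := (1 : ℝ))).mono_fun' ?_
      (Eventually.of_forall fun y => by
        simpa only [norm_of_nonneg (sq_nonneg _)] using hsq y)
    have := measurable_heatStep t
    exact Measurable.aestronglyMeasurable (by fun_prop)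
  refine abs_integral_mul_le_of_integral_sq_le hR.le hintegrable hw₂ (sqrt_pos.2 hR) hB ?_ hwB
  calc ∫ y in (0 : ℝ)..R, (heatStep t (x - y) - heatStep t (x + y)) ^ 2
      ≤ ∫ _ in (0 : ℝ)..R, (1 : ℝ) :=
        intervalIntegral.integral_mono_on hR.le hintegrable intervalIntegrable_const
          fun y _ => hsq y
    _ = √R ^ 2 := by simp [sq_sqrt hR.le]

lemma integral_heatKernel_mul_le_one (hR : 0 ≤ R) (ht : 0 < t) (x : ℝ) {σ : ℝ}
    (hσ : σ = 1 ∨ σ = -1) : ∫ y in (0 : ℝ)..R, heatKernel t (x - σ * y) ≤ 1 := by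
  have heq (y : ℝ) : heatKernel t (x - σ * y) = heatKernel t (σ * x - y) := by
    rcases hσ with rfl | rfl
    · simp
    · rw [← heatKernel_neg]; ring_nf
  simp_rw [heq, intervalIntegral.integral_of_le hR]
  exact setIntegral_heatKernel_sub_le_one ht _ _

lemma abs_oddPotential_le_of_sq_le {k : ℝ → ℝ → ℝ} {A : ℝ} (hR : 0 ≤ R)
    (hw₂ : IntervalIntegrable (fun y => w y ^ 2) volume 0 R) (hB : 0 < B)
    (hwB : ∫ y in (0 : ℝ)..R, w y ^ 2 ≤ B ^ 2) (ht : 0 < t) (hk : Continuous (k t)) (hA : 0 < A)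
    (hkA : ∀ z, k t z ^ 2 ≤ A ^ 2 * heatKernel t z) (x : ℝ) :
    |oddPotential k R w t x| ≤ 2 * B * A := by
  have hK : Continuous (heatKernel t) :=
    continuous_iff_continuousAt.2 fun z => (hasDerivAt_heatKernel t z).continuousAt
  have half {σ : ℝ} (hσ : σ = 1 ∨ σ = -1) :
      |∫ y in (0 : ℝ)..R, k t (x - σ * y) * w y| ≤ A * B := by
    refine abs_integral_mul_le_of_integral_sq_le hR
      (Continuous.intervalIntegrable (by fun_prop) _ _) hw₂ hA hB ?_ hwB
    calc ∫ y in (0 : ℝ)..R, k t (x - σ * y) ^ 2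
        ≤ ∫ y in (0 : ℝ)..R, A ^ 2 * heatKernel t (x - σ * y) :=
          intervalIntegral.integral_mono_on hR (Continuous.intervalIntegrable (by fun_prop) _ _)
            (Continuous.intervalIntegrable (by fun_prop) _ _) fun y _ => hkA _
      _ = A ^ 2 * ∫ y in (0 : ℝ)..R, heatKernel t (x - σ * y) :=
          intervalIntegral.integral_const_mul _ _
      _ ≤ A ^ 2 := mul_le_of_le_one_right (sq_nonneg A) (integral_heatKernel_mul_le_one hR ht x hσ)
  have hsub := half (.inl rfl)
  have hadd := half (.inr rfl)
  simp only [one_mul, neg_one_mul] at hsub hadd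
  simp only [oddPotential, curvePotential, sub_zero]
  exact (abs_sub _ _).trans (by linarith)

lemma abs_oddPotential_heatKernel_le (hR : 0 ≤ R)
    (hw₂ : IntervalIntegrable (fun y => w y ^ 2) volume 0 R) (hB : 0 < B)
    (hwB : ∫ y in (0 : ℝ)..R, w y ^ 2 ≤ B ^ 2) (ht : 0 < t) (x : ℝ) :
    |oddPotential heatKernel R w t x| ≤ 2 * B * (fourthRoot t)⁻¹ := by
  have hr := fourthRoot_pos ht
  refine abs_oddPotential_le_of_sq_le hR hw₂ hB hwB ht
    (continuous_iff_continuousAt.2 fun z => (hasDerivAt_heatKernel t z).continuousAt)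
    (by positivity) (fun z => ?_) x
  rw [inv_pow, fourthRoot_sq]
  exact heatKernel_sq_le _ _

lemma abs_oddPotential_heatKernelX_le (hR : 0 ≤ R)
    (hw₂ : IntervalIntegrable (fun y => w y ^ 2) volume 0 R) (hB : 0 < B)
    (hwB : ∫ y in (0 : ℝ)..R, w y ^ 2 ≤ B ^ 2) (ht : 0 < t) (x : ℝ) :
    |oddPotential heatKernelX R w t x| ≤ 2 * B * (fourthRoot t ^ 3)⁻¹ := by
  have hr := fourthRoot_pos ht
  have hpow : ((fourthRoot t ^ 3)⁻¹) ^ 2 = t⁻¹ * (√t)⁻¹ := by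
    rw [inv_pow, ← mul_inv, ← fourthRoot_sq]
    nth_rw 2 [← fourthRoot_pow_four ht.le]
    ring
  refine abs_oddPotential_le_of_sq_le hR hw₂ hB hwB ht
    (continuous_iff_continuousAt.2 fun z => (hasDerivAt_heatKernelX t z).continuousAt)
    (by positivity) (fun z => ?_) x
  rw [hpow]
  exact heatKernelX_sq_le ht _

lemma abs_oddPotential_heatKernel_sub_le (hR : 0 ≤ R) (hw : IntervalIntegrable w volume 0 R)
    (hw₂ : IntervalIntegrable (fun y => w y ^ 2) volume 0 R) (hB : 0 < B)
    (hwB : ∫ y in (0 : ℝ)..R, w y ^ 2 ≤ B ^ 2) (ht : 0 < t) (x y : ℝ) :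
    |oddPotential heatKernel R w t x - oddPotential heatKernel R w t y| ≤
      2 * B * (fourthRoot t ^ 3)⁻¹ * |x - y| :=
  convex_univ.norm_image_sub_le_of_norm_hasDerivWithin_le
    (fun _ _ => (hasDerivAt_oddPotential_heatKernel hw ht).hasDerivWithinAt)
    (fun z _ => abs_oddPotential_heatKernelX_le hR hw₂ hB hwB ht z) (mem_univ y) (mem_univ x)

end L2Bounds

/-- A nonnegative datum `φ` on `[0, s₀]` vanishing at `s₀`, with weak derivative `w` in `L²`; the
constant `M` controls `s₀`, `1 / s₀` and the `L²` norm of `w`. -/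
structure InitialDatum (M s₀ : ℝ) (φ w : ℝ → ℝ) : Prop where
  pos : 0 < s₀
  le : s₀ ≤ M
  inv_le : s₀⁻¹ ≤ M
  intervalIntegrable : IntervalIntegrable w volume 0 s₀
  intervalIntegrable_sq : IntervalIntegrable (fun y => w y ^ 2) volume 0 s₀
  integral_sq_le : ∫ y in (0 : ℝ)..s₀, w y ^ 2 ≤ M ^ 2
  eq_add_integral : ∀ x ∈ Icc 0 s₀, φ x = φ 0 + ∫ y in (0 : ℝ)..x, w y
  nonneg : ∀ x ∈ Icc 0 s₀, 0 ≤ φ x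
  eq_zero : φ s₀ = 0

namespace InitialDatum

variable {M s₀ t x : ℝ} {φ w : ℝ → ℝ}

lemma const_pos (h : InitialDatum M s₀ φ w) : 0 < M :=
  h.pos.trans_le h.le

lemma oddPotential_time_zero (h : InitialDatum M s₀ φ w) (hx : x ∈ Icc 0 s₀) :
    oddPotential heatStep s₀ w 0 x = φ x := by
  have hsplit := intervalIntegral.integral_interval_sub_left h.intervalIntegrable
    (h.intervalIntegrable.mono_set (uIcc_subset_uIcc_left (mem_uIcc_of_le hx.1 hx.2)))
  have hend := h.eq_add_integral s₀ ⟨h.pos.le, le_rfl⟩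
  rw [h.eq_zero] at hend
  rw [oddPotential_heatStep_time_zero h.intervalIntegrable hx.1 hx.2, h.eq_add_integral x hx]
  linarith

lemma abs_oddPotential_le (h : InitialDatum M s₀ φ w) (t x : ℝ) :
    |oddPotential heatStep s₀ w t x| ≤ M ^ ((3 : ℝ) / 2) := by
  have hpow : M ^ ((3 : ℝ) / 2) = √M * M := by
    rw [sqrt_eq_rpow, ← rpow_add_one h.const_pos.ne']; norm_num
  rw [hpow]
  refine (abs_oddPotential_heatStep_le h.pos h.intervalIntegrable h.intervalIntegrable_sq
    h.const_pos h.integral_sq_le t x).trans ?_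
  gcongr
  exacts [h.const_pos.le, h.le]

end InitialDatum

/-! ### The free boundary generated by a rescaled speed -/

/-- The speed `τ ^ (-1 / 4) * g τ` of the free boundary; `g` is the bounded unknown of the fixed
point problem. -/
def frontSpeed (g : ℝ → ℝ) (τ : ℝ) : ℝ := (fourthRoot τ)⁻¹ * g τ

/-- The free boundary that starts from `s₀` and moves with speed `frontSpeed g`. -/
def freeBoundary (s₀ : ℝ) (g : ℝ → ℝ) (t : ℝ) : ℝ := s₀ + ∫ τ in (0 : ℝ)..t, frontSpeed g τ

lemma fourthRoot_of_nonpos {τ : ℝ} (h : τ ≤ 0) : fourthRoot τ = 0 := by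
  rw [fourthRoot, sqrt_eq_zero_of_nonpos h, sqrt_zero]

lemma inv_fourthRoot_le_inv_sqrt {τ : ℝ} (h₀ : 0 < τ) (h₁ : τ ≤ 1) :
    (fourthRoot τ)⁻¹ ≤ (√τ)⁻¹ := by
  rw [← fourthRoot_sq]
  exact inv_anti₀ (pow_pos (fourthRoot_pos h₀) 2)
    (pow_le_of_le_one (fourthRoot_nonneg τ) (fourthRoot_le_one h₁) two_ne_zero)

lemma inv_fourthRoot_le_one_add_inv_sqrt {τ : ℝ} (hτ : 0 < τ) :
    (fourthRoot τ)⁻¹ ≤ 1 + (√τ)⁻¹ := by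
  have hpos : 0 ≤ (√τ)⁻¹ := by positivity
  rcases le_total τ 1 with h | h
  · linarith [inv_fourthRoot_le_inv_sqrt hτ h]
  · have hle : (fourthRoot τ)⁻¹ ≤ 1 := inv_le_one_of_one_le₀ (one_le_sqrt.2 (one_le_sqrt.2 h))
    linarith

lemma inv_fourthRoot_eq {τ : ℝ} (hτ : 0 < τ) : (fourthRoot τ)⁻¹ = fourthRoot τ * (√τ)⁻¹ := by
  have := fourthRoot_pos hτ
  rw [← fourthRoot_sq]
  field_simp

section Front

variable {K : ℝ} {g : ℝ → ℝ}

lemma BoundedOnPos.const_nonneg (h : BoundedOnPos K g) : 0 ≤ K :=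
  (abs_nonneg _).trans (h.abs_le 1 one_pos)

lemma BoundedOnPos.sub {K' D : ℝ} {g' : ℝ → ℝ} (h : BoundedOnPos K g) (h' : BoundedOnPos K' g')
    (hD : ∀ t, 0 < t → |g t - g' t| ≤ D) : BoundedOnPos D fun τ => g τ - g' τ :=
  ⟨h.continuousOn.sub h'.continuousOn, hD⟩

lemma BoundedOnPos.sqrtSingular (h : BoundedOnPos K g) : SqrtSingular K g :=
  ⟨h.continuousOn, fun τ hτ => (h.abs_le τ hτ.1).trans (le_mul_of_one_le_right h.const_nonneg
    ((one_le_inv₀ (sqrt_pos.2 hτ.1)).2 (sqrt_le_one.2 hτ.2)))⟩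

lemma abs_frontSpeed_le (h : BoundedOnPos K g) {τ : ℝ} (hτ : 0 < τ) :
    |frontSpeed g τ| ≤ K * (fourthRoot τ)⁻¹ := by
  rw [frontSpeed, abs_mul, abs_of_nonneg (inv_nonneg.2 (fourthRoot_nonneg τ)), mul_comm]
  exact mul_le_mul_of_nonneg_right (h.abs_le τ hτ) (inv_nonneg.2 (fourthRoot_nonneg τ))

lemma continuousOn_frontSpeed (h : BoundedOnPos K g) : ContinuousOn (frontSpeed g) (Ioi 0) :=
  (continuous_fourthRoot.continuousOn.inv₀ fun _ hx => (fourthRoot_pos hx).ne').mul h.continuousOn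

lemma sqrtSingular_frontSpeed (h : BoundedOnPos K g) : SqrtSingular K (frontSpeed g) :=
  ⟨continuousOn_frontSpeed h, fun _ hτ => (abs_frontSpeed_le h hτ.1).trans
    (mul_le_mul_of_nonneg_left (inv_fourthRoot_le_inv_sqrt hτ.1 hτ.2) h.const_nonneg)⟩

lemma frontSpeed_of_nonpos {τ : ℝ} (h : τ ≤ 0) : frontSpeed g τ = 0 := by
  rw [frontSpeed, fourthRoot_of_nonpos h, inv_zero, zero_mul]

lemma intervalIntegrable_frontSpeed (h : BoundedOnPos K g) (a b : ℝ) :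
    IntervalIntegrable (frontSpeed g) volume a b := by
  have hmeas : AEStronglyMeasurable (frontSpeed g) volume := by
    have hind : (Ioi 0).indicator (frontSpeed g) = frontSpeed g :=
      indicator_eq_self.2 fun τ hτ => not_le.1 fun hle => hτ (frontSpeed_of_nonpos hle)
    rw [← hind, aestronglyMeasurable_indicator_iff measurableSet_Ioi]
    exact (continuousOn_frontSpeed h).aestronglyMeasurable measurableSet_Ioi
  have hbound : IntervalIntegrable (fun τ => K * (1 + (√τ)⁻¹)) volume a b :=
    (intervalIntegrable_const.add (intervalIntegrable_inv_sqrt a b)).const_mul K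
  refine hbound.mono_fun' hmeas.restrict (Eventually.of_forall fun τ => ?_)
  rcases le_or_gt τ 0 with hτ | hτ
  · have := h.const_nonneg
    simp only [frontSpeed_of_nonpos hτ, norm_zero]
    positivity
  · exact (abs_frontSpeed_le h hτ).trans
      (mul_le_mul_of_nonneg_left (inv_fourthRoot_le_one_add_inv_sqrt hτ) h.const_nonneg)

lemma continuous_freeBoundary (h : BoundedOnPos K g) (s₀ : ℝ) : Continuous (freeBoundary s₀ g) :=
  continuous_const.add (intervalIntegral.continuous_primitive (intervalIntegrable_frontSpeed h) 0)

lemma freeBoundary_zero (s₀ : ℝ) (g : ℝ → ℝ) : freeBoundary s₀ g 0 = s₀ := by simp [freeBoundary]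

lemma hasDerivAt_freeBoundary (h : BoundedOnPos K g) (s₀ : ℝ) {t : ℝ} (ht : 0 < t) :
    HasDerivAt (freeBoundary s₀ g) (frontSpeed g t) t :=
  (intervalIntegral.integral_hasDerivAt_right (intervalIntegrable_frontSpeed h 0 t)
    ((continuousOn_frontSpeed h).stronglyMeasurableAtFilter isOpen_Ioi t ht)
    ((continuousOn_frontSpeed h).continuousAt (Ioi_mem_nhds ht))).const_add s₀

lemma sqrtSingularCurve_freeBoundary (h : BoundedOnPos K g) (s₀ : ℝ) :
    SqrtSingularCurve K (freeBoundary s₀ g) (frontSpeed g) :=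
  ⟨continuous_freeBoundary h s₀, fun _ ht => hasDerivAt_freeBoundary h s₀ ht,
    sqrtSingular_frontSpeed h⟩

lemma SqrtSingularCurve.neg {c b : ℝ → ℝ} (h : SqrtSingularCurve K c b) :
    SqrtSingularCurve K (fun t => -c t) (fun t => -b t) :=
  ⟨h.continuous.neg, fun _ ht => (h.hasDerivAt _ ht).neg, h.sqrtSingular.continuousOn.neg,
    fun τ hτ => by simpa using h.sqrtSingular.abs_le τ hτ⟩

lemma sqrtSingularCurve_zero : SqrtSingularCurve 0 (fun _ => 0) (fun _ => 0) :=
  ⟨continuous_const, fun _ _ => hasDerivAt_const _ _, continuousOn_const, fun τ _ => by simp⟩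

lemma abs_freeBoundary_sub_le (h : BoundedOnPos K g) (s₀ : ℝ) {t τ : ℝ} (hτ : 0 < τ)
    (hτt : τ ≤ t) :
    |freeBoundary s₀ g t - freeBoundary s₀ g τ| ≤ K * (fourthRoot τ)⁻¹ * (t - τ) := by
  have hsub : freeBoundary s₀ g t - freeBoundary s₀ g τ = ∫ σ in τ..t, frontSpeed g σ := by
    rw [freeBoundary, freeBoundary, add_sub_add_left_eq_sub,
      intervalIntegral.integral_interval_sub_left (intervalIntegrable_frontSpeed h _ _)
        (intervalIntegrable_frontSpeed h _ _)]
  rw [hsub, ← abs_of_nonneg (sub_nonneg.2 hτt)]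
  refine intervalIntegral.norm_integral_le_of_norm_le_const (f := frontSpeed g) fun σ hσ => ?_
  rw [uIoc_of_le hτt] at hσ
  exact (abs_frontSpeed_le h (hτ.trans hσ.1)).trans (mul_le_mul_of_nonneg_left
    (inv_anti₀ (fourthRoot_pos hτ) (fourthRoot_mono hσ.1.le)) h.const_nonneg)

lemma abs_freeBoundary_sub_initial_le (h : BoundedOnPos K g) (s₀ : ℝ) {t : ℝ} (ht : 0 ≤ t) :
    |freeBoundary s₀ g t - s₀| ≤ 2 * K * fourthRoot t ^ 3 := by
  rw [freeBoundary, add_sub_cancel_left]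
  calc |∫ τ in (0 : ℝ)..t, frontSpeed g τ| ≤ ∫ τ in (0 : ℝ)..t, K * fourthRoot t * (√τ)⁻¹ := by
        refine intervalIntegral.norm_integral_le_of_norm_le (f := frontSpeed g) ht
          (Eventually.of_forall fun τ hτ => (abs_frontSpeed_le h hτ.1).trans ?_)
          ((intervalIntegrable_inv_sqrt 0 t).const_mul _)
        rw [inv_fourthRoot_eq hτ.1, mul_assoc]
        exact mul_le_mul_of_nonneg_left
          (mul_le_mul_of_nonneg_right (fourthRoot_mono hτ.2) (by positivity)) h.const_nonneg
    _ = 2 * K * fourthRoot t ^ 3 := by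
        rw [intervalIntegral.integral_const_mul, integral_inv_sqrt ht, ← fourthRoot_sq]
        ring

lemma freeBoundary_sub_freeBoundary {K' : ℝ} {g' : ℝ → ℝ} (h : BoundedOnPos K g)
    (h' : BoundedOnPos K' g') (s₀ t : ℝ) :
    freeBoundary s₀ g t - freeBoundary s₀ g' t = freeBoundary 0 (fun τ => g τ - g' τ) t := by
  have hsub : frontSpeed (fun τ => g τ - g' τ) = fun τ => frontSpeed g τ - frontSpeed g' τ := by
    ext τ
    exact mul_sub _ _ _
  rw [freeBoundary, freeBoundary, freeBoundary, hsub, intervalIntegral.integral_sub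
    (intervalIntegrable_frontSpeed h _ _) (intervalIntegrable_frontSpeed h' _ _)]
  ring

end Front

/-! ### The boundary nonlinearity -/

/-- The nonlinearity `|x| ^ p`, which agrees with `x ^ p` on the nonnegative solutions. -/
def absRpow (p x : ℝ) : ℝ := |x| ^ p

lemma continuous_absRpow {p : ℝ} (hp : 0 ≤ p) : Continuous (absRpow p) :=
  continuous_abs.rpow_const fun _ => Or.inr hp

lemma absRpow_nonneg (p x : ℝ) : 0 ≤ absRpow p x := rpow_nonneg (abs_nonneg x) p

lemma abs_absRpow_le {p H x : ℝ} (hp : 0 ≤ p) (hx : |x| ≤ H) : |absRpow p x| ≤ H ^ p := by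
  rw [abs_of_nonneg (absRpow_nonneg p x)]
  exact rpow_le_rpow (abs_nonneg x) hx hp

lemma abs_absRpow_sub_le {p H x y : ℝ} (hp : 1 ≤ p) (hx : |x| ≤ H) (hy : |y| ≤ H) :
    |absRpow p x - absRpow p y| ≤ p * H ^ (p - 1) * |x - y| := by
  have hH : 0 ≤ H := (abs_nonneg x).trans hx
  have hmean : |absRpow p x - absRpow p y| ≤ p * H ^ (p - 1) * |(|x| - |y|)| := by
    refine (convex_Icc 0 H).norm_image_sub_le_of_norm_hasDerivWithin_le (f := fun x => x ^ p)
      (fun z _ => (hasDerivAt_rpow_const (Or.inr hp)).hasDerivWithinAt) (fun z hz => ?_)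
      ⟨abs_nonneg y, hy⟩ ⟨abs_nonneg x, hx⟩
    have hz₀ := hz.1
    rw [norm_of_nonneg (by positivity)]
    gcongr
    exact hz.2
  exact hmean.trans (mul_le_mul_of_nonneg_left (abs_abs_sub_abs_le_abs_sub x y) (by positivity))

/-! ### Kernel bounds away from the singularity -/

section Far

variable {r z z' δ : ℝ}

lemma abs_heatKernelX_le_of_le (hr : 0 < r) (hδ : 0 < δ) (hz : δ ≤ z) :
    |heatKernelX r z| ≤ 2 / δ * (√r)⁻¹ := by
  rw [div_mul_eq_mul_div, le_div_iff₀' hδ]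
  calc δ * |heatKernelX r z| ≤ |z| * |heatKernelX r z| := by
        gcongr
        exact hz.trans (le_abs_self z)
    _ ≤ 2 * (√r)⁻¹ := abs_mul_abs_heatKernelX_le hr z

lemma abs_heatKernelXX_le_of_le (hr : 0 < r) (hδ : 0 < δ) (hz : δ ≤ z) :
    |heatKernelXX r z| ≤ 12 / δ ^ 2 * (√r)⁻¹ := by
  rw [div_mul_eq_mul_div, le_div_iff₀' (by positivity)]
  calc δ ^ 2 * |heatKernelXX r z| ≤ z ^ 2 * |heatKernelXX r z| := by gcongr
    _ ≤ 12 * (√r)⁻¹ := sq_mul_abs_heatKernelXX_le hr z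

lemma abs_heatKernel_sub_le_of_le (hr : 0 < r) (hδ : 0 < δ) (hz : δ ≤ z) (hz' : δ ≤ z') :
    |heatKernel r z - heatKernel r z'| ≤ 2 / δ * (√r)⁻¹ * |z - z'| :=
  (convex_Ici δ).norm_image_sub_le_of_norm_hasDerivWithin_le
    (fun y _ => (hasDerivAt_heatKernel r y).hasDerivWithinAt)
    (fun _ hy => abs_heatKernelX_le_of_le hr hδ hy) hz' hz

lemma abs_heatKernelX_sub_le_of_le (hr : 0 < r) (hδ : 0 < δ) (hz : δ ≤ z) (hz' : δ ≤ z') :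
    |heatKernelX r z - heatKernelX r z'| ≤ 12 / δ ^ 2 * (√r)⁻¹ * |z - z'| :=
  (convex_Ici δ).norm_image_sub_le_of_norm_hasDerivWithin_le
    (fun y _ => (hasDerivAt_heatKernelX r y).hasDerivWithinAt)
    (fun _ hy => abs_heatKernelXX_le_of_le hr hδ hy) hz' hz

lemma abs_heatKernelX_sub_le (hr : 0 < r) (z z' : ℝ) :
    |heatKernelX r z - heatKernelX r z'| ≤ 2 * r⁻¹ * (√r)⁻¹ * |z - z'| :=
  convex_univ.norm_image_sub_le_of_norm_hasDerivWithin_le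
    (fun y _ => (hasDerivAt_heatKernelX r y).hasDerivWithinAt)
    (fun y _ => abs_heatKernelXX_le hr y) (mem_univ _) (mem_univ _)

end Far

/-! ### Estimates for the potentials of one and of two free boundaries -/

lemma abs_mul_le_of_le {k f A B : ℝ} (hk : |k| ≤ A) (hf : |f| ≤ B) : |k * f| ≤ A * B :=
  (abs_mul k f).trans_le (mul_le_mul hk hf (abs_nonneg f) ((abs_nonneg k).trans hk))

lemma abs_mul_sub_mul_le_of_le {k k' f f' A B C E : ℝ} (hk : |k| ≤ A) (hf : |f - f'| ≤ B)
    (hkk' : |k - k'| ≤ C) (hf' : |f'| ≤ E) : |k * f - k' * f'| ≤ A * B + C * E := by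
  have hsplit : k * f - k' * f' = k * (f - f') + (k - k') * f' := by ring
  rw [hsplit]
  exact (abs_add_le _ _).trans (add_le_add (abs_mul_le_of_le hk hf) (abs_mul_le_of_le hkk' hf'))

lemma abs_heatKernel_le (r z : ℝ) : |heatKernel r z| ≤ (√r)⁻¹ :=
  (abs_of_nonneg (heatKernel_nonneg r z)).trans_le (heatKernel_le r z)

section BetaWeight

variable {t τ : ℝ}

lemma betaWeight_eq (t τ : ℝ) : betaWeight t τ = (fourthRoot τ)⁻¹ ^ 2 * (√(t - τ))⁻¹ := by
  rw [betaWeight, inv_pow, fourthRoot_sq]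

lemma inv_sqrt_mul_inv_fourthRoot_le (hτ : τ ∈ Ioo 0 t) :
    (√(t - τ))⁻¹ * (fourthRoot τ)⁻¹ ≤ fourthRoot t * betaWeight t τ := by
  have hpos := fourthRoot_pos hτ.1
  calc (√(t - τ))⁻¹ * (fourthRoot τ)⁻¹ = fourthRoot τ * betaWeight t τ := by
        rw [betaWeight_eq]
        field_simp
    _ ≤ fourthRoot t * betaWeight t τ :=
        mul_le_mul_of_nonneg_right (fourthRoot_mono hτ.2.le) (betaWeight_nonneg _ _)

lemma inv_sqrt_le_inv_sqrt_mul_inv_fourthRoot (hτ : τ ∈ Ioo 0 t) (ht : t ≤ 1) :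
    (√(t - τ))⁻¹ ≤ (√(t - τ))⁻¹ * (fourthRoot τ)⁻¹ :=
  le_mul_of_one_le_right (by positivity)
    ((one_le_inv₀ (fourthRoot_pos hτ.1)).2 (fourthRoot_le_one (hτ.2.le.trans ht)))

lemma inv_sqrt_mul_inv_fourthRoot_le_betaWeight (hτ : τ ∈ Ioo 0 t) (ht : t ≤ 1) :
    (√(t - τ))⁻¹ * (fourthRoot τ)⁻¹ ≤ betaWeight t τ :=
  (inv_sqrt_mul_inv_fourthRoot_le hτ).trans
    (mul_le_of_le_one_left (betaWeight_nonneg _ _) (fourthRoot_le_one ht))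

lemma inv_sqrt_le_betaWeight (hτ : τ ∈ Ioo 0 t) (ht : t ≤ 1) :
    (√(t - τ))⁻¹ ≤ betaWeight t τ :=
  (inv_sqrt_le_inv_sqrt_mul_inv_fourthRoot hτ ht).trans
    (inv_sqrt_mul_inv_fourthRoot_le_betaWeight hτ ht)

end BetaWeight

section SingleFront

variable {K L δ s₀ t x : ℝ} {g b c : ℝ → ℝ}

lemma abs_singleLayer_le (hb : BoundedOnPos L b) (ht₀ : 0 < t) (ht₁ : t ≤ 1) :
    |singleLayer c b t x| ≤ L * fourthRoot t * betaConst := by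
  refine abs_integral_le_of_le_betaWeight ht₀ fun τ hτ => ?_
  calc |heatKernel (t - τ) (x - c τ) * b τ| ≤ (√(t - τ))⁻¹ * L :=
        abs_mul_le_of_le (abs_heatKernel_le _ _) (hb.abs_le τ hτ.1)
    _ ≤ fourthRoot t * betaWeight t τ * L := mul_le_mul_of_nonneg_right
        ((inv_sqrt_le_inv_sqrt_mul_inv_fourthRoot hτ ht₁).trans
          (inv_sqrt_mul_inv_fourthRoot_le hτ)) hb.const_nonneg
    _ = L * fourthRoot t * betaWeight t τ := by ring

lemma abs_singleLayer_frontSpeed_le (hg : BoundedOnPos K g) (ht : 0 < t) :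
    |singleLayer c (frontSpeed g) t x| ≤ K * fourthRoot t * betaConst := by
  refine abs_integral_le_of_le_betaWeight ht fun τ hτ => ?_
  calc |heatKernel (t - τ) (x - c τ) * frontSpeed g τ|
      ≤ (√(t - τ))⁻¹ * (K * (fourthRoot τ)⁻¹) :=
        abs_mul_le_of_le (abs_heatKernel_le _ _) (abs_frontSpeed_le hg hτ.1)
    _ = (√(t - τ))⁻¹ * (fourthRoot τ)⁻¹ * K := by ring
    _ ≤ fourthRoot t * betaWeight t τ * K :=
        mul_le_mul_of_nonneg_right (inv_sqrt_mul_inv_fourthRoot_le hτ) hg.const_nonneg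
    _ = K * fourthRoot t * betaWeight t τ := by ring

lemma abs_singleLayerX_fixed_le (hb : BoundedOnPos L b) (hδ : 0 < δ) (hx : δ ≤ x) (ht₀ : 0 < t)
    (ht₁ : t ≤ 1) : |singleLayerX (fun _ => 0) b t x| ≤ 2 / δ * L * betaConst := by
  refine abs_integral_le_of_le_betaWeight ht₀ fun τ hτ => ?_
  have hL := hb.const_nonneg
  calc |heatKernelX (t - τ) (x - 0) * b τ| ≤ 2 / δ * (√(t - τ))⁻¹ * L :=
        abs_mul_le_of_le (abs_heatKernelX_le_of_le (sub_pos.2 hτ.2) hδ (by simpa using hx))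
          (hb.abs_le τ hτ.1)
    _ = 2 / δ * L * (√(t - τ))⁻¹ := by ring
    _ ≤ 2 / δ * L * betaWeight t τ :=
        mul_le_mul_of_nonneg_left (inv_sqrt_le_betaWeight hτ ht₁) (by positivity)

lemma abs_singleLayerX_reflected_le (hg : BoundedOnPos K g) (hδ : 0 < δ)
    (hs : ∀ τ ∈ Ioc 0 t, δ ≤ freeBoundary s₀ g τ) (ht₀ : 0 < t) (ht₁ : t ≤ 1) :
    |singleLayerX (fun τ => -freeBoundary s₀ g τ) (frontSpeed g) t (freeBoundary s₀ g t)| ≤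
      2 / δ * K * betaConst := by
  refine abs_integral_le_of_le_betaWeight ht₀ fun τ hτ => ?_
  have hK := hg.const_nonneg
  have hgap : δ ≤ freeBoundary s₀ g t - -freeBoundary s₀ g τ := by
    linarith [hs t ⟨ht₀, le_rfl⟩, hs τ ⟨hτ.1, hτ.2.le⟩]
  calc |heatKernelX (t - τ) (freeBoundary s₀ g t - -freeBoundary s₀ g τ) * frontSpeed g τ|
      ≤ 2 / δ * (√(t - τ))⁻¹ * (K * (fourthRoot τ)⁻¹) :=
        abs_mul_le_of_le (abs_heatKernelX_le_of_le (sub_pos.2 hτ.2) hδ hgap)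
          (abs_frontSpeed_le hg hτ.1)
    _ = 2 / δ * K * ((√(t - τ))⁻¹ * (fourthRoot τ)⁻¹) := by ring
    _ ≤ 2 / δ * K * betaWeight t τ := mul_le_mul_of_nonneg_left
        (inv_sqrt_mul_inv_fourthRoot_le_betaWeight hτ ht₁) (by positivity)

lemma abs_heatKernelX_freeBoundary_le (hg : BoundedOnPos K g) {τ : ℝ} (hτ : τ ∈ Ioo 0 t) :
    |heatKernelX (t - τ) (freeBoundary s₀ g t - freeBoundary s₀ g τ)| ≤
      K * (fourthRoot τ)⁻¹ * (√(t - τ))⁻¹ := by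
  have hr : 0 < t - τ := sub_pos.2 hτ.2
  refine (abs_heatKernelX_le hr _).trans (mul_le_mul_of_nonneg_right ?_ (by positivity))
  rw [div_le_iff₀ hr]
  exact abs_freeBoundary_sub_le hg s₀ hτ.1 hτ.2.le

lemma abs_singleLayerX_freeBoundary_le (hg : BoundedOnPos K g) (ht : 0 < t) :
    |singleLayerX (freeBoundary s₀ g) (frontSpeed g) t (freeBoundary s₀ g t)| ≤
      K ^ 2 * betaConst := by
  refine abs_integral_le_of_le_betaWeight ht fun τ hτ => ?_
  calc |heatKernelX (t - τ) (freeBoundary s₀ g t - freeBoundary s₀ g τ) * frontSpeed g τ|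
      ≤ K * (fourthRoot τ)⁻¹ * (√(t - τ))⁻¹ * (K * (fourthRoot τ)⁻¹) :=
        abs_mul_le_of_le (abs_heatKernelX_freeBoundary_le hg hτ) (abs_frontSpeed_le hg hτ.1)
    _ = K ^ 2 * betaWeight t τ := by
        rw [betaWeight_eq]
        ring

end SingleFront

section Differences

variable {K K' k k' C D t : ℝ} {b b' c c' d d' : ℝ → ℝ}

lemma abs_singleLayer_sub_le (hc : Continuous c) (hb : SqrtSingular K b) (hc' : Continuous c')
    (hb' : SqrtSingular K' b') (ht₀ : 0 < t) (ht₁ : t ≤ 1) {x x' : ℝ}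
    (h : ∀ τ ∈ Ioo 0 t, |heatKernel (t - τ) (x - c τ) * b τ -
      heatKernel (t - τ) (x' - c' τ) * b' τ| ≤ C * betaWeight t τ) :
    |singleLayer c b t x - singleLayer c' b' t x'| ≤ C * betaConst := by
  rw [singleLayer, singleLayer, ← intervalIntegral.integral_sub
    (intervalIntegrable_heatKernel_mul hc hb ht₀ ht₁ x)
    (intervalIntegrable_heatKernel_mul hc' hb' ht₀ ht₁ x')]
  exact abs_integral_le_of_le_betaWeight ht₀ h

lemma abs_singleLayerX_sub_le (hc : SqrtSingularCurve k c d) (hb : SqrtSingular K b)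
    (hc' : SqrtSingularCurve k' c' d') (hb' : SqrtSingular K' b') (ht₀ : 0 < t) (ht₁ : t < 1)
    {x x' : ℝ} (h : ∀ τ ∈ Ioo 0 t, |heatKernelX (t - τ) (x - c τ) * b τ -
      heatKernelX (t - τ) (x' - c' τ) * b' τ| ≤ C * betaWeight t τ) :
    |singleLayerX c b t x - singleLayerX c' b' t x'| ≤ C * betaConst := by
  rw [singleLayerX, singleLayerX, ← intervalIntegral.integral_sub
    (intervalIntegrable_heatKernelX_mul hc hb ht₀ ht₁ x)
    (intervalIntegrable_heatKernelX_mul hc' hb' ht₀ ht₁ x')]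
  exact abs_integral_le_of_le_betaWeight ht₀ h

lemma abs_singleLayer_density_sub_le (hc : Continuous c) (hb : BoundedOnPos K b)
    (hb' : BoundedOnPos K' b') (hD : ∀ τ, 0 < τ → |b τ - b' τ| ≤ D) (ht₀ : 0 < t) (ht₁ : t ≤ 1)
    {x : ℝ} : |singleLayer c b t x - singleLayer c b' t x| ≤ D * fourthRoot t * betaConst := by
  have hsub : singleLayer c b t x - singleLayer c b' t x =
      singleLayer c (fun τ => b τ - b' τ) t x := by
    simp only [singleLayer, mul_sub]
    exact (intervalIntegral.integral_sub
      (intervalIntegrable_heatKernel_mul hc hb.sqrtSingular ht₀ ht₁ x)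
      (intervalIntegrable_heatKernel_mul hc hb'.sqrtSingular ht₀ ht₁ x)).symm
  rw [hsub]
  exact abs_singleLayer_le (hb.sub hb' hD) ht₀ ht₁

end Differences

/-- Two free boundaries from `s₀` whose rescaled speeds are bounded by `K` and differ by at most
`D`, and which stay to the right of `δ` up to the time `R`. -/
structure FrontPair (K D δ s₀ R : ℝ) (g g' : ℝ → ℝ) : Prop where
  fst : BoundedOnPos K g
  snd : BoundedOnPos K g'
  abs_sub_le : ∀ τ, 0 < τ → |g τ - g' τ| ≤ D
  gap_pos : 0 < δ
  le_fst : ∀ τ ∈ Ioc 0 R, δ ≤ freeBoundary s₀ g τ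
  le_snd : ∀ τ ∈ Ioc 0 R, δ ≤ freeBoundary s₀ g' τ

namespace FrontPair

variable {K L D D' R t δ s₀ : ℝ} {g g' b b' : ℝ → ℝ}

lemma sub (F : FrontPair K D δ s₀ R g g')
    : BoundedOnPos D fun τ => g τ - g' τ := F.fst.sub F.snd F.abs_sub_le

lemma abs_freeBoundary_sub_le_pow (F : FrontPair K D δ s₀ R g g') (ht : 0 < t) :
    |freeBoundary s₀ g t - freeBoundary s₀ g' t| ≤ 2 * D * fourthRoot t ^ 3 := by
  rw [freeBoundary_sub_freeBoundary F.fst F.snd]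
  simpa using abs_freeBoundary_sub_initial_le F.sub 0 ht.le

lemma abs_freeBoundary_sub_le (F : FrontPair K D δ s₀ R g g') (ht₀ : 0 < t) (ht₁ : t ≤ 1) :
    |freeBoundary s₀ g t - freeBoundary s₀ g' t| ≤ 2 * D :=
  (F.abs_freeBoundary_sub_le_pow ht₀).trans
    (mul_le_of_le_one_right (mul_nonneg zero_le_two F.sub.const_nonneg)
      (pow_le_one₀ (fourthRoot_nonneg t) (fourthRoot_le_one ht₁)))

lemma abs_frontSpeed_sub_le (F : FrontPair K D δ s₀ R g g') (ht : 0 < t) :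
    |frontSpeed g t - frontSpeed g' t| ≤ D * (fourthRoot t)⁻¹ := by
  rw [frontSpeed, frontSpeed, ← mul_sub]
  exact abs_frontSpeed_le F.sub ht

lemma abs_singleLayer_freeBoundary_sub_le (F : FrontPair K D δ s₀ R g g')
    (ht : t ∈ Ioc 0 R) (ht₁ : t ≤ 1) :
    |singleLayer (freeBoundary s₀ g) (frontSpeed g) t 0 -
        singleLayer (freeBoundary s₀ g') (frontSpeed g') t 0| ≤
      D * (1 + 4 * K / δ) * fourthRoot t * betaConst := by
  have hδ := F.gap_pos
  have hK := F.fst.const_nonneg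
  have hD := F.sub.const_nonneg
  refine abs_singleLayer_sub_le (continuous_freeBoundary F.fst s₀) (sqrtSingular_frontSpeed F.fst)
    (continuous_freeBoundary F.snd s₀) (sqrtSingular_frontSpeed F.snd) ht.1 ht₁ fun τ hτ => ?_
  have hτR : τ ∈ Ioc 0 R := ⟨hτ.1, hτ.2.le.trans ht.2⟩
  have hkernel : |heatKernel (t - τ) (freeBoundary s₀ g τ) -
      heatKernel (t - τ) (freeBoundary s₀ g' τ)| ≤ 2 / δ * (√(t - τ))⁻¹ * (2 * D) :=
    (abs_heatKernel_sub_le_of_le (sub_pos.2 hτ.2) hδ (F.le_fst τ hτR) (F.le_snd τ hτR)).trans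
      (mul_le_mul_of_nonneg_left (F.abs_freeBoundary_sub_le hτ.1 (hτ.2.le.trans ht₁))
        (by positivity))
  rw [zero_sub, zero_sub, heatKernel_neg, heatKernel_neg]
  calc |heatKernel (t - τ) (freeBoundary s₀ g τ) * frontSpeed g τ -
        heatKernel (t - τ) (freeBoundary s₀ g' τ) * frontSpeed g' τ|
      ≤ (√(t - τ))⁻¹ * (D * (fourthRoot τ)⁻¹) +
          2 / δ * (√(t - τ))⁻¹ * (2 * D) * (K * (fourthRoot τ)⁻¹) :=
        abs_mul_sub_mul_le_of_le (abs_heatKernel_le _ _) (F.abs_frontSpeed_sub_le hτ.1) hkernel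
          (abs_frontSpeed_le F.snd hτ.1)
    _ = D * (1 + 4 * K / δ) * ((√(t - τ))⁻¹ * (fourthRoot τ)⁻¹) := by ring
    _ ≤ D * (1 + 4 * K / δ) * (fourthRoot t * betaWeight t τ) :=
        mul_le_mul_of_nonneg_left (inv_sqrt_mul_inv_fourthRoot_le hτ) (by positivity)
    _ = D * (1 + 4 * K / δ) * fourthRoot t * betaWeight t τ := by ring

lemma abs_singleLayerX_fixed_sub_le (F : FrontPair K D δ s₀ R g g')
    (hb : BoundedOnPos L b) (hb' : BoundedOnPos L b')
    (hbb' : ∀ τ, 0 < τ → |b τ - b' τ| ≤ D') (ht : t ∈ Ioc 0 R) (ht₁ : t < 1) :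
    |singleLayerX (fun _ => 0) b t (freeBoundary s₀ g t) -
        singleLayerX (fun _ => 0) b' t (freeBoundary s₀ g' t)| ≤
      (2 / δ * D' + 24 / δ ^ 2 * L * D) * betaConst := by
  have hδ := F.gap_pos
  have hD := F.sub.const_nonneg
  have hL := hb.const_nonneg
  have hD' := (hb.sub hb' hbb').const_nonneg
  refine abs_singleLayerX_sub_le sqrtSingularCurve_zero hb.sqrtSingular sqrtSingularCurve_zero
    hb'.sqrtSingular ht.1 ht₁ fun τ hτ => ?_
  have hr : 0 < t - τ := sub_pos.2 hτ.2
  have hkernel : |heatKernelX (t - τ) (freeBoundary s₀ g t) -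
      heatKernelX (t - τ) (freeBoundary s₀ g' t)| ≤ 12 / δ ^ 2 * (√(t - τ))⁻¹ * (2 * D) :=
    (abs_heatKernelX_sub_le_of_le hr hδ (F.le_fst t ht) (F.le_snd t ht)).trans
      (mul_le_mul_of_nonneg_left (F.abs_freeBoundary_sub_le ht.1 ht₁.le) (by positivity))
  rw [sub_zero, sub_zero]
  calc |heatKernelX (t - τ) (freeBoundary s₀ g t) * b τ -
        heatKernelX (t - τ) (freeBoundary s₀ g' t) * b' τ|
      ≤ 2 / δ * (√(t - τ))⁻¹ * D' + 12 / δ ^ 2 * (√(t - τ))⁻¹ * (2 * D) * L :=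
        abs_mul_sub_mul_le_of_le (abs_heatKernelX_le_of_le hr hδ (F.le_fst t ht)) (hbb' τ hτ.1)
          hkernel (hb'.abs_le τ hτ.1)
    _ = (2 / δ * D' + 24 / δ ^ 2 * L * D) * (√(t - τ))⁻¹ := by ring
    _ ≤ (2 / δ * D' + 24 / δ ^ 2 * L * D) * betaWeight t τ :=
        mul_le_mul_of_nonneg_left (inv_sqrt_le_betaWeight hτ ht₁.le) (by positivity)

lemma abs_heatKernelX_reflected_sub_le (F : FrontPair K D δ s₀ R g g')
    (ht : t ∈ Ioc 0 R) (ht₁ : t ≤ 1) {τ : ℝ}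
    (hτ : τ ∈ Ioo 0 t) :
    |heatKernelX (t - τ) (freeBoundary s₀ g t - -freeBoundary s₀ g τ) -
        heatKernelX (t - τ) (freeBoundary s₀ g' t - -freeBoundary s₀ g' τ)| ≤
      12 / δ ^ 2 * (√(t - τ))⁻¹ * (4 * D) := by
  have hδ := F.gap_pos
  have hτR : τ ∈ Ioc 0 R := ⟨hτ.1, hτ.2.le.trans ht.2⟩
  refine (abs_heatKernelX_sub_le_of_le (sub_pos.2 hτ.2) hδ
    (by linarith [F.le_fst t ht, F.le_fst τ hτR])
    (by linarith [F.le_snd t ht, F.le_snd τ hτR])).trans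
    (mul_le_mul_of_nonneg_left ?_ (by positivity))
  have ht_dist := abs_le.1 (F.abs_freeBoundary_sub_le ht.1 ht₁)
  have hτ_dist := abs_le.1 (F.abs_freeBoundary_sub_le hτ.1 (hτ.2.le.trans ht₁))
  rw [abs_le]
  constructor <;> linarith

lemma abs_singleLayerX_reflected_sub_le (F : FrontPair K D δ s₀ R g g')
    (ht : t ∈ Ioc 0 R) (ht₁ : t < 1) :
    |singleLayerX (fun τ => -freeBoundary s₀ g τ) (frontSpeed g) t (freeBoundary s₀ g t) -
        singleLayerX (fun τ => -freeBoundary s₀ g' τ) (frontSpeed g') t (freeBoundary s₀ g' t)| ≤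
      D * (2 / δ + 48 / δ ^ 2 * K) * betaConst := by
  have hδ := F.gap_pos
  have hK := F.fst.const_nonneg
  have hD := F.sub.const_nonneg
  refine abs_singleLayerX_sub_le (sqrtSingularCurve_freeBoundary F.fst s₀).neg
    (sqrtSingular_frontSpeed F.fst) (sqrtSingularCurve_freeBoundary F.snd s₀).neg
    (sqrtSingular_frontSpeed F.snd) ht.1 ht₁ fun τ hτ => ?_
  have hgap : δ ≤ freeBoundary s₀ g t - -freeBoundary s₀ g τ := by
    linarith [F.le_fst t ht, F.le_fst τ ⟨hτ.1, hτ.2.le.trans ht.2⟩]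
  calc |heatKernelX (t - τ) (freeBoundary s₀ g t - -freeBoundary s₀ g τ) * frontSpeed g τ -
        heatKernelX (t - τ) (freeBoundary s₀ g' t - -freeBoundary s₀ g' τ) * frontSpeed g' τ|
      ≤ 2 / δ * (√(t - τ))⁻¹ * (D * (fourthRoot τ)⁻¹) +
          12 / δ ^ 2 * (√(t - τ))⁻¹ * (4 * D) * (K * (fourthRoot τ)⁻¹) :=
        abs_mul_sub_mul_le_of_le (abs_heatKernelX_le_of_le (sub_pos.2 hτ.2) hδ hgap)
          (F.abs_frontSpeed_sub_le hτ.1) (F.abs_heatKernelX_reflected_sub_le ht ht₁.le hτ)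
          (abs_frontSpeed_le F.snd hτ.1)
    _ = D * (2 / δ + 48 / δ ^ 2 * K) * ((√(t - τ))⁻¹ * (fourthRoot τ)⁻¹) := by ring
    _ ≤ D * (2 / δ + 48 / δ ^ 2 * K) * betaWeight t τ := mul_le_mul_of_nonneg_left
        (inv_sqrt_mul_inv_fourthRoot_le_betaWeight hτ ht₁.le) (by positivity)

lemma abs_heatKernelX_freeBoundary_sub_le (F : FrontPair K D δ s₀ R g g')
    {τ : ℝ} (hτ : τ ∈ Ioo 0 t) :
    |heatKernelX (t - τ) (freeBoundary s₀ g t - freeBoundary s₀ g τ) -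
        heatKernelX (t - τ) (freeBoundary s₀ g' t - freeBoundary s₀ g' τ)| ≤
      2 * D * (fourthRoot τ)⁻¹ * (√(t - τ))⁻¹ := by
  have hr : 0 < t - τ := sub_pos.2 hτ.2
  have hincr : |(freeBoundary s₀ g t - freeBoundary s₀ g τ) -
      (freeBoundary s₀ g' t - freeBoundary s₀ g' τ)| ≤ D * (fourthRoot τ)⁻¹ * (t - τ) := by
    rw [sub_sub_sub_comm, freeBoundary_sub_freeBoundary F.fst F.snd,
      freeBoundary_sub_freeBoundary F.fst F.snd]
    exact _root_.abs_freeBoundary_sub_le F.sub 0 hτ.1 hτ.2.le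
  calc _ ≤ 2 * (t - τ)⁻¹ * (√(t - τ))⁻¹ * (D * (fourthRoot τ)⁻¹ * (t - τ)) :=
        (abs_heatKernelX_sub_le hr _ _).trans (mul_le_mul_of_nonneg_left hincr (by positivity))
    _ = 2 * D * (fourthRoot τ)⁻¹ * (√(t - τ))⁻¹ := by field_simp

lemma abs_singleLayerX_freeBoundary_sub_le (F : FrontPair K D δ s₀ R g g')
    (ht₀ : 0 < t) (ht₁ : t < 1) :
    |singleLayerX (freeBoundary s₀ g) (frontSpeed g) t (freeBoundary s₀ g t) -
        singleLayerX (freeBoundary s₀ g') (frontSpeed g') t (freeBoundary s₀ g' t)| ≤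
      D * (3 * K) * betaConst := by
  refine abs_singleLayerX_sub_le (sqrtSingularCurve_freeBoundary F.fst s₀)
    (sqrtSingular_frontSpeed F.fst) (sqrtSingularCurve_freeBoundary F.snd s₀)
    (sqrtSingular_frontSpeed F.snd) ht₀ ht₁ fun τ hτ => ?_
  calc |heatKernelX (t - τ) (freeBoundary s₀ g t - freeBoundary s₀ g τ) * frontSpeed g τ -
        heatKernelX (t - τ) (freeBoundary s₀ g' t - freeBoundary s₀ g' τ) * frontSpeed g' τ|
      ≤ K * (fourthRoot τ)⁻¹ * (√(t - τ))⁻¹ * (D * (fourthRoot τ)⁻¹) +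
          2 * D * (fourthRoot τ)⁻¹ * (√(t - τ))⁻¹ * (K * (fourthRoot τ)⁻¹) :=
        abs_mul_sub_mul_le_of_le (abs_heatKernelX_freeBoundary_le F.fst hτ)
          (F.abs_frontSpeed_sub_le hτ.1) (F.abs_heatKernelX_freeBoundary_sub_le hτ)
          (abs_frontSpeed_le F.snd hτ.1)
    _ = D * (3 * K) * betaWeight t τ := by
        rw [betaWeight_eq]
        ring

end FrontPair

/-! ### The boundary integral equations -/

/-- The sum of the heat potentials generated by the initial datum with derivative `w`, the flux `b`
through `x = 0` and the free boundary with rescaled speed `g` together with its mirror image. -/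
def potentialSolution (s₀ : ℝ) (w g b : ℝ → ℝ) (t x : ℝ) : ℝ :=
  oddPotential heatStep s₀ w t x + 2 * singleLayer (fun _ => 0) b t x -
    singleLayer (freeBoundary s₀ g) (frontSpeed g) t x -
    singleLayer (fun τ => -freeBoundary s₀ g τ) (frontSpeed g) t x

/-- The space derivative of `potentialSolution`, taken under the integral signs. -/
def potentialSolutionX (s₀ : ℝ) (w g b : ℝ → ℝ) (t x : ℝ) : ℝ :=
  oddPotential heatKernel s₀ w t x + 2 * singleLayerX (fun _ => 0) b t x -
    singleLayerX (freeBoundary s₀ g) (frontSpeed g) t x -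
    singleLayerX (fun τ => -freeBoundary s₀ g τ) (frontSpeed g) t x

/-- The continuous extension of `potentialSolutionX` from between `x = 0` and the free boundary. -/
def potentialSolutionXReg (s₀ : ℝ) (w g b : ℝ → ℝ) (t x : ℝ) : ℝ :=
  oddPotential heatKernel s₀ w t x + 2 * singleLayerXReg (fun _ => 0) b t x - 2 * b t -
    singleLayerXReg (freeBoundary s₀ g) (frontSpeed g) t x -
    singleLayerXReg (fun τ => -freeBoundary s₀ g τ) (frontSpeed g) t x + frontSpeed g t

/-- The direct value on the free boundary of the space derivative of `potentialSolution`, that is,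
the mean of its two one-sided limits. -/
def frontFlux (s₀ : ℝ) (w g b : ℝ → ℝ) (t : ℝ) : ℝ :=
  potentialSolutionX s₀ w g b t (freeBoundary s₀ g t)

lemma potentialSolutionX_eq (s₀ : ℝ) (w g b : ℝ → ℝ) (t x : ℝ) :
    potentialSolutionX s₀ w g b t x = potentialSolutionXReg s₀ w g b t x +
      2 * b t * (1 - heaviside x) + frontSpeed g t *
        (heaviside (x - freeBoundary s₀ g t) + heaviside (x + freeBoundary s₀ g t) - 1) := by
  simp only [potentialSolutionX, potentialSolutionXReg, singleLayerXReg, sub_zero, sub_neg_eq_add]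
  ring

lemma continuousAt_comp_graph {k : ℝ → ℝ → ℝ} {s : ℝ → ℝ} {t : ℝ}
    (hk : ContinuousAt (fun q : ℝ × ℝ => k q.1 q.2) (t, s t)) (hs : ContinuousAt s t) :
    ContinuousAt (fun t => k t (s t)) t :=
  ContinuousAt.comp (g := fun q : ℝ × ℝ => k q.1 q.2) (f := fun t => (t, s t)) hk
    (continuousAt_id.prodMk hs)

section Continuity

variable {K L s₀ t x : ℝ} {w g b : ℝ → ℝ}

lemma continuousAt_potentialSolution (hw : IntervalIntegrable w volume 0 s₀)
    (hg : BoundedOnPos K g) (hb : BoundedOnPos L b) (ht₀ : 0 < t) (ht₁ : t < 1) :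
    ContinuousAt (fun q : ℝ × ℝ => potentialSolution s₀ w g b q.1 q.2) (t, x) :=
  (((continuousAt_oddPotential_heatStep hw ht₀.le).add (continuousAt_const.mul
    (continuousAt_singleLayer continuous_const hb.sqrtSingular ht₀ ht₁ x))).sub
    (continuousAt_singleLayer (continuous_freeBoundary hg s₀) (sqrtSingular_frontSpeed hg)
      ht₀ ht₁ x)).sub
    (continuousAt_singleLayer (continuous_freeBoundary hg s₀).neg (sqrtSingular_frontSpeed hg)
      ht₀ ht₁ x)

lemma continuousAt_potentialSolutionXReg (hw : IntervalIntegrable w volume 0 s₀)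
    (hg : BoundedOnPos K g) (hb : BoundedOnPos L b) (ht₀ : 0 < t) (ht₁ : t < 1) :
    ContinuousAt (fun q : ℝ × ℝ => potentialSolutionXReg s₀ w g b q.1 q.2) (t, x) := by
  have hcurve := sqrtSingularCurve_freeBoundary hg s₀
  have hdens := sqrtSingular_frontSpeed hg
  have comp_time {f : ℝ → ℝ} (hf : ContinuousAt f t) :
      ContinuousAt (fun q : ℝ × ℝ => f q.1) (t, x) :=
    ContinuousAt.comp (g := f) (x := (t, x)) hf continuousAt_fst
  refine (((((continuousAt_oddPotential_heatKernel hw ht₀).add (continuousAt_const.mul ?_)).sub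
    (continuousAt_const.mul ?_)).sub ?_).sub ?_).add ?_
  · exact continuousAt_singleLayerXReg sqrtSingularCurve_zero hb.sqrtSingular ht₀ ht₁ x
  · exact comp_time (hb.sqrtSingular.continuousAt ht₀)
  · exact continuousAt_singleLayerXReg hcurve hdens ht₀ ht₁ x
  · exact continuousAt_singleLayerXReg hcurve.neg hdens ht₀ ht₁ x
  · exact comp_time (hdens.continuousAt ht₀)

lemma frontFlux_eq (w b : ℝ → ℝ) (hs : 0 < freeBoundary s₀ g t) :
    frontFlux s₀ w g b t =
      potentialSolutionXReg s₀ w g b t (freeBoundary s₀ g t) + frontSpeed g t / 2 := by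
  rw [frontFlux, potentialSolutionX_eq, heaviside_of_pos hs, sub_self (freeBoundary s₀ g t),
    heaviside_zero, heaviside_of_pos (by linarith)]
  ring

lemma continuousAt_frontFlux (hw : IntervalIntegrable w volume 0 s₀) (hg : BoundedOnPos K g)
    (hb : BoundedOnPos L b) (ht₀ : 0 < t) (ht₁ : t < 1) (hs : 0 < freeBoundary s₀ g t) :
    ContinuousAt (frontFlux s₀ w g b) t := by
  have hs_cont : ContinuousAt (freeBoundary s₀ g) t := (continuous_freeBoundary hg s₀).continuousAt
  have hreg := continuousAt_comp_graph
    (continuousAt_potentialSolutionXReg hw hg hb ht₀ ht₁) hs_cont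
  refine ContinuousAt.congr
    (hreg.add (((sqrtSingular_frontSpeed hg).continuousAt ht₀).div_const 2)) ?_
  filter_upwards [hs_cont.eventually_const_lt hs] with t ht using (frontFlux_eq w b ht).symm

end Continuity

/-- The contribution of the layer potentials to the size of `frontFlux`. -/
def fluxConst (K L δ : ℝ) : ℝ := (2 * (2 / δ * L) + 2 / δ * K + K ^ 2) * betaConst

/-- The Lipschitz constant of `frontFlux`, for fluxes that depend `Λ`-Lipschitz on the unknown. -/
def fluxLipConst (M K L Λ δ : ℝ) : ℝ :=
  4 * M + (2 * (2 / δ * Λ + 24 / δ ^ 2 * L) + (2 / δ + 48 / δ ^ 2 * K) + 3 * K) * betaConst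

/-- The contribution of the layer potentials to the size of `potentialSolution`, up to the factor
`t ^ (1 / 4)`. -/
def potentialConst (K L : ℝ) : ℝ := (2 * L + 2 * K) * betaConst

/-- The Lipschitz constant of `potentialSolution` at `x = 0`, up to the factor `t ^ (1 / 4)`. -/
def potentialLipConst (K Λ δ : ℝ) : ℝ := (2 * Λ + 2 * (1 + 4 * K / δ)) * betaConst

section Estimates

variable {M K L Λ D R δ s₀ t x : ℝ} {φ w g g' b b' : ℝ → ℝ}

lemma abs_potentialSolution_sub_oddPotential_le (hg : BoundedOnPos K g) (hb : BoundedOnPos L b)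
    (ht₀ : 0 < t) (ht₁ : t ≤ 1) :
    |potentialSolution s₀ w g b t x - oddPotential heatStep s₀ w t x| ≤
      fourthRoot t * potentialConst K L := by
  have hfixed := abs_le.1 (abs_singleLayer_le (c := fun _ => 0) (x := x) hb ht₀ ht₁)
  have hfront := abs_le.1
    (abs_singleLayer_frontSpeed_le (c := freeBoundary s₀ g) (x := x) hg ht₀)
  have hreflected := abs_le.1
    (abs_singleLayer_frontSpeed_le (c := fun τ => -freeBoundary s₀ g τ) (x := x) hg ht₀)
  rw [potentialSolution, potentialConst, abs_le]
  constructor <;> linarith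

lemma abs_frontFlux_le (hi : InitialDatum M s₀ φ w) (hg : BoundedOnPos K g)
    (hb : BoundedOnPos L b) (hδ : 0 < δ) (hs : ∀ τ ∈ Ioc 0 t, δ ≤ freeBoundary s₀ g τ)
    (ht₀ : 0 < t) (ht₁ : t ≤ 1) :
    |frontFlux s₀ w g b t| ≤ 2 * M * (fourthRoot t)⁻¹ + fluxConst K L δ := by
  have hdatum := abs_le.1 (abs_oddPotential_heatKernel_le hi.pos.le hi.intervalIntegrable_sq
    hi.const_pos hi.integral_sq_le ht₀ (freeBoundary s₀ g t))
  have hfixed := abs_le.1 (abs_singleLayerX_fixed_le hb hδ (hs t ⟨ht₀, le_rfl⟩) ht₀ ht₁)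
  have hfront := abs_le.1 (abs_singleLayerX_freeBoundary_le (s₀ := s₀) hg ht₀)
  have hreflected := abs_le.1 (abs_singleLayerX_reflected_le hg hδ hs ht₀ ht₁)
  rw [frontFlux, potentialSolutionX, fluxConst, abs_le]
  constructor <;> linarith

lemma FrontPair.abs_frontFlux_sub_le (F : FrontPair K D δ s₀ R g g')
    (hi : InitialDatum M s₀ φ w) (hb : BoundedOnPos L b) (hb' : BoundedOnPos L b')
    (hbb' : ∀ τ, 0 < τ → |b τ - b' τ| ≤ Λ * D) (ht : t ∈ Ioc 0 R) (ht₁ : t < 1) :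
    |frontFlux s₀ w g b t - frontFlux s₀ w g' b' t| ≤ fluxLipConst M K L Λ δ * D := by
  have hdatum : |oddPotential heatKernel s₀ w t (freeBoundary s₀ g t) -
      oddPotential heatKernel s₀ w t (freeBoundary s₀ g' t)| ≤ 4 * M * D := by
    have hroot := fourthRoot_pos ht.1
    have hM := hi.const_pos
    calc _ ≤ 2 * M * (fourthRoot t ^ 3)⁻¹ * |freeBoundary s₀ g t - freeBoundary s₀ g' t| :=
          abs_oddPotential_heatKernel_sub_le hi.pos.le hi.intervalIntegrable
            hi.intervalIntegrable_sq hi.const_pos hi.integral_sq_le ht.1 _ _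
      _ ≤ 2 * M * (fourthRoot t ^ 3)⁻¹ * (2 * D * fourthRoot t ^ 3) :=
          mul_le_mul_of_nonneg_left (F.abs_freeBoundary_sub_le_pow ht.1) (by positivity)
      _ = 4 * M * D := by
          field_simp
          ring
  have hfixed := F.abs_singleLayerX_fixed_sub_le hb hb' hbb' ht ht₁
  have hfront := F.abs_singleLayerX_freeBoundary_sub_le ht.1 ht₁
  have hreflected := F.abs_singleLayerX_reflected_sub_le ht ht₁
  rw [abs_le] at hdatum hfixed hfront hreflected
  rw [frontFlux, frontFlux, potentialSolutionX, potentialSolutionX, fluxLipConst, abs_le]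
  constructor <;> linarith

lemma singleLayer_neg_zero (c f : ℝ → ℝ) (t : ℝ) :
    singleLayer (fun τ => -c τ) f t 0 = singleLayer c f t 0 := by
  simp only [singleLayer, zero_sub, neg_neg, heatKernel_neg]

lemma FrontPair.abs_potentialSolution_sub_le (F : FrontPair K D δ s₀ R g g')
    (hb : BoundedOnPos L b) (hb' : BoundedOnPos L b')
    (hbb' : ∀ τ, 0 < τ → |b τ - b' τ| ≤ Λ * D) (ht : t ∈ Ioc 0 R) (ht₁ : t ≤ 1) :
    |potentialSolution s₀ w g b t 0 - potentialSolution s₀ w g' b' t 0| ≤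
      fourthRoot t * (potentialLipConst K Λ δ * D) := by
  have hfixed := abs_le.1 (abs_singleLayer_density_sub_le (c := fun _ => 0) (x := 0)
    continuous_const hb hb' hbb' ht.1 ht₁)
  have hfront := abs_le.1 (F.abs_singleLayer_freeBoundary_sub_le ht ht₁)
  rw [potentialSolution, potentialSolution, potentialLipConst, singleLayer_neg_zero,
    singleLayer_neg_zero, abs_le]
  constructor <;> linarith

end Estimates

/-! ### Solvability of the boundary integral equations for a short time -/

lemma eventually_fourthRoot_mul_le (C : ℝ) {ε : ℝ} (hε : 0 < ε) :
    ∀ᶠ R in 𝓝[>] (0 : ℝ), ∀ t ≤ R, fourthRoot t * C ≤ ε := by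
  have hcont : Continuous fun R => fourthRoot R * |C| := continuous_fourthRoot.mul_const _
  have hlim := hcont.continuousAt (x := 0) |>.eventually_lt_const
    (by simpa [fourthRoot_of_nonpos le_rfl] using hε)
  filter_upwards [nhdsWithin_le_nhds hlim] with R hR t ht
  calc fourthRoot t * C ≤ fourthRoot t * |C| :=
        mul_le_mul_of_nonneg_left (le_abs_self C) (fourthRoot_nonneg t)
    _ ≤ fourthRoot R * |C| := mul_le_mul_of_nonneg_right (fourthRoot_mono ht) (abs_nonneg C)
    _ ≤ ε := hR.le

/-- The smallness conditions on the time horizon `R` under which the boundary integral equations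
are solved by a contraction. -/
structure SmallTime (M K L Λ δ R : ℝ) : Prop where
  horizon_pos : 0 < R
  horizon_lt_one : R < 1
  front_le_one : ∀ t ≤ R, fourthRoot t * (2 * K) ≤ 1
  front_le_gap : ∀ t ≤ R, fourthRoot t * (2 * K) ≤ δ
  flux : ∀ t ≤ R, fourthRoot t * (2 * fluxConst K L δ) ≤ 1
  flux_lip : ∀ t ≤ R, fourthRoot t * (2 * fluxLipConst M K L Λ δ) ≤ 1 / 2
  potential : ∀ t ≤ R, fourthRoot t * potentialConst K L ≤ 1
  potential_lip : ∀ t ≤ R, fourthRoot t * potentialLipConst K Λ δ ≤ 1 / 2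

lemma exists_smallTime (M K L Λ : ℝ) {δ : ℝ} (hδ : 0 < δ) : ∃ R, SmallTime M K L Λ δ R := by
  have hlt : ∀ᶠ R in 𝓝[>] (0 : ℝ), R < 1 :=
    nhdsWithin_le_nhds (eventually_lt_nhds one_pos)
  have hsmall (C : ℝ) {ε : ℝ} (hε : 0 < ε) := eventually_fourthRoot_mul_le C hε
  obtain ⟨R, h₀, h₁, h₂, h₃, h₄, h₅, h₆, h₇⟩ := (eventually_mem_nhdsWithin.and (hlt.and
    ((hsmall _ one_pos).and ((hsmall _ hδ).and ((hsmall _ one_pos).and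
    ((hsmall _ one_half_pos).and ((hsmall _ one_pos).and (hsmall _ one_half_pos)))))))).exists
  exact ⟨R, h₀, h₁, h₂, h₃, h₄, h₅, h₆, h₇⟩

lemma BoundedOnPos.absRpow_comp {p H : ℝ} {h : ℝ → ℝ} (hp : 0 ≤ p) (hh : BoundedOnPos H h) :
    BoundedOnPos (H ^ p) (absRpow p ∘ h) :=
  ⟨(continuous_absRpow hp).comp_continuousOn hh.continuousOn,
    fun t ht => abs_absRpow_le hp (hh.abs_le t ht)⟩

namespace SmallTime

variable {M K L Λ δ R s₀ D t x : ℝ} {φ w g g' b b' : ℝ → ℝ}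

lemma abs_freeBoundary_sub_initial_le (hR : SmallTime M K L Λ δ R) (hg : BoundedOnPos K g)
    (ht : t ∈ Ioc 0 R) : |freeBoundary s₀ g t - s₀| ≤ fourthRoot t * (2 * K) := by
  have hK := hg.const_nonneg
  calc |freeBoundary s₀ g t - s₀| ≤ 2 * K * fourthRoot t ^ 3 :=
        _root_.abs_freeBoundary_sub_initial_le hg s₀ ht.1.le
    _ ≤ 2 * K * fourthRoot t := by
        gcongr
        exact pow_le_of_le_one (fourthRoot_nonneg t)
          (fourthRoot_le_one (ht.2.trans hR.horizon_lt_one.le)) three_ne_zero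
    _ = fourthRoot t * (2 * K) := mul_comm _ _

lemma le_freeBoundary (hR : SmallTime M K L Λ δ R) (hs₀ : 2 * δ ≤ s₀) (hg : BoundedOnPos K g)
    (ht : t ∈ Ioc 0 R) : δ ≤ freeBoundary s₀ g t := by
  have hdist := abs_le.1 (hR.abs_freeBoundary_sub_initial_le (s₀ := s₀) hg ht)
  linarith [hR.front_le_gap t ht.2]

lemma freeBoundary_le (hR : SmallTime M K L Λ δ R) (hg : BoundedOnPos K g) (ht : t ∈ Ioc 0 R) :
    freeBoundary s₀ g t ≤ s₀ + 1 := by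
  have hdist := abs_le.1 (hR.abs_freeBoundary_sub_initial_le (s₀ := s₀) hg ht)
  linarith [hR.front_le_one t ht.2]

lemma abs_potentialSolution_le (hR : SmallTime M K L Λ δ R) (hi : InitialDatum M s₀ φ w)
    (hg : BoundedOnPos K g) (hb : BoundedOnPos L b) (ht : t ∈ Ioc 0 R) :
    |potentialSolution s₀ w g b t x| ≤ M ^ ((3 : ℝ) / 2) + 1 := by
  have hlayers := abs_le.1 (abs_potentialSolution_sub_oddPotential_le (s₀ := s₀) (w := w) (x := x)
    hg hb ht.1 (ht.2.trans hR.horizon_lt_one.le))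
  have hdatum := abs_le.1 (hi.abs_oddPotential_le t x)
  have hsmall := hR.potential t ht.2
  rw [abs_le]
  constructor <;> linarith

lemma abs_speed_le (hR : SmallTime M K L Λ δ R) (hi : InitialDatum M s₀ φ w) (hδ : 0 < δ)
    (hs₀ : 2 * δ ≤ s₀) (hg : BoundedOnPos K g) (hb : BoundedOnPos L b) (ht : t ∈ Ioc 0 R) :
    |fourthRoot t * (-2 * frontFlux s₀ w g b t)| ≤ 4 * M + 1 := by
  have hroot := fourthRoot_pos ht.1
  have hflux := abs_frontFlux_le hi hg hb hδ
    (fun τ hτ => hR.le_freeBoundary hs₀ hg ⟨hτ.1, hτ.2.trans ht.2⟩) ht.1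
    (ht.2.trans hR.horizon_lt_one.le)
  rw [abs_mul, abs_mul, abs_of_pos hroot, abs_neg, abs_two]
  calc fourthRoot t * (2 * |frontFlux s₀ w g b t|)
      ≤ fourthRoot t * (2 * (2 * M * (fourthRoot t)⁻¹ + fluxConst K L δ)) := by gcongr
    _ = 4 * M + fourthRoot t * (2 * fluxConst K L δ) := by
        field_simp
        ring
    _ ≤ 4 * M + 1 := by linarith [hR.flux t ht.2]

lemma frontPair (hR : SmallTime M K L Λ δ R) (hδ : 0 < δ) (hs₀ : 2 * δ ≤ s₀)
    (hg : BoundedOnPos K g) (hg' : BoundedOnPos K g') (hD : ∀ t, 0 < t → |g t - g' t| ≤ D) :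
    FrontPair K D δ s₀ R g g' :=
  ⟨hg, hg', hD, hδ, fun _ ht => hR.le_freeBoundary hs₀ hg ht,
    fun _ ht => hR.le_freeBoundary hs₀ hg' ht⟩

lemma abs_speed_sub_le (hR : SmallTime M K L Λ δ R) (F : FrontPair K D δ s₀ R g g')
    (hi : InitialDatum M s₀ φ w) (hb : BoundedOnPos L b) (hb' : BoundedOnPos L b')
    (hbb' : ∀ τ, 0 < τ → |b τ - b' τ| ≤ Λ * D) (ht : t ∈ Ioc 0 R) :
    |fourthRoot t * (-2 * frontFlux s₀ w g b t) - fourthRoot t * (-2 * frontFlux s₀ w g' b' t)| ≤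
      D / 2 := by
  have hD := F.sub.const_nonneg
  rw [← mul_sub, ← mul_sub, abs_mul, abs_mul, abs_of_pos (fourthRoot_pos ht.1), abs_neg, abs_two]
  calc fourthRoot t * (2 * |frontFlux s₀ w g b t - frontFlux s₀ w g' b' t|)
      ≤ fourthRoot t * (2 * (fluxLipConst M K L Λ δ * D)) := by
        gcongr
        · exact fourthRoot_nonneg t
        · exact F.abs_frontFlux_sub_le hi hb hb' hbb' ht (ht.2.trans_lt hR.horizon_lt_one)
    _ = fourthRoot t * (2 * fluxLipConst M K L Λ δ) * D := by ring
    _ ≤ 1 / 2 * D := mul_le_mul_of_nonneg_right (hR.flux_lip t ht.2) hD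
    _ = D / 2 := by ring

lemma abs_potentialSolution_sub_le (hR : SmallTime M K L Λ δ R) (F : FrontPair K D δ s₀ R g g')
    (hb : BoundedOnPos L b) (hb' : BoundedOnPos L b')
    (hbb' : ∀ τ, 0 < τ → |b τ - b' τ| ≤ Λ * D) (ht : t ∈ Ioc 0 R) :
    |potentialSolution s₀ w g b t 0 - potentialSolution s₀ w g' b' t 0| ≤ D / 2 := by
  calc _ ≤ fourthRoot t * (potentialLipConst K Λ δ * D) :=
        F.abs_potentialSolution_sub_le hb hb' hbb' ht (ht.2.trans hR.horizon_lt_one.le)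
    _ = fourthRoot t * potentialLipConst K Λ δ * D := by ring
    _ ≤ 1 / 2 * D := mul_le_mul_of_nonneg_right (hR.potential_lip t ht.2) F.sub.const_nonneg
    _ = D / 2 := by ring

end SmallTime

/-- A solution on `(0, R]` of the boundary integral equations: `g` is the rescaled speed of the
free boundary and `b` the flux through `x = 0`. -/
structure BoundarySolution (p M K L R s₀ : ℝ) (φ w g b : ℝ → ℝ) : Prop where
  horizon_lt_one : R < 1
  datum : InitialDatum M s₀ φ w
  speed : BoundedOnPos K g
  flux : BoundedOnPos L b
  speed_eq : ∀ t ∈ Ioc 0 R, g t = fourthRoot t * (-2 * frontFlux s₀ w g b t)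
  flux_nonneg : ∀ t, 0 ≤ b t
  flux_eq : ∀ t ∈ Ioc 0 R, b t = absRpow p (potentialSolution s₀ w g b t 0)
  front_pos : ∀ t ∈ Ioc 0 R, 0 < freeBoundary s₀ g t
  front_le : ∀ t ∈ Ioc 0 R, freeBoundary s₀ g t ≤ M + 1
  abs_le : ∀ t ∈ Ioc 0 R, ∀ x, |potentialSolution s₀ w g b t x| ≤ M ^ ((3 : ℝ) / 2) + 1

lemma SmallTime.exists_fixedPoint {p M H δ R s₀ : ℝ} {φ w : ℝ → ℝ} (hp : 1 ≤ p)
    (hH : H = M ^ ((3 : ℝ) / 2) + 1)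
    (hR : SmallTime M (4 * M + 1) (H ^ p) (p * H ^ (p - 1)) δ R)
    (hi : InitialDatum M s₀ φ w) (hδ : 0 < δ) (hs₀ : 2 * δ ≤ s₀) :
    ∃ g h, BoundedPair (4 * M + 1) H g h ∧ ∀ t ∈ Ioc 0 R,
      g t = fourthRoot t * (-2 * frontFlux s₀ w g (absRpow p ∘ h) t) ∧
      h t = potentialSolution s₀ w g (absRpow p ∘ h) t 0 := by
  have hM := hi.const_pos
  have hH₀ : 0 ≤ H := hH ▸ by positivity
  have hp₀ : 0 ≤ p := zero_le_one.trans hp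
  have lt_one {t : ℝ} (ht : t ∈ Ioc 0 R) : t < 1 := ht.2.trans_lt hR.horizon_lt_one
  refine BoundedPair.exists_fixedPoint (by positivity) hH₀ hR.horizon_pos _ _
    (fun g h hgh => ⟨fun t ht => ?_, fun t ht => ?_⟩) (fun g h hgh t ht => ⟨?_, ?_⟩)
    fun g h g' h' D hgh hgh' hD t ht => ?_
  · exact (continuous_fourthRoot.continuousAt.mul (continuousAt_const.mul (continuousAt_frontFlux
      hi.intervalIntegrable hgh.fst (hgh.snd.absRpow_comp hp₀) ht.1 (lt_one ht)
      (hδ.trans_le (hR.le_freeBoundary hs₀ hgh.fst ht))))).continuousWithinAt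
  · exact (continuousAt_comp_graph (s := fun _ => 0) (continuousAt_potentialSolution
      hi.intervalIntegrable hgh.fst (hgh.snd.absRpow_comp hp₀) ht.1 (lt_one ht))
      continuousAt_const).continuousWithinAt
  · exact hR.abs_speed_le hi hδ hs₀ hgh.fst (hgh.snd.absRpow_comp hp₀) ht
  · exact (hR.abs_potentialSolution_le hi hgh.fst (hgh.snd.absRpow_comp hp₀) ht).trans_eq hH.symm
  · have F := hR.frontPair hδ hs₀ hgh.fst hgh'.fst fun t ht => (hD t ht).1
    have hflux (τ : ℝ) (hτ : 0 < τ) :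
        |(absRpow p ∘ h) τ - (absRpow p ∘ h') τ| ≤ p * H ^ (p - 1) * D :=
      (abs_absRpow_sub_le hp (hgh.snd.abs_le τ hτ) (hgh'.snd.abs_le τ hτ)).trans
        (mul_le_mul_of_nonneg_left (hD τ hτ).2 (by positivity))
    have hb := hgh.snd.absRpow_comp hp₀
    have hb' := hgh'.snd.absRpow_comp hp₀
    exact ⟨hR.abs_speed_sub_le F hi hb hb' hflux ht,
      hR.abs_potentialSolution_sub_le F hb hb' hflux ht⟩

lemma exists_boundarySolution {p M : ℝ} (hp : 1 ≤ p) (hM : 0 < M) :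
    ∃ R K L, 0 < R ∧ ∀ s₀ φ w, InitialDatum M s₀ φ w →
      ∃ g b, BoundarySolution p M K L R s₀ φ w g b := by
  have hδ : 0 < (2 * M)⁻¹ := by positivity
  set H := M ^ ((3 : ℝ) / 2) + 1 with hH
  obtain ⟨R, hR⟩ := exists_smallTime M (4 * M + 1) (H ^ p) (p * H ^ (p - 1)) hδ
  refine ⟨R, 4 * M + 1, H ^ p, hR.horizon_pos, fun s₀ φ w hi => ?_⟩
  have hs₀ : 2 * (2 * M)⁻¹ ≤ s₀ := by
    rw [mul_inv, mul_inv_cancel_left₀ two_ne_zero]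
    exact inv_le_of_inv_le₀ hi.pos hi.inv_le
  obtain ⟨g, h, hgh, hfix⟩ := hR.exists_fixedPoint hp hH hi hδ hs₀
  have hflux := hgh.snd.absRpow_comp (zero_le_one.trans hp)
  exact ⟨g, absRpow p ∘ h, {
    horizon_lt_one := hR.horizon_lt_one
    datum := hi
    speed := hgh.fst
    flux := hflux
    speed_eq := fun t ht => (hfix t ht).1
    flux_nonneg := fun t => absRpow_nonneg p (h t)
    flux_eq := fun t ht => congrArg (absRpow p) (hfix t ht).2
    front_pos := fun t ht => hδ.trans_le (hR.le_freeBoundary hs₀ hgh.fst ht)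
    front_le := fun t ht => (hR.freeBoundary_le hgh.fst ht).trans (by linarith [hi.le])
    abs_le := fun t ht x => hR.abs_potentialSolution_le hi hgh.fst hflux ht }⟩

/-! ### Regularity away from the layers -/

/-- The second space derivative, and the time derivative, of `singleLayer`. -/
def singleLayerXX (c f : ℝ → ℝ) (t x : ℝ) : ℝ :=
  ∫ τ in (0 : ℝ)..t, heatKernelXX (t - τ) (x - c τ) * f τ

lemma isOpen_ne_zero_or_ne_zero : IsOpen {z : ℝ × ℝ | z.1 ≠ 0 ∨ z.2 ≠ 0} :=
  (isOpen_ne_fun continuous_fst continuous_const).union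
    (isOpen_ne_fun continuous_snd continuous_const)

lemma integral_kernel_comp_curve_eq_curvePotential {k : ℝ → ℝ → ℝ}
    (hk : ∀ r ≤ 0, ∀ z, k r z = 0) (c f : ℝ → ℝ) {t : ℝ} (ht : t ∈ Ioo (0 : ℝ) 1) (x : ℝ) :
    ∫ τ in (0 : ℝ)..t, k (t - τ) (x - c τ) * f τ = curvePotential k 1 id c f t x := by
  rw [curvePotential, intervalIntegral.integral_of_le ht.1.le,
    intervalIntegral.integral_of_le zero_le_one]
  refine (setIntegral_eq_of_subset_of_forall_sdiff_eq_zero measurableSet_Ioc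
    (Ioc_subset_Ioc_right ht.2.le) fun τ hτ => ?_).symm
  have htτ : t < τ := not_le.1 fun hle => hτ.2 ⟨hτ.1.1, hle⟩
  rw [hk _ (by simpa using htτ.le), zero_mul]

section SingleLayer

variable {K : ℝ} {c f : ℝ → ℝ} {t x : ℝ}

lemma singleLayer_eq_curvePotential (c f : ℝ → ℝ) (ht : t ∈ Ioo (0 : ℝ) 1) (x : ℝ) :
    singleLayer c f t x = curvePotential heatKernel 1 id c f t x :=
  integral_kernel_comp_curve_eq_curvePotential (fun _ => heatKernel_of_nonpos) c f ht x

lemma singleLayerX_eq_curvePotential (c f : ℝ → ℝ) (ht : t ∈ Ioo (0 : ℝ) 1) (x : ℝ) :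
    singleLayerX c f t x = curvePotential heatKernelX 1 id c f t x :=
  integral_kernel_comp_curve_eq_curvePotential (fun _ => heatKernelX_of_nonpos) c f ht x

lemma singleLayerXX_eq_curvePotential (c f : ℝ → ℝ) (ht : t ∈ Ioo (0 : ℝ) 1) (x : ℝ) :
    singleLayerXX c f t x = curvePotential heatKernelXX 1 id c f t x :=
  integral_kernel_comp_curve_eq_curvePotential (fun _ => heatKernelXX_of_nonpos) c f ht x

lemma sub_ne_zero_or_sub_ne_zero_of_ne (h : x ≠ c t) (τ : ℝ) : t - τ ≠ 0 ∨ x - c τ ≠ 0 := by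
  rcases eq_or_ne t τ with rfl | hτ
  · exact .inr (sub_ne_zero.2 h)
  · exact .inl (sub_ne_zero.2 hτ)

lemma hasDerivAt_singleLayer (hc : Continuous c) (hf : SqrtSingular K f) (ht : t ∈ Ioo (0 : ℝ) 1)
    (hx : x ≠ c t) : HasDerivAt (singleLayer c f t) (singleLayerX c f t x) x := by
  rw [funext (singleLayer_eq_curvePotential c f ht), singleLayerX_eq_curvePotential c f ht]
  exact hasDerivAt_curvePotential continuous_id hc (hf.intervalIntegrable zero_le_one le_rfl)
    isOpen_ne_zero_or_ne_zero (fun _ => continuousAt_heatKernel) (fun _ => continuousAt_heatKernelX)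
    (fun _ _ => hasDerivAt_heatKernel _ _) fun τ _ => sub_ne_zero_or_sub_ne_zero_of_ne hx τ

lemma hasDerivAt_singleLayerX (hc : Continuous c) (hf : SqrtSingular K f) (ht : t ∈ Ioo (0 : ℝ) 1)
    (hx : x ≠ c t) : HasDerivAt (singleLayerX c f t) (singleLayerXX c f t x) x := by
  rw [funext (singleLayerX_eq_curvePotential c f ht), singleLayerXX_eq_curvePotential c f ht]
  exact hasDerivAt_curvePotential continuous_id hc (hf.intervalIntegrable zero_le_one le_rfl)
    isOpen_ne_zero_or_ne_zero (fun _ => continuousAt_heatKernelX)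
    (fun _ => continuousAt_heatKernelXX) (fun _ _ => hasDerivAt_heatKernelX _ _)
    fun τ _ => sub_ne_zero_or_sub_ne_zero_of_ne hx τ

lemma hasDerivAt_singleLayer_time (hc : Continuous c) (hf : SqrtSingular K f)
    (ht : t ∈ Ioo (0 : ℝ) 1) (hx : x ≠ c t) :
    HasDerivAt (fun t => singleLayer c f t x) (singleLayerXX c f t x) t := by
  rw [singleLayerXX_eq_curvePotential c f ht]
  refine HasDerivAt.congr_of_eventuallyEq (hasDerivAt_curvePotential_time (k := heatKernel)
    continuous_id hc (hf.intervalIntegrable zero_le_one le_rfl) isOpen_ne_zero_or_ne_zero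
    (fun _ => continuousAt_heatKernel) (fun _ => continuousAt_heatKernelXX)
    (fun _ => hasDerivAt_heatKernel_time) fun τ _ => sub_ne_zero_or_sub_ne_zero_of_ne hx τ) ?_
  filter_upwards [Ioo_mem_nhds ht.1 ht.2] with t ht using singleLayer_eq_curvePotential c f ht x

lemma continuousAt_singleLayerXX (hc : Continuous c) (hf : SqrtSingular K f)
    (ht : t ∈ Ioo (0 : ℝ) 1) (hx : x ≠ c t) :
    ContinuousAt (fun q : ℝ × ℝ => singleLayerXX c f q.1 q.2) (t, x) := by
  refine ContinuousAt.congr (continuousAt_curvePotential (k := heatKernelXX) continuous_id hc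
    (hf.intervalIntegrable zero_le_one le_rfl) isOpen_ne_zero_or_ne_zero
    (fun _ => continuousAt_heatKernelXX) fun τ _ => sub_ne_zero_or_sub_ne_zero_of_ne hx τ) ?_
  filter_upwards [continuousAt_fst.eventually_mem (Ioo_mem_nhds ht.1 ht.2)] with q hq
    using (singleLayerXX_eq_curvePotential c f hq q.2).symm

end SingleLayer

/-- The second space derivative, and the time derivative, of `potentialSolution`. -/
def potentialSolutionXX (s₀ : ℝ) (w g b : ℝ → ℝ) (t x : ℝ) : ℝ :=
  oddPotential heatKernelX s₀ w t x + 2 * singleLayerXX (fun _ => 0) b t x -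
    singleLayerXX (freeBoundary s₀ g) (frontSpeed g) t x -
    singleLayerXX (fun τ => -freeBoundary s₀ g τ) (frontSpeed g) t x

lemma potentialSolution_time_zero (s₀ : ℝ) (w g b : ℝ → ℝ) (x : ℝ) :
    potentialSolution s₀ w g b 0 x = oddPotential heatStep s₀ w 0 x := by
  simp [potentialSolution, singleLayer]

section PotentialSolution

variable {K L s₀ t x : ℝ} {w g b : ℝ → ℝ}

lemma hasDerivAt_potentialSolution (hw : IntervalIntegrable w volume 0 s₀)
    (hg : BoundedOnPos K g) (hb : BoundedOnPos L b) (ht : t ∈ Ioo (0 : ℝ) 1) (hx₀ : x ≠ 0)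
    (hxs : x ≠ freeBoundary s₀ g t) (hxs' : x ≠ -freeBoundary s₀ g t) :
    HasDerivAt (potentialSolution s₀ w g b t) (potentialSolutionX s₀ w g b t x) x := by
  have hs := continuous_freeBoundary hg s₀
  have hdens := sqrtSingular_frontSpeed hg
  exact (((hasDerivAt_oddPotential_heatStep hw ht.1).add
    ((hasDerivAt_singleLayer continuous_const hb.sqrtSingular ht hx₀).const_mul 2)).sub
    (hasDerivAt_singleLayer hs hdens ht hxs)).sub (hasDerivAt_singleLayer hs.neg hdens ht hxs')

lemma hasDerivAt_potentialSolutionX (hw : IntervalIntegrable w volume 0 s₀)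
    (hg : BoundedOnPos K g) (hb : BoundedOnPos L b) (ht : t ∈ Ioo (0 : ℝ) 1) (hx₀ : x ≠ 0)
    (hxs : x ≠ freeBoundary s₀ g t) (hxs' : x ≠ -freeBoundary s₀ g t) :
    HasDerivAt (potentialSolutionX s₀ w g b t) (potentialSolutionXX s₀ w g b t x) x := by
  have hs := continuous_freeBoundary hg s₀
  have hdens := sqrtSingular_frontSpeed hg
  exact (((hasDerivAt_oddPotential_heatKernel hw ht.1).add
    ((hasDerivAt_singleLayerX continuous_const hb.sqrtSingular ht hx₀).const_mul 2)).sub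
    (hasDerivAt_singleLayerX hs hdens ht hxs)).sub (hasDerivAt_singleLayerX hs.neg hdens ht hxs')

lemma hasDerivAt_potentialSolution_time (hw : IntervalIntegrable w volume 0 s₀)
    (hg : BoundedOnPos K g) (hb : BoundedOnPos L b) (ht : t ∈ Ioo (0 : ℝ) 1) (hx₀ : x ≠ 0)
    (hxs : x ≠ freeBoundary s₀ g t) (hxs' : x ≠ -freeBoundary s₀ g t) :
    HasDerivAt (fun t => potentialSolution s₀ w g b t x) (potentialSolutionXX s₀ w g b t x) t := by
  have hs := continuous_freeBoundary hg s₀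
  have hdens := sqrtSingular_frontSpeed hg
  exact (((hasDerivAt_oddPotential_heatStep_time hw ht.1).add
    ((hasDerivAt_singleLayer_time continuous_const hb.sqrtSingular ht hx₀).const_mul 2)).sub
    (hasDerivAt_singleLayer_time hs hdens ht hxs)).sub
    (hasDerivAt_singleLayer_time hs.neg hdens ht hxs')

lemma continuousAt_potentialSolutionXX (hw : IntervalIntegrable w volume 0 s₀)
    (hg : BoundedOnPos K g) (hb : BoundedOnPos L b) (ht : t ∈ Ioo (0 : ℝ) 1) (hx₀ : x ≠ 0)
    (hxs : x ≠ freeBoundary s₀ g t) (hxs' : x ≠ -freeBoundary s₀ g t) :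
    ContinuousAt (fun q : ℝ × ℝ => potentialSolutionXX s₀ w g b q.1 q.2) (t, x) := by
  have hs := continuous_freeBoundary hg s₀
  have hdens := sqrtSingular_frontSpeed hg
  exact (((continuousAt_oddPotential_heatKernelX hw ht.1).add (continuousAt_const.mul
    (continuousAt_singleLayerXX continuous_const hb.sqrtSingular ht hx₀))).sub
    (continuousAt_singleLayerXX hs hdens ht hxs)).sub
    (continuousAt_singleLayerXX hs.neg hdens ht hxs')

lemma potentialSolutionX_of_mem_Ioo (w b : ℝ → ℝ) (hx : x ∈ Ioo 0 (freeBoundary s₀ g t)) :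
    potentialSolutionX s₀ w g b t x = potentialSolutionXReg s₀ w g b t x := by
  rw [potentialSolutionX_eq, heaviside_of_pos hx.1, heaviside_of_neg (sub_neg_of_lt hx.2),
    heaviside_of_pos (by linarith [hx.1, hx.2])]
  ring

lemma potentialSolutionX_of_gt (w b : ℝ → ℝ) (hs : 0 < freeBoundary s₀ g t)
    (hx : freeBoundary s₀ g t < x) :
    potentialSolutionX s₀ w g b t x = potentialSolutionXReg s₀ w g b t x + frontSpeed g t := by
  rw [potentialSolutionX_eq, heaviside_of_pos (hs.trans hx), heaviside_of_pos (sub_pos.2 hx),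
    heaviside_of_pos (by linarith)]
  ring

lemma potentialSolutionXReg_zero (w b : ℝ → ℝ) (hs : 0 < freeBoundary s₀ g t) :
    potentialSolutionXReg s₀ w g b t 0 = -b t := by
  have hfixed : singleLayerX (fun _ => 0) b t 0 = 0 := by simp [singleLayerX, heatKernelX_zero]
  have hmirror : singleLayerX (fun τ => -freeBoundary s₀ g τ) (frontSpeed g) t 0 =
      -singleLayerX (freeBoundary s₀ g) (frontSpeed g) t 0 := by
    simp only [singleLayerX, ← intervalIntegral.integral_neg, zero_sub, heatKernelX_neg, neg_mul,
      neg_neg]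
  simp only [potentialSolutionXReg, singleLayerXReg, oddPotential_heatKernel_zero, hfixed, hmirror,
    sub_zero, zero_sub, neg_neg, heaviside_zero, heaviside_of_pos hs,
    heaviside_of_neg (neg_neg_of_pos hs)]
  ring

lemma tendsto_potentialSolution_sub_oddPotential (hg : BoundedOnPos K g) (hb : BoundedOnPos L b)
    (s₀ : ℝ) (w : ℝ → ℝ) (x : ℝ) :
    Tendsto (fun q : ℝ × ℝ =>
        potentialSolution s₀ w g b q.1 q.2 - oddPotential heatStep s₀ w q.1 q.2)
      (𝓝[{q | 0 ≤ q.1}] (0, x)) (𝓝 0) := by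
  have hlim : Tendsto (fun q : ℝ × ℝ => fourthRoot q.1 * potentialConst K L)
      (𝓝[{q | 0 ≤ q.1}] (0, x)) (𝓝 0) := by
    refine Tendsto.mono_left (Continuous.tendsto' ?_ _ _ ?_) nhdsWithin_le_nhds
    · exact (continuous_fourthRoot.comp continuous_fst).mul continuous_const
    · simp [fourthRoot_of_nonpos le_rfl]
  refine squeeze_zero_norm' ?_ hlim
  have hlt : ∀ᶠ q : ℝ × ℝ in 𝓝[{q | 0 ≤ q.1}] (0, x), q.1 < 1 :=
    ((continuous_fst.tendsto' _ _ rfl).eventually_lt_const zero_lt_one).filter_mono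
      nhdsWithin_le_nhds
  filter_upwards [hlt, self_mem_nhdsWithin] with q hq₁ hq₀
  rcases hq₀.eq_or_lt with hq | hq
  · rw [← hq, potentialSolution_time_zero, sub_self, norm_zero, fourthRoot_of_nonpos le_rfl,
      zero_mul]
  · exact abs_potentialSolution_sub_oddPotential_le hg hb hq hq₁.le

lemma continuousWithinAt_potentialSolution (hw : IntervalIntegrable w volume 0 s₀)
    (hg : BoundedOnPos K g) (hb : BoundedOnPos L b) (ht₀ : 0 ≤ t) (ht₁ : t < 1) :
    ContinuousWithinAt (fun q : ℝ × ℝ => potentialSolution s₀ w g b q.1 q.2) {q | 0 ≤ q.1}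
      (t, x) := by
  rcases ht₀.eq_or_lt with rfl | ht
  · have hsum := (tendsto_potentialSolution_sub_oddPotential hg hb s₀ w x).add
      (continuousAt_oddPotential_heatStep (x := x) hw le_rfl).continuousWithinAt
    simpa only [ContinuousWithinAt, sub_add_cancel, zero_add, potentialSolution_time_zero]
      using hsum
  · exact (continuousAt_potentialSolution hw hg hb ht ht₁).continuousWithinAt

end PotentialSolution

/-! ### Solutions of the boundary integral equations solve the Stefan problem -/

lemma hasDerivWithinAt_Ici_of_hasDerivAt_Ioo {f f' : ℝ → ℝ} {a b : ℝ} (hab : a < b)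
    (hf : ContinuousAt f a) (hf' : ContinuousAt f' a)
    (hd : ∀ y ∈ Ioo a b, HasDerivAt f (f' y) y) : HasDerivWithinAt f (f' a) (Ici a) a := by
  refine hasDerivWithinAt_Ici_of_tendsto_deriv (s := Ioo a b)
    (fun y hy => (hd y hy).differentiableAt.differentiableWithinAt) hf.continuousWithinAt
    (Ioo_mem_nhdsGT hab) ((hf'.mono_left nhdsWithin_le_nhds).congr' ?_)
  filter_upwards [Ioo_mem_nhdsGT hab] with y hy using (hd y hy).deriv.symm

lemma hasDerivWithinAt_Iic_of_hasDerivAt_Ioo {f f' : ℝ → ℝ} {a b : ℝ} (hab : a < b)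
    (hf : ContinuousAt f b) (hf' : ContinuousAt f' b)
    (hd : ∀ y ∈ Ioo a b, HasDerivAt f (f' y) y) : HasDerivWithinAt f (f' b) (Iic b) b := by
  refine hasDerivWithinAt_Iic_of_tendsto_deriv (s := Ioo a b)
    (fun y hy => (hd y hy).differentiableAt.differentiableWithinAt) hf.continuousWithinAt
    (Ioo_mem_nhdsLT hab) ((hf'.mono_left nhdsWithin_le_nhds).congr' ?_)
  filter_upwards [Ioo_mem_nhdsLT hab] with y hy using (hd y hy).deriv.symm

namespace BoundarySolution

variable {p M K L R s₀ t x : ℝ} {φ w g b : ℝ → ℝ}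

lemma time_mem_Ioo (S : BoundarySolution p M K L R s₀ φ w g b) (ht : t ∈ Ioc 0 R) :
    t ∈ Ioo (0 : ℝ) 1 :=
  ⟨ht.1, ht.2.trans_lt S.horizon_lt_one⟩

lemma front_pos_of_mem_Icc (S : BoundarySolution p M K L R s₀ φ w g b) (ht : t ∈ Icc 0 R) :
    0 < freeBoundary s₀ g t := by
  rcases ht.1.eq_or_lt with rfl | ht₀
  · rw [freeBoundary_zero]; exact S.datum.pos
  · exact S.front_pos t ⟨ht₀, ht.2⟩

lemma hasDerivAt_space (S : BoundarySolution p M K L R s₀ φ w g b) (ht : t ∈ Ioc 0 R) (hx : 0 < x)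
    (hxs : x ≠ freeBoundary s₀ g t) :
    HasDerivAt (potentialSolution s₀ w g b t) (potentialSolutionX s₀ w g b t x) x :=
  hasDerivAt_potentialSolution S.datum.intervalIntegrable S.speed S.flux (S.time_mem_Ioo ht) hx.ne'
    hxs (by linarith [S.front_pos t ht])

lemma hasDerivAt_space_space (S : BoundarySolution p M K L R s₀ φ w g b) (ht : t ∈ Ioc 0 R)
    (hx : 0 < x) (hxs : x ≠ freeBoundary s₀ g t) :
    HasDerivAt (potentialSolutionX s₀ w g b t) (potentialSolutionXX s₀ w g b t x) x :=
  hasDerivAt_potentialSolutionX S.datum.intervalIntegrable S.speed S.flux (S.time_mem_Ioo ht) hx.ne'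
    hxs (by linarith [S.front_pos t ht])

lemma hasDerivAt_time (S : BoundarySolution p M K L R s₀ φ w g b) (ht : t ∈ Ioc 0 R) (hx : 0 < x)
    (hxs : x ≠ freeBoundary s₀ g t) :
    HasDerivAt (fun t => potentialSolution s₀ w g b t x) (potentialSolutionXX s₀ w g b t x) t :=
  hasDerivAt_potentialSolution_time S.datum.intervalIntegrable S.speed S.flux (S.time_mem_Ioo ht)
    hx.ne' hxs (by linarith [S.front_pos t ht])

lemma continuousAt_space (S : BoundarySolution p M K L R s₀ φ w g b) (ht : t ∈ Ioc 0 R) (x : ℝ) :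
    ContinuousAt (potentialSolution s₀ w g b t) x :=
  ContinuousAt.comp (g := fun q : ℝ × ℝ => potentialSolution s₀ w g b q.1 q.2)
    (f := fun x => (t, x)) (continuousAt_potentialSolution S.datum.intervalIntegrable S.speed S.flux
      ht.1 (S.time_mem_Ioo ht).2) (by fun_prop)

lemma continuousAt_spaceDeriv (S : BoundarySolution p M K L R s₀ φ w g b) (ht : t ∈ Ioc 0 R)
    (x : ℝ) : ContinuousAt (potentialSolutionXReg s₀ w g b t) x :=
  ContinuousAt.comp (g := fun q : ℝ × ℝ => potentialSolutionXReg s₀ w g b q.1 q.2)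
    (f := fun x => (t, x)) (continuousAt_potentialSolutionXReg S.datum.intervalIntegrable S.speed
      S.flux ht.1 (S.time_mem_Ioo ht).2) (by fun_prop)

lemma continuousOn (S : BoundarySolution p M K L R s₀ φ w g b) :
    ContinuousOn (fun q : ℝ × ℝ => potentialSolution s₀ w g b q.1 q.2) {q | q.1 ∈ Icc 0 R} :=
  fun _ hq => (continuousWithinAt_potentialSolution S.datum.intervalIntegrable S.speed S.flux hq.1
    (hq.2.trans_lt S.horizon_lt_one)).mono fun _ hq => hq.1

lemma hasDerivAt_inside (S : BoundarySolution p M K L R s₀ φ w g b) (ht : t ∈ Ioc 0 R)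
    (hx : x ∈ Ioo 0 (freeBoundary s₀ g t)) :
    HasDerivAt (potentialSolution s₀ w g b t) (potentialSolutionXReg s₀ w g b t x) x :=
  potentialSolutionX_of_mem_Ioo w b hx ▸ S.hasDerivAt_space ht hx.1 hx.2.ne

lemma potentialSolutionXReg_front (S : BoundarySolution p M K L R s₀ φ w g b)
    (ht : t ∈ Ioc 0 R) :
    potentialSolutionXReg s₀ w g b t (freeBoundary s₀ g t) = -frontSpeed g t := by
  have hspeed : frontSpeed g t = -2 * frontFlux s₀ w g b t := by
    rw [frontSpeed, S.speed_eq t ht, inv_mul_cancel_left₀ (fourthRoot_pos ht.1).ne']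
  linarith [frontFlux_eq w b (S.front_pos t ht)]

lemma hasDerivWithinAt_zero (S : BoundarySolution p M K L R s₀ φ w g b) (ht : t ∈ Ioc 0 R) :
    HasDerivWithinAt (potentialSolution s₀ w g b t) (-b t) (Ici 0) 0 :=
  potentialSolutionXReg_zero w b (S.front_pos t ht) ▸ hasDerivWithinAt_Ici_of_hasDerivAt_Ioo
    (S.front_pos t ht) (S.continuousAt_space ht 0) (S.continuousAt_spaceDeriv ht 0)
    fun _ hy => S.hasDerivAt_inside ht hy

lemma hasDerivWithinAt_front_left (S : BoundarySolution p M K L R s₀ φ w g b)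
    (ht : t ∈ Ioc 0 R) :
    HasDerivWithinAt (potentialSolution s₀ w g b t) (-frontSpeed g t)
      (Iic (freeBoundary s₀ g t)) (freeBoundary s₀ g t) :=
  S.potentialSolutionXReg_front ht ▸ hasDerivWithinAt_Iic_of_hasDerivAt_Ioo
    (S.front_pos t ht) (S.continuousAt_space ht _) (S.continuousAt_spaceDeriv ht _)
    fun _ hy => S.hasDerivAt_inside ht hy

lemma hasDerivWithinAt_front_right (S : BoundarySolution p M K L R s₀ φ w g b)
    (ht : t ∈ Ioc 0 R) :
    HasDerivWithinAt (potentialSolution s₀ w g b t) 0 (Ici (freeBoundary s₀ g t))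
      (freeBoundary s₀ g t) := by
  have hs := S.front_pos t ht
  rw [show (0 : ℝ) = potentialSolutionXReg s₀ w g b t (freeBoundary s₀ g t) + frontSpeed g t by
    rw [S.potentialSolutionXReg_front ht, neg_add_cancel]]
  refine hasDerivWithinAt_Ici_of_hasDerivAt_Ioo (lt_add_one _) (S.continuousAt_space ht _)
    ((S.continuousAt_spaceDeriv ht _).add continuousAt_const) fun y hy => ?_
  exact (S.hasDerivAt_space ht (hs.trans hy.1) hy.1.ne').congr_deriv
    (potentialSolutionX_of_gt w b hs hy.1)

/- Beyond the free boundary the potentials form a bounded solution of the heat equation with zero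
initial datum and zero flux through the free boundary, hence they vanish there. -/
lemma mul_potentialSolution_front_nonneg (S : BoundarySolution p M K L R s₀ φ w g b)
    (ht : t ∈ Ioc 0 R) (σ : ℝ) :
    0 ≤ σ * potentialSolution s₀ w g b t (freeBoundary s₀ g t) := by
  have pos_of_gt {t x : ℝ} (ht : t ∈ Ioc 0 R) (hx : freeBoundary s₀ g t < x) : 0 < x :=
    (S.front_pos t ht).trans hx
  refine nonneg_of_heat_equation_of_bddBelow (v := fun t x => σ * potentialSolution s₀ w g b t x)
    (D := fun t x => σ * potentialSolutionXX s₀ w g b t x) (ρ := M + 2)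
    (Q := |σ| * (M ^ ((3 : ℝ) / 2) + 1)) (continuous_freeBoundary S.speed s₀)
    (fun t ht => by linarith [S.front_le t ht])
    (continuousOn_const.mul (S.continuousOn.mono fun _ hq => hq.1))
    (fun t ht x hx =>
      ((S.hasDerivAt_space ht (pos_of_gt ht hx) (ne_of_gt hx)).const_mul σ).differentiableAt)
    (fun t ht x hx => ?_)
    (fun t ht x hx => (S.hasDerivAt_time ht (pos_of_gt ht hx) (ne_of_gt hx)).const_mul σ)
    (fun t ht => ⟨0, le_rfl, by simpa using (S.hasDerivWithinAt_front_right ht).const_mul σ⟩)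
    (fun x hx => ?_) (fun t ht x => ?_) (Ioc_subset_Icc_self ht) le_rfl
  · refine ((S.hasDerivAt_space_space ht (pos_of_gt ht hx) (ne_of_gt hx)).const_mul
      σ).congr_of_eventuallyEq ?_
    filter_upwards [Ioi_mem_nhds hx] with y hy
      using ((S.hasDerivAt_space ht (pos_of_gt ht hy) (ne_of_gt hy)).const_mul σ).deriv
  · rw [mem_Ici, freeBoundary_zero] at hx
    rw [potentialSolution_time_zero, oddPotential_heatStep_time_zero_of_le
      S.datum.intervalIntegrable S.datum.pos.le hx, mul_zero]
  · exact neg_le_of_abs_le (abs_mul σ _ ▸ mul_le_mul_of_nonneg_left (S.abs_le t ht x)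
      (abs_nonneg σ))

lemma potentialSolution_front (S : BoundarySolution p M K L R s₀ φ w g b) (ht : t ∈ Ioc 0 R) :
    potentialSolution s₀ w g b t (freeBoundary s₀ g t) = 0 := by
  linarith [S.mul_potentialSolution_front_nonneg ht 1, S.mul_potentialSolution_front_nonneg ht (-1)]

lemma potentialSolution_nonneg (S : BoundarySolution p M K L R s₀ φ w g b) (ht : t ∈ Icc 0 R)
    (hx : x ∈ Icc 0 (freeBoundary s₀ g t)) : 0 ≤ potentialSolution s₀ w g b t x := by
  refine nonneg_of_heat_equation (c := fun _ => 0) (ρ := 1) (D := potentialSolutionXX s₀ w g b)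
    continuous_const (continuous_freeBoundary S.speed s₀) (fun _ _ => one_pos)
    (S.continuousOn.mono fun _ hq => hq.1)
    (fun t ht x hx => (S.hasDerivAt_inside ht hx).differentiableAt) (fun t ht x hx => ?_)
    (fun t ht x hx => S.hasDerivAt_time ht hx.1 hx.2.ne)
    (fun t ht _ => ⟨_, neg_nonpos.2 (S.flux_nonneg t), S.hasDerivWithinAt_zero ht⟩)
    (fun x hx => ?_) (fun t ht => (S.potentialSolution_front ht).ge) ht hx
  · refine (S.hasDerivAt_space_space ht hx.1 hx.2.ne).congr_of_eventuallyEq ?_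
    filter_upwards [Ioo_mem_nhds hx.1 hx.2] with y hy
      using (S.hasDerivAt_space ht hy.1 hy.2.ne).deriv
  · rw [freeBoundary_zero] at hx
    rw [potentialSolution_time_zero, S.datum.oddPotential_time_zero hx]
    exact S.datum.nonneg x hx

lemma flux_eq_rpow (S : BoundarySolution p M K L R s₀ φ w g b) (ht : t ∈ Ioc 0 R) :
    b t = potentialSolution s₀ w g b t 0 ^ p := by
  rw [S.flux_eq t ht, absRpow, abs_of_nonneg (S.potentialSolution_nonneg (Ioc_subset_Icc_self ht)
    ⟨le_rfl, (S.front_pos t ht).le⟩)]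

end BoundarySolution

/-- The extension of `f` restricted to `[a, c]` by affine functions of slope `m` to the left of `a`
and of slope `n` to the right of `c`. It turns the one-sided derivatives of `f` at the endpoints
into two-sided ones, which is the form in which `IsSolOn` reads the boundary conditions. -/
def affineExtension (a c m n : ℝ) (f : ℝ → ℝ) (x : ℝ) : ℝ :=
  if x < a then f a + m * (x - a) else if x ≤ c then f x else f c + n * (x - c)

section AffineExtension

variable {a c m n f' x : ℝ} {f : ℝ → ℝ}

lemma affineExtension_of_mem (m n : ℝ) (f : ℝ → ℝ) (hx : x ∈ Icc a c) :
    affineExtension a c m n f x = f x := by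
  rw [affineExtension, if_neg hx.1.not_gt, if_pos hx.2]

lemma hasDerivAt_affineExtension_of_mem_Ioo (m n : ℝ) (hx : x ∈ Ioo a c)
    (hf : HasDerivAt f f' x) : HasDerivAt (affineExtension a c m n f) f' x :=
  hf.congr_of_eventuallyEq <| mem_of_superset (Ioo_mem_nhds hx.1 hx.2) fun _ hy =>
    affineExtension_of_mem m n f (Ioo_subset_Icc_self hy)

lemma hasDerivAt_affineExtension_left (n : ℝ) (hac : a < c)
    (hf : HasDerivWithinAt f m (Ici a) a) : HasDerivAt (affineExtension a c m n f) m a := by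
  have hline : HasDerivAt (fun x => f a + m * (x - a)) m a := by
    simpa using (((hasDerivAt_id a).sub_const a).const_mul m).const_add (f a)
  have hright : HasDerivWithinAt (affineExtension a c m n f) m (Ici a) a := by
    refine hf.congr_of_eventuallyEq ?_ (affineExtension_of_mem m n f ⟨le_rfl, hac.le⟩)
    filter_upwards [Icc_mem_nhdsGE hac] with y hy using affineExtension_of_mem m n f hy
  have hleft : HasDerivWithinAt (affineExtension a c m n f) m (Iic a) a := by
    refine hline.hasDerivWithinAt.congr_of_mem (fun y hy => ?_) self_mem_Iic
    rcases (mem_Iic.1 hy).eq_or_lt with rfl | hy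
    · simp [affineExtension_of_mem m n f ⟨le_rfl, hac.le⟩]
    · rw [affineExtension, if_pos hy]
  simpa using hleft.union hright

lemma hasDerivAt_affineExtension_right (m : ℝ) (hac : a < c)
    (hf : HasDerivWithinAt f n (Iic c) c) : HasDerivAt (affineExtension a c m n f) n c := by
  have hline : HasDerivAt (fun x => f c + n * (x - c)) n c := by
    simpa using (((hasDerivAt_id c).sub_const c).const_mul n).const_add (f c)
  have hleft : HasDerivWithinAt (affineExtension a c m n f) n (Iic c) c := by
    refine hf.congr_of_eventuallyEq ?_ (affineExtension_of_mem m n f ⟨hac.le, le_rfl⟩)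
    filter_upwards [Icc_mem_nhdsLE hac] with y hy using affineExtension_of_mem m n f hy
  have hright : HasDerivWithinAt (affineExtension a c m n f) n (Ici c) c := by
    refine hline.hasDerivWithinAt.congr_of_mem (fun y hy => ?_) self_mem_Ici
    rcases (mem_Ici.1 hy).eq_or_lt with rfl | hy
    · simp [affineExtension_of_mem m n f ⟨hac.le, le_rfl⟩]
    · rw [affineExtension, if_neg (hac.trans hy).not_gt, if_neg hy.not_ge]
  simpa using hleft.union hright

end AffineExtension

/-- The solution `u` of the Stefan problem: the potential representation on `[0, s(t)]`, continued
affinely so as to be differentiable in `x` at both boundary points. -/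
def extendedSolution (s₀ : ℝ) (w g b : ℝ → ℝ) (t : ℝ) : ℝ → ℝ :=
  affineExtension 0 (freeBoundary s₀ g t) (-b t) (-frontSpeed g t) (potentialSolution s₀ w g b t)

lemma extendedSolution_of_mem {s₀ t x : ℝ} {g : ℝ → ℝ} (w b : ℝ → ℝ)
    (hx : x ∈ Icc 0 (freeBoundary s₀ g t)) :
    extendedSolution s₀ w g b t x = potentialSolution s₀ w g b t x :=
  affineExtension_of_mem _ _ _ hx

namespace BoundarySolution

variable {p M K L R s₀ t x : ℝ} {φ w g b : ℝ → ℝ}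

lemma hasDerivAt_extendedSolution_zero (S : BoundarySolution p M K L R s₀ φ w g b)
    (ht : t ∈ Ioc 0 R) : HasDerivAt (extendedSolution s₀ w g b t) (-b t) 0 :=
  hasDerivAt_affineExtension_left _ (S.front_pos t ht) (S.hasDerivWithinAt_zero ht)

lemma hasDerivAt_extendedSolution_front (S : BoundarySolution p M K L R s₀ φ w g b)
    (ht : t ∈ Ioc 0 R) :
    HasDerivAt (extendedSolution s₀ w g b t) (-frontSpeed g t) (freeBoundary s₀ g t) :=
  hasDerivAt_affineExtension_right _ (S.front_pos t ht) (S.hasDerivWithinAt_front_left ht)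

lemma hasDerivAt_extendedSolution (S : BoundarySolution p M K L R s₀ φ w g b) (ht : t ∈ Ioc 0 R)
    (hx : x ∈ Icc 0 (freeBoundary s₀ g t)) :
    HasDerivAt (extendedSolution s₀ w g b t) (potentialSolutionXReg s₀ w g b t x) x := by
  rcases hx.1.eq_or_lt with rfl | h₀
  · exact potentialSolutionXReg_zero w b (S.front_pos t ht) ▸ S.hasDerivAt_extendedSolution_zero ht
  rcases hx.2.eq_or_lt with rfl | hs
  · exact S.potentialSolutionXReg_front ht ▸ S.hasDerivAt_extendedSolution_front ht
  · exact hasDerivAt_affineExtension_of_mem_Ioo _ _ ⟨h₀, hs⟩ (S.hasDerivAt_inside ht ⟨h₀, hs⟩)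

lemma hasDerivAt_deriv_extendedSolution (S : BoundarySolution p M K L R s₀ φ w g b)
    (ht : t ∈ Ioc 0 R) (hx : x ∈ Ioo 0 (freeBoundary s₀ g t)) :
    HasDerivAt (deriv (extendedSolution s₀ w g b t)) (potentialSolutionXX s₀ w g b t x) x := by
  refine (S.hasDerivAt_space_space ht hx.1 hx.2.ne).congr_of_eventuallyEq ?_
  filter_upwards [Ioo_mem_nhds hx.1 hx.2] with y hy
  rw [(S.hasDerivAt_extendedSolution ht (Ioo_subset_Icc_self hy)).deriv,
    potentialSolutionX_of_mem_Ioo w b hy]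

lemma hasDerivAt_extendedSolution_time (S : BoundarySolution p M K L R s₀ φ w g b)
    (ht : t ∈ Ioc 0 R) (hx : x ∈ Ioo 0 (freeBoundary s₀ g t)) :
    HasDerivAt (fun t => extendedSolution s₀ w g b t x) (potentialSolutionXX s₀ w g b t x) t := by
  refine (S.hasDerivAt_time ht hx.1 hx.2.ne).congr_of_eventuallyEq ?_
  filter_upwards [(continuous_freeBoundary S.speed s₀).continuousAt.eventually_const_lt hx.2]
    with τ hτ using extendedSolution_of_mem w b ⟨hx.1.le, hτ.le⟩

lemma continuousOn_potentialSolutionXX (S : BoundarySolution p M K L R s₀ φ w g b) :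
    ContinuousOn (fun q : ℝ × ℝ => potentialSolutionXX s₀ w g b q.1 q.2)
      {q | q.1 ∈ Ioc 0 R ∧ q.2 ∈ Ioo 0 (freeBoundary s₀ g q.1)} := fun _ hq =>
  (continuousAt_potentialSolutionXX S.datum.intervalIntegrable S.speed S.flux
    (S.time_mem_Ioo hq.1) hq.2.1.ne' hq.2.2.ne (by linarith [hq.2.1, hq.2.2])).continuousWithinAt

lemma continuousOn_potentialSolutionXReg (S : BoundarySolution p M K L R s₀ φ w g b) :
    ContinuousOn (fun q : ℝ × ℝ => potentialSolutionXReg s₀ w g b q.1 q.2)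
      {q | q.1 ∈ Ioc 0 R} := fun _ hq =>
  (continuousAt_potentialSolutionXReg S.datum.intervalIntegrable S.speed S.flux hq.1
    (S.time_mem_Ioo hq).2).continuousWithinAt

lemma isSolOn (S : BoundarySolution p M K L R s₀ φ w g b) (hR : 0 < R) :
    IsSolOn p s₀ φ R (freeBoundary s₀ g) (extendedSolution s₀ w g b) where
  T_pos := hR
  s_cont := (continuous_freeBoundary S.speed s₀).continuousOn
  s_diff t ht := (hasDerivAt_freeBoundary S.speed s₀ ht.1).differentiableAt
  s_deriv_cont := ((continuousOn_frontSpeed S.speed).mono Ioc_subset_Ioi_self).congr fun t ht =>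
    (hasDerivAt_freeBoundary S.speed s₀ ht.1).deriv
  s_pos t ht := S.front_pos_of_mem_Icc ht
  ut_diff t ht x hx := (S.hasDerivAt_extendedSolution_time ht hx).differentiableAt
  ux_diff t ht x hx :=
    (S.hasDerivAt_extendedSolution ht (Ioo_subset_Icc_self hx)).differentiableAt
  uxx_diff t ht x hx := (S.hasDerivAt_deriv_extendedSolution ht hx).differentiableAt
  ut_cont := S.continuousOn_potentialSolutionXX.congr fun q hq =>
    (S.hasDerivAt_extendedSolution_time hq.1 hq.2).deriv
  uxx_cont := S.continuousOn_potentialSolutionXX.congr fun q hq =>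
    (S.hasDerivAt_deriv_extendedSolution hq.1 hq.2).deriv
  ux_cont := (S.continuousOn_potentialSolutionXReg.mono fun _ hq => hq.1).congr fun q hq =>
    (S.hasDerivAt_extendedSolution hq.1 hq.2).deriv
  u_cont := (S.continuousOn.mono fun _ hq => hq.1).congr fun q hq =>
    extendedSolution_of_mem w b hq.2
  u_nonneg t ht x hx := by
    rw [extendedSolution_of_mem w b hx]
    exact S.potentialSolution_nonneg ht hx
  heat t ht x hx := by
    rw [(S.hasDerivAt_extendedSolution_time ht hx).deriv,
      (S.hasDerivAt_deriv_extendedSolution ht hx).deriv]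
  bc_zero t ht := by
    rw [(S.hasDerivAt_extendedSolution_zero ht).deriv, neg_neg, S.flux_eq_rpow ht,
      extendedSolution_of_mem w b ⟨le_rfl, (S.front_pos t ht).le⟩]
  bc_free t ht := by
    rw [extendedSolution_of_mem w b ⟨(S.front_pos t ht).le, le_rfl⟩, S.potentialSolution_front ht]
  stefan t ht := by
    rw [(S.hasDerivAt_extendedSolution_front ht).deriv, neg_neg,
      (hasDerivAt_freeBoundary S.speed s₀ ht.1).deriv]
  init x hx := by
    rw [extendedSolution_of_mem w b (by rwa [freeBoundary_zero]), potentialSolution_time_zero,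
      S.datum.oddPotential_time_zero hx]
  init_s := freeBoundary_zero s₀ g

lemma supNorm_extendedSolution_le (S : BoundarySolution p M K L R s₀ φ w g b) (ht : t ∈ Ioc 0 R) :
    supNorm (freeBoundary s₀ g) (extendedSolution s₀ w g b) t ≤ M ^ ((3 : ℝ) / 2) + 1 := by
  refine csSup_le ((nonempty_Ioo.2 (S.front_pos t ht)).image _) ?_
  rintro _ ⟨x, hx, rfl⟩
  rw [extendedSolution_of_mem w b (Ioo_subset_Icc_self hx)]
  exact le_of_abs_le (S.abs_le t ht x)

end BoundarySolution

lemma initialDatum_of_memWtilde {M s₀ : ℝ} {φ w : ℝ → ℝ} (hφ : memWtilde s₀ φ w)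
    (hM : s₀ + s₀⁻¹ + sobNorm s₀ φ w ≤ M) : InitialDatum M s₀ φ w := by
  obtain ⟨hs₀, hw, hrep, -, hnonneg, hzero⟩ := hφ
  have hs₀_inv : 0 < s₀⁻¹ := inv_pos.2 hs₀
  have hnorm : 0 ≤ sobNorm s₀ φ w := Real.sqrt_nonneg _
  have hφ₂ : 0 ≤ ∫ x in (0 : ℝ)..s₀, φ x ^ 2 :=
    intervalIntegral.integral_nonneg hs₀.le fun _ _ => sq_nonneg _
  refine ⟨hs₀, by linarith, by linarith, ?_, ?_, ?_, hrep, hnonneg, hzero⟩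
  · exact (intervalIntegrable_iff_integrableOn_Ioo_of_le hs₀.le).2 (hw.integrable one_le_two)
  · exact (intervalIntegrable_iff_integrableOn_Ioo_of_le hs₀.le).2 hw.integrable_sq
  · have hsq := (Real.sqrt_le_left (by linarith)).1 (show sobNorm s₀ φ w ≤ M by linarith)
    linarith

theorem stmt_4_general {p M : ℝ} (hp : 1 ≤ p) (hM : 0 < M) :
    ∃ T : ℝ, 0 < T ∧ ∀ (s₀ : ℝ) (φ w : ℝ → ℝ), InitialDatum M s₀ φ w →
      ∃ s u, IsSolOn p s₀ φ T s u ∧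
        sSup ((fun t => supNorm s u t) '' Ioc 0 T) + sSup (s '' Ioc 0 T) ≤
          M ^ ((3 : ℝ) / 2) + M + 2 := by
  obtain ⟨T, K, L, hT, hsol⟩ := exists_boundarySolution hp hM
  refine ⟨T, hT, fun s₀ φ w hφ => ?_⟩
  obtain ⟨g, b, S⟩ := hsol s₀ φ w hφ
  have hne : (Ioc 0 T).Nonempty := nonempty_Ioc.2 hT
  have hu := csSup_le (hne.image _) (forall_mem_image.2 fun t => S.supNorm_extendedSolution_le)
  have hs := csSup_le (hne.image _) (forall_mem_image.2 S.front_le)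
  exact ⟨freeBoundary s₀ g, extendedSolution s₀ w g b, S.isSolOn hT, by linarith⟩

/-- Proposition 2.1: local-in-time existence, uniformly for bounded initial data in `W̃`. -/
theorem stmt_4 (p : ℝ) (hp : 1 < p) (M : ℝ) (hM : 0 < M) :
    ∃ T : ℝ, 0 < T ∧ ∀ (s₀ : ℝ) (φ g : ℝ → ℝ), memWtilde s₀ φ g →
      s₀ + s₀⁻¹ + sobNorm s₀ φ g ≤ M →
      ∃ s u, IsSolOn p s₀ φ T s u ∧
        sSup ((fun t => supNorm s u t) '' Ioc 0 T) + sSup (s '' Ioc 0 T) ≤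
          2 * (M ^ ((3:ℝ) / 2) + M + 1) := by
  obtain ⟨T, hT, hsol⟩ := stmt_4_general hp.le hM
  refine ⟨T, hT, fun s₀ φ g hφ hbound => ?_⟩
  obtain ⟨s, u, hsu, hle⟩ := hsol s₀ φ g (initialDatum_of_memWtilde hφ hbound)
  exact ⟨s, u, hsu, by linarith [rpow_nonneg hM.le ((3 : ℝ) / 2)]⟩
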